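/- Let p be an odd prime and n a positive integer. Then the alternating group A_n has a p-basic set: there exists a subset B ⊆ Irr(A_n) such that the truncations {χ^{p-reg} : χ ∈ B} to the set of p-regular elements form a ℤ-basis of the ℤ-submodule of class functions generated by {χ^{p-reg} : χ ∈ Irr(A_n)}. -/

import Mathlib

/-!
The proof treats the symmetric group first and then descends to its subgroup of index two.

**Symmetric groups.** A class function `φ` on `S_n` is sent to the antisymmetric polynomial
`a_δ · (1/n!) ∑ φ(g) p_g` in `N` variables, where `p_g` is the power sum product of the cycle type
of `g` and `a_δ` is the Vandermonde alternant. By the Jacobi–Trudi identity the class functions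
`chi α : g ↦ [x^α] a_δ p_g` are sent to the alternants `a_α`; hence, for `α` with distinct entries
and the right degree, they have norm one, and up to sign they are the irreducible characters
(`chi_irr`, `irr_eq_chi`). Class functions vanishing on `p`-regular elements correspond to the space `KK` spanned by the products
`p_{pj} a_β`, which by Newton's identities is also spanned by the products `e_k(x^p) a_β`. Fix a
residue `r` modulo `p` and call an alternant good if the exponents congruent to `r` have no gaps,
i.e. if the corresponding runner of the abacus carries the empty partition. The Pieri rule for
`e_k(x^p)` expresses every alternant as an integral combination of good ones modulo `KK`
(`straighten`), and comparison with the family of products of good alternants with the `e_k(x^p)`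
shows that the good ones are independent modulo `KK` (`linearIndependent_good`). So the
characters of good alternants form a `p`-basic set. Twisting by the sign replaces the exponents by
the reflected complement (dual Jacobi–Trudi); as `p` is odd, some residue is fixed by this
reflection (`exists_residue`), and for it the basic set is stable under the sign (`sym_basic`).

**Classes that split.** Let `g` be a permutation all of whose commuting permutations are even. Then
there is a virtual character `Θ` of `A_n`, negated by odd conjugation, supported on the class of
`g`, with `Θ(g) Θ(g⁻¹) = |C(g)|` (`exists_splitChar`). If `g` has cycles of different lengths, `Θ`
is induced from a product of such functions on fewer letters. Otherwise `g` is an `n`-cycle; some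
irreducible character differs from its conjugate at `g`. If the difference were nonzero on another
class, it would agree up to sign with the function already constructed for that class, which
vanishes at `g`; so it is supported on the class of `g`.
Consequently an irreducible character `ρ` of `A_n` that is moved by odd permutations differs from
its conjugate on a single class, no other conjugate pair differs there, and the square of the
difference is, up to sign, the odd number `|C(g)|` (`exists_split_class`).

**Descent.** Let `K` be a sign-stable basic set of `S_n`, and consider the irreducible characters of
`A_n` below `K`. Clifford theory (`resA_irr`, `resA_split`, `irr_alt_cases`) shows that for each
irreducible `ρ` of `A_n` there is an integral combination `F` of characters below `K` such that
`ρ - F` is anti-invariant on `p`-regular elements (`exists_symm_eq`). On a split `p`-regular class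
an anti-invariant value is half the difference of the coefficients at the two conjugate
characters times the difference of these characters; since its square is odd and character values
are algebraic integers, that coefficient difference is even (`parity`). This gives first that
characters moved on `p`-regular elements lie below `K` (`mem_below_of_moved`) and then that the
truncations of the characters below `K` generate (`trunc_mem_span_below`). The only coincidences
among these truncations come from conjugate pairs differing only on `p`-singular elements; keeping
one character of each such pair gives the basic set (`exists_basic_of_sym`).
-/

open scoped Classical

noncomputable section

/-- The set of irreducible complex characters of the group `G`. -/
def IrrChar (G : Type) [Group G] : Set (G → ℂ) :=
  {χ | ∃ V : FDRep ℂ G, CategoryTheory.Simple V ∧ χ = FDRep.character V}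

/-- Truncation of a class function to the subset `C`: `φ^C`. -/
def truncCF {G : Type} (C : Set G) (φ : G → ℂ) : G → ℂ := fun g =>
  if g ∈ C then φ g else 0

/-- The scalar product of class functions across the subset `C`:
`⟨α,β⟩_C = (1/|G|) · Σ_{g ∈ C} α(g) · conj(β(g))`. -/
def innerOn {G : Type} [Fintype G] (C : Set G) (α β : G → ℂ) : ℂ :=
  (Fintype.card G : ℂ)⁻¹ * ∑ g : G, if g ∈ C then α g * (starRingEnd ℂ) (β g) else 0

/-- `B` is a `C`-basic set of `b`: `B ⊆ b` and the truncations `χ^C` for `χ ∈ B` form a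
`ℤ`-basis of the `ℤ`-submodule of class functions generated by the `χ^C`, `χ ∈ b`. -/
def IsBasicSetOf {G : Type} [Group G] (C : Set G) (b B : Set (G → ℂ)) : Prop :=
  B ⊆ b ∧
  LinearIndependent ℤ (fun χ : B => truncCF C (χ : G → ℂ)) ∧
  Submodule.span ℤ (truncCF C '' B) = Submodule.span ℤ (truncCF C '' b)

/-- The set of `p`-regular elements of `G` (elements of order coprime to `p`). -/
def pRegular (p : ℕ) (G : Type) [Group G] : Set G :=
  {g | Nat.Coprime (orderOf g) p}

/-! ### Complex characters of finite groups -/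

section GeneralTheory

/-- A finite-dimensional representation of a finite group is obtained from irreducible ones
by direct sums; this is the corresponding induction principle. -/
theorem rep_induction {G : Type} [Group G] [Finite G]
    (P : ∀ (V : Type) [AddCommGroup V] [Module ℂ V], Representation ℂ G V → Prop)
    (h0 : ∀ (V : Type) [AddCommGroup V] [Module ℂ V] (ρ : Representation ℂ G V),
      Subsingleton V → P V ρ)
    (hirr : ∀ (V : Type) [AddCommGroup V] [Module ℂ V] [FiniteDimensional ℂ V]
      (ρ : Representation ℂ G V), ρ.IsIrreducible → P V ρ)
    (hsum : ∀ (V : Type) [AddCommGroup V] [Module ℂ V] [FiniteDimensional ℂ V]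
      (ρ : Representation ℂ G V) (s t : Subrepresentation ρ),
      IsCompl s.toSubmodule t.toSubmodule → P s.toSubmodule s.toRepresentation →
      P t.toSubmodule t.toRepresentation → P V ρ)
    (V : Type) [AddCommGroup V] [Module ℂ V] [FiniteDimensional ℂ V]
    (ρ : Representation ℂ G V) : P V ρ := by
  have key : ∀ (d : ℕ) (V : Type) [AddCommGroup V] [Module ℂ V] [FiniteDimensional ℂ V]
      (ρ : Representation ℂ G V), Module.finrank ℂ V = d → P V ρ := by
    intro d
    induction d using Nat.strong_induction_on with
    | _ d ih =>
    intro V _ _ _ ρ hd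
    by_cases hV : Subsingleton V
    · exact h0 V ρ hV
    by_cases hI : ρ.IsIrreducible
    · exact hirr V ρ hI
    have hbt : (⊥ : Subrepresentation ρ) ≠ ⊤ := by
      intro h
      have : (⊥ : Submodule ℂ V) = ⊤ := congrArg Subrepresentation.toSubmodule h
      exact hV ((Submodule.subsingleton_iff ℂ).mp (subsingleton_of_bot_eq_top this))
    have : ∃ s : Subrepresentation ρ, s ≠ ⊥ ∧ s ≠ ⊤ := by
      by_contra hcon
      push Not at hcon
      have : Nontrivial (Subrepresentation ρ) := ⟨⊥, ⊤, hbt⟩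
      exact hI ⟨fun a => or_iff_not_imp_left.mpr (hcon a)⟩
    obtain ⟨s, hs1, hs2⟩ := this
    obtain ⟨t, ht⟩ := exists_isCompl s
    have hc : IsCompl s.toSubmodule t.toSubmodule := by
      refine ⟨disjoint_iff.mpr ?_, codisjoint_iff.mpr ?_⟩
      · have := disjoint_iff.mp ht.1
        exact congrArg Subrepresentation.toSubmodule this
      · have := codisjoint_iff.mp ht.2
        exact congrArg Subrepresentation.toSubmodule this
    have hsb : s.toSubmodule ≠ ⊤ := fun h =>
      hs2 (Subrepresentation.toSubmodule_injective h)
    have hst : s.toSubmodule ≠ ⊥ := fun h =>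
      hs1 (Subrepresentation.toSubmodule_injective h)
    have htb : t.toSubmodule ≠ ⊤ := by
      intro h
      apply hst
      have := disjoint_iff.mp hc.1
      rwa [h, inf_top_eq] at this
    refine hsum V ρ s t hc (ih _ ?_ _ _ rfl) (ih _ ?_ _ _ rfl)
    · rw [← hd]; exact Submodule.finrank_lt hsb
    · rw [← hd]; exact Submodule.finrank_lt htb
  exact key _ V ρ rfl

theorem character_add_of_isCompl {G : Type} [Group G] {V : Type} [AddCommGroup V] [Module ℂ V]
    [FiniteDimensional ℂ V] (ρ : Representation ℂ G V) (s t : Subrepresentation ρ)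
    (h : IsCompl s.toSubmodule t.toSubmodule) :
    ρ.character = s.toRepresentation.character + t.toRepresentation.character := by
  funext g
  let e := Submodule.prodEquivOfIsCompl _ _ h
  have : ρ g = e.conj (LinearMap.prodMap (s.toRepresentation g) (t.toRepresentation g)) := by
    refine LinearMap.ext fun v => ?_
    obtain ⟨⟨x, y⟩, rfl⟩ := e.surjective v
    rw [LinearEquiv.conj_apply_apply, LinearEquiv.symm_apply_apply]
    simp [e, Subrepresentation.toRepresentation]
  simp only [Representation.character, Pi.add_apply]
  rw [this, LinearMap.trace_conj', LinearMap.trace_prodMap']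

variable {G : Type} [Group G]

theorem irrChar_of_irreducible [Finite G] {V : Type} [AddCommGroup V] [Module ℂ V]
    [FiniteDimensional ℂ V] (ρ : Representation ℂ G V) [hρ : ρ.IsIrreducible] :
    ρ.character ∈ IrrChar G := by
  cases nonempty_fintype G
  have : Invertible (Nat.card G : ℂ) := invertibleOfNonzero (by simp)
  refine ⟨FDRep.of ρ, ?_, rfl⟩
  rw [FDRep.simple_iff_char_is_norm_one]
  have := Representation.char_orthonormal ρ ρ
  rw [if_pos ⟨Representation.Equiv.refl ρ⟩] at this
  have hc : (Nat.card G : ℂ) ≠ 0 := by simp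
  rw [inv_mul_eq_iff_eq_mul₀ hc] at this
  refine Eq.trans this ?_
  simp

/-- Every character is a sum of irreducible characters. -/
theorem char_mem_closure [Finite G] {V : Type} [AddCommGroup V] [Module ℂ V]
    [FiniteDimensional ℂ V] (ρ : Representation ℂ G V) :
    ρ.character ∈ AddSubmonoid.closure (IrrChar G) := by
  refine rep_induction (G := G) (fun V _ _ ρ => ρ.character ∈ AddSubmonoid.closure (IrrChar G))
    ?_ ?_ ?_ V ρ
  · intro V _ _ ρ hV
    have : ρ.character = 0 := by
      funext g
      have : ρ g = 0 := LinearMap.ext fun v => Subsingleton.elim _ _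
      simp [Representation.character, this]
    rw [this]; exact zero_mem _
  · intro V _ _ _ ρ hρ
    exact AddSubmonoid.subset_closure (irrChar_of_irreducible ρ)
  · intro V _ _ _ ρ s t h hs ht
    rw [character_add_of_isCompl ρ s t h]
    exact add_mem hs ht

/-- The group of virtual characters. -/
def virt (G : Type) [Group G] : Submodule ℤ (G → ℂ) := Submodule.span ℤ (IrrChar G)

theorem irr_mem_virt {χ : G → ℂ} (h : χ ∈ IrrChar G) : χ ∈ virt G := Submodule.subset_span h

theorem char_mem_virt [Finite G] {V : Type} [AddCommGroup V] [Module ℂ V]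
    [FiniteDimensional ℂ V] (ρ : Representation ℂ G V) : ρ.character ∈ virt G := by
  have h : AddSubmonoid.closure (IrrChar G) ≤ (virt G).toAddSubmonoid :=
    (AddSubmonoid.closure_le).mpr fun x hx => irr_mem_virt hx
  exact h (char_mem_closure ρ)

/-- The bilinear pairing `|G|⁻¹ ∑ α(g) β(g⁻¹)` of functions on `G`. -/
def pair [Fintype G] (α β : G → ℂ) : ℂ := (Nat.card G : ℂ)⁻¹ * ∑ g : G, α g * β g⁻¹

/-- A function on `G` which is constant on conjugacy classes. -/
def IsCF (φ : G → ℂ) : Prop := ∀ g h : G, φ (h * g * h⁻¹) = φ g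

theorem pair_comm [Fintype G] (α β : G → ℂ) : pair α β = pair β α := by
  unfold pair
  congr 1
  refine Fintype.sum_equiv (Equiv.inv G) _ _ fun g => ?_
  simp [mul_comm]

theorem pair_add_left [Fintype G] (α α' β : G → ℂ) : pair (α + α') β = pair α β + pair α' β := by
  simp [pair, add_mul, Finset.sum_add_distrib, mul_add]

theorem pair_smul_left [Fintype G] (c : ℂ) (α β : G → ℂ) : pair (c • α) β = c * pair α β := by
  simp only [pair, Pi.smul_apply, smul_eq_mul, mul_assoc, ← Finset.mul_sum]
  ring

theorem pair_add_right [Fintype G] (α β β' : G → ℂ) : pair α (β + β') = pair α β + pair α β' := by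
  rw [pair_comm, pair_add_left, pair_comm β, pair_comm β']

theorem pair_smul_right [Fintype G] (c : ℂ) (α β : G → ℂ) : pair α (c • β) = c * pair α β := by
  rw [pair_comm, pair_smul_left, pair_comm β]

theorem pair_zsmul_left [Fintype G] (c : ℤ) (α β : G → ℂ) : pair (c • α) β = c * pair α β := by
  rw [← Int.cast_smul_eq_zsmul ℂ c α, pair_smul_left]

theorem pair_zsmul_right [Fintype G] (c : ℤ) (α β : G → ℂ) : pair α (c • β) = c * pair α β := by
  rw [pair_comm, pair_zsmul_left, pair_comm β]

@[simp] theorem pair_zero_left [Fintype G] (β : G → ℂ) : pair 0 β = 0 := by simp [pair]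
@[simp] theorem pair_zero_right [Fintype G] (β : G → ℂ) : pair β 0 = 0 := by simp [pair]

theorem pair_neg_left [Fintype G] (α β : G → ℂ) : pair (-α) β = -pair α β := by simp [pair]
theorem pair_neg_right [Fintype G] (α β : G → ℂ) : pair α (-β) = -pair α β := by simp [pair]

theorem pair_sub_left [Fintype G] (α α' β : G → ℂ) : pair (α - α') β = pair α β - pair α' β := by
  rw [sub_eq_add_neg, pair_add_left, pair_neg_left, sub_eq_add_neg]

theorem pair_sub_right [Fintype G] (α β β' : G → ℂ) : pair α (β - β') = pair α β - pair α β' := by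
  rw [sub_eq_add_neg, pair_add_right, pair_neg_right, sub_eq_add_neg]

theorem pair_sum_left [Fintype G] {ι : Type*} (s : Finset ι) (f : ι → G → ℂ) (β : G → ℂ) :
    pair (∑ i ∈ s, f i) β = ∑ i ∈ s, pair (f i) β := by
  induction s using Finset.induction_on with
  | empty => simp
  | insert a s ha ih => rw [Finset.sum_insert ha, Finset.sum_insert ha, pair_add_left, ih]

/-- The irreducible characters are orthonormal. -/
theorem pair_irr [Fintype G] {χ ψ : G → ℂ} (hχ : χ ∈ IrrChar G) (hψ : ψ ∈ IrrChar G) :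
    pair χ ψ = if χ = ψ then 1 else 0 := by
  obtain ⟨V, hV, rfl⟩ := hχ
  obtain ⟨W, hW, rfl⟩ := hψ
  have : Invertible (Nat.card G : ℂ) := invertibleOfNonzero (by simp)
  have h1 : pair V.character V.character = 1 := by
    have := FDRep.char_orthonormal V V
    rw [if_pos ⟨CategoryTheory.Iso.refl V⟩] at this
    exact this
  by_cases h : V.character = W.character
  · rw [if_pos h, ← h, h1]
  · rw [if_neg h]
    have := FDRep.char_orthonormal V W
    rw [if_neg] at this
    · exact this
    · rintro ⟨i⟩; exact h (FDRep.char_iso i)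

theorem irr_isCF {χ : G → ℂ} (hχ : χ ∈ IrrChar G) : IsCF χ := by
  obtain ⟨V, hV, rfl⟩ := hχ
  intro g h
  exact FDRep.char_conj V g h

theorem virt_isCF {χ : G → ℂ} (hχ : χ ∈ virt G) : IsCF χ := by
  induction hχ using Submodule.span_induction with
  | mem x hx => exact irr_isCF hx
  | zero => intro g h; rfl
  | add x y _ _ hx hy => intro g h; simp [hx g h, hy g h]
  | smul a x _ hx => intro g h; simp [hx g h]

theorem irr_one_ne_zero {χ : G → ℂ} [Finite G] (hχ : χ ∈ IrrChar G) : χ 1 ≠ 0 := by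
  cases nonempty_fintype G
  have h1 := pair_irr hχ hχ
  obtain ⟨V, hV, rfl⟩ := hχ
  rw [FDRep.char_one]
  intro h0
  have h0' : Module.finrank ℂ V = 0 := by exact_mod_cast h0
  have : V.character = 0 := by
    funext g
    have hs : Subsingleton V := Module.finrank_zero_iff.mp h0'
    have : V.ρ g = 0 := LinearMap.ext fun v => Subsingleton.elim _ _
    simp [FDRep.character, this]
  rw [this] at h1
  simp at h1

/-- The regular representation, on functions. -/
def leftReg (G : Type) [Group G] : Representation ℂ G (G → ℂ) where
  toFun g := { toFun := fun f x => f (g⁻¹ * x), map_add' := fun _ _ => rfl,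
               map_smul' := fun _ _ => rfl }
  map_one' := by ext; simp
  map_mul' a b := LinearMap.ext fun f => funext fun x => by simp [mul_assoc]

/-- A class function orthogonal to all irreducible characters is zero. -/
theorem cf_eq_zero [Fintype G] {φ : G → ℂ} (hφ : IsCF φ)
    (h : ∀ χ ∈ IrrChar G, pair φ χ = 0) : φ = 0 := by
  -- the central element `∑ φ(g) g⁻¹` acts as zero on every representation
  have key : ∀ (V : Type) [AddCommGroup V] [Module ℂ V] [FiniteDimensional ℂ V]
      (ρ : Representation ℂ G V) (v : V), ∑ g : G, φ g • ρ g⁻¹ v = 0 := by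
    intro V _ _ _ ρ
    refine rep_induction (G := G) (fun V _ _ ρ => ∀ v : V, ∑ g : G, φ g • ρ g⁻¹ v = 0)
      ?_ ?_ ?_ V ρ
    · intro V _ _ ρ hV v
      exact Subsingleton.elim _ _
    · intro V _ _ _ ρ hρ
      let T : V →ₗ[ℂ] V := ∑ g : G, φ g • ρ g⁻¹
      have hT : ∀ (x : G) (v : V), T (ρ x v) = ρ x (T v) := by
        intro x v
        simp only [T, LinearMap.sum_apply, LinearMap.smul_apply, map_sum, map_smul]
        refine Fintype.sum_equiv (MulAut.conj x⁻¹).toEquiv _ _ fun g => ?_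
        have h1 : φ (x⁻¹ * g * x⁻¹⁻¹) = φ g := hφ g x⁻¹
        simp only [MulEquiv.toEquiv_eq_coe, EquivLike.coe_coe, MulAut.conj_apply, h1]
        congr 1
        rw [← Module.End.mul_apply, ← Module.End.mul_apply, ← map_mul, ← map_mul]
        congr 2
        group
      let F : ρ.IntertwiningMap ρ := LinearMap.intertwiningMap_of_isIntertwiningMap _ _ T hT
      obtain ⟨c, hc⟩ :=
        (Representation.IsIrreducible.algebraMap_intertwiningMap_bijective_of_isAlgClosed
          (ρ := ρ)).2 F
      have hTc : T = c • LinearMap.id := by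
        refine LinearMap.ext fun v => ?_
        have : F v = T v := rfl
        rw [← this, ← hc]
        simp [Algebra.algebraMap_eq_smul_one]
      have htr : LinearMap.trace ℂ V T = 0 := by
        have h2 := h _ (irrChar_of_irreducible ρ)
        have hc : (Nat.card G : ℂ) ≠ 0 := by simp
        unfold pair at h2
        rw [mul_eq_zero] at h2
        have h3 := h2.resolve_left (inv_ne_zero hc)
        rw [← h3]
        simp [T, Representation.character]
      rw [hTc] at htr
      simp only [map_smul, LinearMap.trace_id, smul_eq_mul, mul_eq_zero] at htr
      have hn : (Module.finrank ℂ V : ℂ) ≠ 0 := by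
        have := irr_one_ne_zero (irrChar_of_irreducible ρ)
        rwa [Representation.char_one] at this
      have hc0 := htr.resolve_right hn
      intro v
      have : T v = 0 := by rw [hTc, hc0]; simp
      simpa [T] using this
    · intro V _ _ _ ρ s t hst hs ht v
      obtain ⟨⟨x, y⟩, rfl⟩ := (Submodule.prodEquivOfIsCompl _ _ hst).surjective v
      have h1 := congrArg Subtype.val (hs x)
      have h2 := congrArg Subtype.val (ht y)
      simp only [Subrepresentation.toRepresentation] at h1 h2
      simp at h1 h2
      simp [smul_add, Finset.sum_add_distrib, h1, h2]
  have h1 := key (G → ℂ) (leftReg G) (Pi.single 1 1)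
  funext g
  have h2 := congrFun h1 g⁻¹
  simpa [leftReg, Finset.sum_apply, Pi.single_apply, mul_eq_one_iff_eq_inv] using h2

end GeneralTheory

section GeneralTheory2

variable {G : Type} [Group G]

theorem irr_pair_self [Fintype G] {χ : G → ℂ} (hχ : χ ∈ IrrChar G) : pair χ χ = 1 := by
  rw [pair_irr hχ hχ, if_pos rfl]

theorem irr_finite (G : Type) [Group G] [Finite G] : (IrrChar G).Finite := by
  cases nonempty_fintype G
  have : LinearIndependent ℂ (fun χ : IrrChar G => (χ : G → ℂ)) := by
    rw [linearIndependent_iff']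
    intro s c hc i hi
    have := congrArg (fun f => pair f (i : G → ℂ)) hc
    simp only [pair_sum_left, pair_smul_left, pair_zero_left] at this
    rw [Finset.sum_eq_single i] at this
    · rwa [irr_pair_self i.2, mul_one] at this
    · intro b _ hb
      rw [pair_irr b.2 i.2, if_neg (fun h => hb (Subtype.ext h)), mul_zero]
    · intro h; exact absurd hi h
  have := this.finite
  exact Set.toFinite _

/-- The finite set of irreducible characters. -/
def irrF (G : Type) [Group G] [Finite G] : Finset (G → ℂ) := (irr_finite G).toFinset

@[simp] theorem mem_irrF [Finite G] {χ : G → ℂ} : χ ∈ irrF G ↔ χ ∈ IrrChar G := by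
  simp [irrF]

theorem IsCF.sub {φ ψ : G → ℂ} (h : IsCF φ) (h' : IsCF ψ) : IsCF (φ - ψ) := by
  intro a b; simp [h a b, h' a b]

theorem IsCF.add {φ ψ : G → ℂ} (h : IsCF φ) (h' : IsCF ψ) : IsCF (φ + ψ) := by
  intro a b; simp [h a b, h' a b]

theorem IsCF.smul {φ : G → ℂ} (h : IsCF φ) (c : ℂ) : IsCF (c • φ) := by
  intro a b; simp [h a b]

theorem IsCF.sum {ι : Type*} {s : Finset ι} {f : ι → G → ℂ} (h : ∀ i ∈ s, IsCF (f i)) :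
    IsCF (∑ i ∈ s, f i) := by
  intro a b
  simp only [Finset.sum_apply]
  exact Finset.sum_congr rfl fun i hi => h i hi a b

theorem pair_sum_irr [Fintype G] (c : (G → ℂ) → ℂ) {χ : G → ℂ} (hχ : χ ∈ IrrChar G) :
    pair (∑ ψ ∈ irrF G, c ψ • ψ) χ = c χ := by
  rw [pair_sum_left, Finset.sum_eq_single χ]
  · rw [pair_smul_left, irr_pair_self hχ, mul_one]
  · intro ψ hψ hne
    rw [pair_smul_left, pair_irr (mem_irrF.mp hψ) hχ, if_neg hne, mul_zero]
  · intro h; exact absurd (mem_irrF.mpr hχ) h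

theorem cf_expand [Fintype G] {φ : G → ℂ} (hφ : IsCF φ) :
    φ = ∑ χ ∈ irrF G, pair φ χ • χ := by
  rw [← sub_eq_zero]
  apply cf_eq_zero
  · exact hφ.sub (IsCF.sum fun i hi => (irr_isCF (mem_irrF.mp hi)).smul _)
  · intro χ hχ
    rw [pair_sub_left, pair_sum_irr (fun χ => pair φ χ) hχ, sub_self]

theorem cf_ext [Fintype G] {φ ψ : G → ℂ} (hφ : IsCF φ) (hψ : IsCF ψ)
    (h : ∀ χ ∈ IrrChar G, pair φ χ = pair ψ χ) : φ = ψ := by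
  rw [← sub_eq_zero]
  refine cf_eq_zero (hφ.sub hψ) fun χ hχ => ?_
  rw [pair_sub_left, h χ hχ, sub_self]

theorem pair_expand [Fintype G] {φ ψ : G → ℂ} (hφ : IsCF φ) :
    pair φ ψ = ∑ χ ∈ irrF G, pair φ χ * pair ψ χ := by
  conv_lhs => rw [cf_expand hφ]
  rw [pair_sum_left]
  refine Finset.sum_congr rfl fun χ _ => ?_
  rw [pair_smul_left, pair_comm χ ψ]

theorem virt_pair_int [Fintype G] {f g : G → ℂ} (hf : f ∈ virt G) (hg : g ∈ virt G) :
    ∃ z : ℤ, pair f g = z := by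
  induction hf using Submodule.span_induction with
  | zero => exact ⟨0, by simp⟩
  | add x y _ _ hx hy =>
    obtain ⟨a, ha⟩ := hx
    obtain ⟨b, hb⟩ := hy
    exact ⟨a + b, by rw [pair_add_left, ha, hb]; push_cast; rfl⟩
  | smul a x _ hx =>
    obtain ⟨b, hb⟩ := hx
    exact ⟨a * b, by rw [pair_zsmul_left, hb]; push_cast; rfl⟩
  | mem x hx =>
    induction hg using Submodule.span_induction with
    | zero => exact ⟨0, by simp⟩
    | add u v _ _ hx hy =>
      obtain ⟨a, ha⟩ := hx
      obtain ⟨b, hb⟩ := hy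
      exact ⟨a + b, by rw [pair_add_right, ha, hb]; push_cast; rfl⟩
    | smul a u _ hx =>
      obtain ⟨b, hb⟩ := hx
      exact ⟨a * b, by rw [pair_zsmul_right, hb]; push_cast; rfl⟩
    | mem u hu =>
      rw [pair_irr hx hu]
      split_ifs
      · exact ⟨1, by simp⟩
      · exact ⟨0, by simp⟩

/-- Integrality of the pairings with irreducible characters characterizes virtual characters. -/
theorem mem_virt_of_pair [Fintype G] {φ : G → ℂ} (hφ : IsCF φ)
    (h : ∀ χ ∈ IrrChar G, ∃ z : ℤ, pair φ χ = z) : φ ∈ virt G := by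
  rw [cf_expand hφ]
  refine Submodule.sum_mem _ fun χ hχ => ?_
  obtain ⟨z, hz⟩ := h χ (mem_irrF.mp hχ)
  rw [hz, Int.cast_smul_eq_zsmul]
  exact Submodule.smul_mem _ _ (irr_mem_virt (mem_irrF.mp hχ))

/-- Coefficients of a virtual character. -/
theorem virt_expand [Fintype G] {f : G → ℂ} (hf : f ∈ virt G) :
    ∃ c : (G → ℂ) → ℤ, (∀ χ ∈ IrrChar G, pair f χ = c χ) ∧ f = ∑ χ ∈ irrF G, c χ • χ ∧
      ∀ g ∈ virt G, pair f g = ∑ χ ∈ irrF G, c χ * pair g χ := by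
  have : ∀ χ : G → ℂ, ∃ z : ℤ, χ ∈ IrrChar G → pair f χ = z := by
    intro χ
    by_cases h : χ ∈ IrrChar G
    · obtain ⟨z, hz⟩ := virt_pair_int hf (irr_mem_virt h)
      exact ⟨z, fun _ => hz⟩
    · exact ⟨0, fun h' => absurd h' h⟩
  choose c hc using this
  refine ⟨c, hc, ?_, ?_⟩
  · conv_lhs => rw [cf_expand (virt_isCF hf)]
    refine Finset.sum_congr rfl fun χ hχ => ?_
    rw [hc χ (mem_irrF.mp hχ), Int.cast_smul_eq_zsmul]
  · intro g _
    rw [pair_expand (virt_isCF hf)]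
    refine Finset.sum_congr rfl fun χ hχ => ?_
    rw [hc χ (mem_irrF.mp hχ)]

/-- A virtual character of norm one is an irreducible character up to sign. -/
theorem virt_norm_one [Fintype G] {f : G → ℂ} (hf : f ∈ virt G) (h1 : pair f f = 1) :
    f ∈ IrrChar G ∨ -f ∈ IrrChar G := by
  obtain ⟨c, hc, hfc, hp⟩ := virt_expand hf
  have hs : ∑ χ ∈ irrF G, c χ * c χ = 1 := by
    have := hp f hf
    rw [h1, Finset.sum_congr rfl fun χ hχ => by rw [hc χ (mem_irrF.mp hχ)]] at this
    exact_mod_cast this.symm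
  have hex : ∃ χ ∈ irrF G, c χ ≠ 0 := by
    by_contra hcon
    push Not at hcon
    rw [Finset.sum_eq_zero] at hs
    · exact absurd hs (by norm_num)
    · intro χ hχ; rw [hcon χ hχ]; rfl
  obtain ⟨χ, hχ, hne⟩ := hex
  rw [← Finset.add_sum_erase _ _ hχ] at hs
  have hnn : 0 ≤ ∑ x ∈ (irrF G).erase χ, c x * c x :=
    Finset.sum_nonneg fun i _ => mul_self_nonneg _
  have hpos : 1 ≤ c χ * c χ := by
    have := mul_self_pos.mpr hne; omega
  have hz : ∑ x ∈ (irrF G).erase χ, c x * c x = 0 := by omega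
  have hz' : ∀ x ∈ (irrF G).erase χ, c x = 0 := by
    intro x hx
    exact mul_self_eq_zero.mp
      ((Finset.sum_eq_zero_iff_of_nonneg fun i _ => mul_self_nonneg _).mp hz x hx)
  have hf' : f = c χ • χ := by
    rw [hfc, ← Finset.add_sum_erase _ _ hχ, Finset.sum_eq_zero, add_zero]
    intro x hx; rw [hz' x hx, zero_smul]
  have hcc : c χ * c χ = 1 := by omega
  rcases mul_self_eq_one_iff.mp hcc with h | h
  · left; rw [hf', h, one_smul]; exact mem_irrF.mp hχ
  · right; rw [hf', h]; simpa using hχ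

/-- A virtual character of norm two is `±χ ± ψ` with distinct irreducible `χ`, `ψ`. -/
theorem virt_norm_two [Fintype G] {f : G → ℂ} (hf : f ∈ virt G) (h1 : pair f f = 2) :
    ∃ χ ∈ IrrChar G, ∃ ψ ∈ IrrChar G, χ ≠ ψ ∧ ∃ a b : ℤ, a * a = 1 ∧ b * b = 1 ∧
      f = a • χ + b • ψ := by
  obtain ⟨c, hc, hfc, hp⟩ := virt_expand hf
  have hs : ∑ χ ∈ irrF G, c χ * c χ = 2 := by
    have := hp f hf
    rw [h1, Finset.sum_congr rfl fun χ hχ => by rw [hc χ (mem_irrF.mp hχ)]] at this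
    exact_mod_cast this.symm
  have hex : ∃ χ ∈ irrF G, c χ ≠ 0 := by
    by_contra hcon
    push Not at hcon
    rw [Finset.sum_eq_zero] at hs
    · exact absurd hs (by norm_num)
    · intro χ hχ; rw [hcon χ hχ]; rfl
  obtain ⟨χ, hχ, hne⟩ := hex
  have hpos : 1 ≤ c χ * c χ := by
    have := mul_self_pos.mpr hne; omega
  have hsq : c χ * c χ ≠ 2 := by
    intro h
    have : |c χ| < 2 := by
      by_contra hcon; push Not at hcon
      have := abs_mul_abs_self (c χ); nlinarith
    rw [abs_lt] at this
    have h3 : c χ = -1 ∨ c χ = 0 ∨ c χ = 1 := by omega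
    rcases h3 with h3 | h3 | h3 <;> rw [h3] at h <;> norm_num at h
  rw [← Finset.add_sum_erase _ _ hχ] at hs
  have hex2 : ∃ ψ ∈ (irrF G).erase χ, c ψ ≠ 0 := by
    by_contra hcon
    push Not at hcon
    rw [Finset.sum_eq_zero (s := (irrF G).erase χ)] at hs
    · omega
    · intro χ hχ; rw [hcon χ hχ]; rfl
  obtain ⟨ψ, hψ, hne2⟩ := hex2
  rw [← Finset.add_sum_erase _ _ hψ] at hs
  have hpos2 : 1 ≤ c ψ * c ψ := by
    have := mul_self_pos.mpr hne2; omega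
  have hnn : 0 ≤ ∑ x ∈ ((irrF G).erase χ).erase ψ, c x * c x :=
    Finset.sum_nonneg fun i _ => mul_self_nonneg _
  have hz : ∑ x ∈ ((irrF G).erase χ).erase ψ, c x * c x = 0 := by omega
  have hz' : ∀ x ∈ ((irrF G).erase χ).erase ψ, c x = 0 := by
    intro x hx
    exact mul_self_eq_zero.mp
      ((Finset.sum_eq_zero_iff_of_nonneg fun i _ => mul_self_nonneg _).mp hz x hx)
  refine ⟨χ, mem_irrF.mp hχ, ψ, mem_irrF.mp (Finset.mem_of_mem_erase hψ),
    (Finset.ne_of_mem_erase hψ).symm, c χ, c ψ, by omega, by omega, ?_⟩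
  rw [hfc, ← Finset.add_sum_erase _ _ hχ, ← Finset.add_sum_erase _ _ hψ,
    Finset.sum_eq_zero, add_zero]
  intro x hx; rw [hz' x hx, zero_smul]

theorem closure_pair_nat [Fintype G] {f χ : G → ℂ} (hf : f ∈ AddSubmonoid.closure (IrrChar G))
    (hχ : χ ∈ IrrChar G) : ∃ k : ℕ, pair f χ = k := by
  induction hf using AddSubmonoid.closure_induction with
  | zero => exact ⟨0, by simp⟩
  | add x y _ _ hx hy =>
    obtain ⟨a, ha⟩ := hx
    obtain ⟨b, hb⟩ := hy
    exact ⟨a + b, by rw [pair_add_left, ha, hb]; push_cast; rfl⟩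
  | mem x hx =>
    rw [pair_irr hx hχ]
    split_ifs
    · exact ⟨1, by simp⟩
    · exact ⟨0, by simp⟩

theorem irr_comp_mem_closure {H : Type} [Group H] [Finite H] {χ : G → ℂ} (hχ : χ ∈ IrrChar G)
    (f : H →* G) : χ ∘ f ∈ AddSubmonoid.closure (IrrChar H) := by
  obtain ⟨V, hV, rfl⟩ := hχ
  exact char_mem_closure (G := H) (MonoidHom.comp V.ρ f)

theorem virt_comp {H : Type} [Group H] [Finite H] {χ : G → ℂ} (hχ : χ ∈ virt G)
    (f : H →* G) : χ ∘ f ∈ virt H := by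
  induction hχ using Submodule.span_induction with
  | mem x hx =>
    obtain ⟨V, hV, rfl⟩ := hx
    exact char_mem_virt (G := H) (MonoidHom.comp V.ρ f)
  | zero => exact zero_mem _
  | add x y _ _ hx hy => exact add_mem hx hy
  | smul a x _ hx => exact Submodule.smul_mem _ a hx

theorem irr_comp_equiv [Finite G] {H : Type} [Group H] {χ : G → ℂ} (hχ : χ ∈ IrrChar G)
    (f : H ≃* G) : χ ∘ f ∈ IrrChar H := by
  cases nonempty_fintype G
  have : Finite H := Finite.of_equiv G f.symm.toEquiv
  cases nonempty_fintype H
  obtain ⟨V, hV, rfl⟩ := hχ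
  refine ⟨FDRep.of (MonoidHom.comp V.ρ f.toMonoidHom), ?_, rfl⟩
  rw [FDRep.simple_iff_char_is_norm_one] at hV ⊢
  rw [Nat.card_congr f.toEquiv, ← hV]
  refine Fintype.sum_equiv f.toEquiv _ _ fun x => ?_
  change V.character (f x) * V.character (f x⁻¹) = V.character (f x) * V.character (f x)⁻¹
  rw [map_inv]

theorem pair_comp_equiv [Fintype G] {H : Type} [Group H] [Fintype H] (φ ψ : G → ℂ)
    (f : H ≃* G) : pair (φ ∘ f) (ψ ∘ f) = pair φ ψ := by
  unfold pair
  rw [Nat.card_congr f.toEquiv]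
  congr 1
  refine Fintype.sum_equiv f.toEquiv _ _ fun x => ?_
  simp

theorem virt_mul [Finite G] {χ ψ : G → ℂ} (hχ : χ ∈ virt G) (hψ : ψ ∈ virt G) :
    χ * ψ ∈ virt G := by
  induction hχ using Submodule.span_induction with
  | zero => rw [zero_mul]; exact zero_mem _
  | add x y _ _ hx hy => rw [add_mul]; exact add_mem hx hy
  | smul a x _ hx => rw [smul_mul_assoc]; exact Submodule.smul_mem _ a hx
  | mem x hx =>
    induction hψ using Submodule.span_induction with
    | zero => rw [mul_zero]; exact zero_mem _
    | add u v _ _ hx hy => rw [mul_add]; exact add_mem hx hy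
    | smul a u _ hx => rw [mul_smul_comm]; exact Submodule.smul_mem _ a hx
    | mem u hu =>
      obtain ⟨V, hV, rfl⟩ := hx
      obtain ⟨W, hW, rfl⟩ := hu
      have := char_mem_virt (G := G) (Representation.tprod V.ρ W.ρ)
      rwa [Representation.char_tensor] at this

/-- Twisting by a homomorphism to the units of `ℂ` preserves irreducibility. -/
theorem irr_twist [Finite G] {χ : G → ℂ} (hχ : χ ∈ IrrChar G) (ε : G →* ℂ) :
    (fun g => ε g * χ g) ∈ IrrChar G := by
  cases nonempty_fintype G
  obtain ⟨V, hV, rfl⟩ := hχ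
  let ρ : G →* (V →ₗ[ℂ] V) :=
    { toFun := fun g => ε g • V.ρ g
      map_one' := by simp
      map_mul' := fun a b => by
        rw [map_mul, map_mul, smul_mul_smul_comm] }
  have hch : ∀ g, (FDRep.of ρ).character g = ε g * V.character g := by
    intro g
    change LinearMap.trace ℂ V (ε g • V.ρ g) = _
    rw [map_smul]; rfl
  refine ⟨FDRep.of ρ, ?_, funext fun g => (hch g).symm⟩
  rw [FDRep.simple_iff_char_is_norm_one] at hV ⊢
  rw [← hV]
  refine Finset.sum_congr rfl fun g _ => ?_
  rw [hch, hch, mul_mul_mul_comm, ← map_mul, mul_inv_cancel, map_one, one_mul]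

/-- The number of fixed points in a permutation action is a character. -/
theorem perm_char_mem_virt [Finite G] {X : Type} [Fintype X] (f : G →* Equiv.Perm X) :
    (fun g => (((Finset.univ.filter fun x => f g x = x).card : ℕ) : ℂ)) ∈ virt G := by
  let ρ : Representation ℂ G (X → ℂ) :=
    { toFun := fun g => LinearMap.funLeft ℂ ℂ (f g⁻¹)
      map_one' := by ext; simp
      map_mul' := fun a b => by
        refine LinearMap.ext fun u => funext fun x => ?_
        simp [LinearMap.funLeft_apply] }
  have := char_mem_virt (G := G) ρ
  convert this using 1
  funext g
  change _ = LinearMap.trace ℂ (X → ℂ) (LinearMap.funLeft ℂ ℂ (f g⁻¹))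
  rw [LinearMap.trace_eq_matrix_trace ℂ (Pi.basisFun ℂ X), Matrix.trace]
  simp only [Matrix.diag_apply, LinearMap.toMatrix_apply, Pi.basisFun_apply, Pi.basisFun_repr,
    LinearMap.funLeft_apply, Pi.single_apply]
  rw [Finset.sum_boole]
  congr 2
  refine Finset.filter_congr fun x _ => ?_
  rw [map_inv, Equiv.Perm.inv_eq_iff_eq, eq_comm]

theorem irr_integral [Finite G] {χ : G → ℂ} (hχ : χ ∈ IrrChar G) (g : G) :
    IsIntegral ℤ (χ g) := by
  obtain ⟨V, hV, rfl⟩ := hχ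
  change IsIntegral ℤ (LinearMap.trace ℂ V (V.ρ g))
  let b := Module.finBasis ℂ V
  rw [LinearMap.trace_eq_matrix_trace ℂ b, Matrix.trace_eq_sum_roots_charpoly]
  apply IsIntegral.multiset_sum
  intro x hx
  have hx' := Polynomial.isRoot_of_mem_roots hx
  rw [LinearMap.charpoly_toMatrix] at hx'
  have he : Module.End.HasEigenvalue (V.ρ g) x := (Module.End.hasEigenvalue_iff_isRoot_charpoly _ _).mpr hx'
  obtain ⟨v, hv⟩ := he.exists_hasEigenvector
  have hpow := hv.pow_apply (orderOf g)
  rw [← map_pow, pow_orderOf_eq_one, map_one] at hpow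
  have h1 : x ^ orderOf g = 1 := by
    have : (x ^ orderOf g - 1) • v = 0 := by
      rw [sub_smul, ← hpow, one_smul]; simp
    exact sub_eq_zero.mp ((smul_eq_zero.mp this).resolve_right hv.2)
  exact IsIntegral.of_pow (orderOf_pos g) (by rw [h1]; exact isIntegral_one)

theorem virt_integral [Finite G] {χ : G → ℂ} (hχ : χ ∈ virt G) (g : G) :
    IsIntegral ℤ (χ g) := by
  induction hχ using Submodule.span_induction with
  | mem x hx => exact irr_integral hx g
  | zero => exact isIntegral_zero
  | add x y _ _ hx hy => exact hx.add hy
  | smul a x _ hx => exact hx.smul a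

end GeneralTheory2

/-! ### Alternants and the Jacobi–Trudi identities -/

section JacobiTrudi

variable {R : Type*} [CommRing R] {N : ℕ}

/-- The generalized Vandermonde determinant `det (x_i ^ α_j)`. -/
def altR (x : Fin N → R) (α : Fin N → ℕ) : R :=
  Matrix.det (Matrix.of fun i j => x i ^ α j)

/-- The exponents `0, 1, …, N - 1`. -/
def delta (N : ℕ) : Fin N → ℕ := fun i => i

/-- Complete homogeneous symmetric functions, through their generating series. -/
def hh (x : Fin N → R) (r : ℕ) : R :=
  PowerSeries.coeff r (∏ k, PowerSeries.mk fun s => x k ^ s)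

/-- Elementary symmetric functions, through their generating series. -/
def ee (x : Fin N → R) (r : ℕ) : R :=
  PowerSeries.coeff r (∏ k, (1 + PowerSeries.C (x k) * PowerSeries.X))

/-- The Jacobi–Trudi matrix `u (α_j - i)`, with the convention that `u` vanishes at negative
arguments. -/
def jtMat (u : ℕ → R) (α : Fin N → ℕ) : Matrix (Fin N) (Fin N) R :=
  Matrix.of fun i j => if (i : ℕ) ≤ α j then u (α j - i) else 0

theorem altR_perm (x : Fin N → R) (α : Fin N → ℕ) (σ : Equiv.Perm (Fin N)) :
    altR x (α ∘ σ) = (Equiv.Perm.sign σ : ℤ) * altR x α := by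
  unfold altR
  rw [← Matrix.det_permute']
  rfl

theorem altR_eq_zero (x : Fin N → R) (α : Fin N → ℕ) (h : ¬ Function.Injective α) :
    altR x α = 0 := by
  unfold Function.Injective at h
  push Not at h
  obtain ⟨i, j, hij, hne⟩ := h
  exact Matrix.det_zero_of_column_eq hne fun k => by simp [hij]

/-- The coefficients of `u * v` where `u` has no coefficient of degree `N` or more. -/
theorem coeff_mul_of_lt (u v : PowerSeries R) (hu : ∀ i, N ≤ i → PowerSeries.coeff i u = 0)
    (a : ℕ) : PowerSeries.coeff a (u * v) = ∑ i : Fin N, PowerSeries.coeff (i : ℕ) u *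
      (if (i : ℕ) ≤ a then PowerSeries.coeff (a - i) v else 0) := by
  rw [PowerSeries.coeff_mul, Finset.Nat.sum_antidiagonal_eq_sum_range_succ_mk,
    Fin.sum_univ_eq_sum_range (fun i => PowerSeries.coeff i u *
      (if i ≤ a then PowerSeries.coeff (a - i) v else 0)) N]
  have h1 : ∑ i ∈ Finset.range a.succ, PowerSeries.coeff i u * PowerSeries.coeff (a - i) v =
      ∑ i ∈ Finset.range (max N a.succ), PowerSeries.coeff i u *
        (if i ≤ a then PowerSeries.coeff (a - i) v else 0) := by
    rw [← Finset.sum_subset (Finset.range_mono (le_max_right N a.succ))]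
    · refine Finset.sum_congr rfl fun i hi => ?_
      rw [if_pos (Nat.lt_succ_iff.mp (Finset.mem_range.mp hi))]
    · intro i _ hi
      rw [if_neg (by simpa using hi), mul_zero]
  rw [h1, ← Finset.sum_subset (Finset.range_mono (le_max_left N a.succ))]
  intro i _ hi
  rw [hu i (by simpa using hi), zero_mul]

theorem coeff_linear_prod_eq_zero {ι : Type*} (s : Finset ι) (z : ι → R) (r : ℕ)
    (hr : s.card < r) :
    PowerSeries.coeff r (∏ k ∈ s, (1 + PowerSeries.C (z k) * PowerSeries.X)) = 0 := by
  have : ∏ k ∈ s, (1 + PowerSeries.C (z k) * PowerSeries.X) =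
      ((∏ k ∈ s, (1 + Polynomial.C (z k) * Polynomial.X) : Polynomial R) : PowerSeries R) := by
    rw [← Polynomial.coeToPowerSeries.ringHom_apply, map_prod]
    simp
  rw [this, Polynomial.coeff_coe]
  apply Polynomial.coeff_eq_zero_of_natDegree_lt
  refine lt_of_le_of_lt (Polynomial.natDegree_prod_le _ _) (lt_of_le_of_lt ?_ hr)
  refine (Finset.sum_le_card_nsmul _ _ 1 fun k _ => ?_).trans (by simp)
  compute_degree

theorem geom_mul (z : R) :
    (1 + PowerSeries.C (-z) * PowerSeries.X) * (PowerSeries.mk fun s => z ^ s) = 1 := by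
  ext n
  cases n with
  | zero => simp [add_mul, mul_assoc]
  | succ n =>
    rw [add_mul, one_mul, mul_assoc, map_add, PowerSeries.coeff_C_mul,
      PowerSeries.coeff_succ_X_mul]
    simp [pow_succ, PowerSeries.coeff_one]
    ring

/-- The Jacobi–Trudi identity: the quotient of alternants `a_α / a_δ` is a determinant of complete
homogeneous symmetric functions. -/
theorem jacobiTrudi_h (x : Fin N → R) (α : Fin N → ℕ) :
    altR x (delta N) * (jtMat (hh x) α).det = altR x α := by
  let u : Fin N → PowerSeries R :=
    fun k => ∏ l ∈ Finset.univ.erase k, (1 + PowerSeries.C (-x l) * PowerSeries.X)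
  let C : Matrix (Fin N) (Fin N) R := Matrix.of fun k i => PowerSeries.coeff (i : ℕ) (u k)
  have hu : ∀ k i, N ≤ i → PowerSeries.coeff i (u k) = 0 := by
    intro k i hi
    apply coeff_linear_prod_eq_zero
    rw [Finset.card_erase_of_mem (Finset.mem_univ _), Finset.card_univ, Fintype.card_fin]
    have := k.pos
    omega
  have hmul : ∀ k, u k * (∏ l, PowerSeries.mk fun s => x l ^ s) =
      PowerSeries.mk fun s => x k ^ s := by
    intro k
    rw [← Finset.mul_prod_erase _ _ (Finset.mem_univ k), mul_left_comm, ← Finset.prod_mul_distrib,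
      Finset.prod_eq_one fun l _ => geom_mul (x l), mul_one]
  have hC : ∀ β : Fin N → ℕ, C.det * (jtMat (hh x) β).det = altR x β := by
    intro β
    rw [← Matrix.det_mul]
    unfold altR
    congr 1
    ext k j
    rw [Matrix.mul_apply, Matrix.of_apply]
    have := coeff_mul_of_lt (N := N) (u k) (∏ l, PowerSeries.mk fun s => x l ^ s) (hu k) (β j)
    rw [hmul, PowerSeries.coeff_mk] at this
    rw [this]
    rfl
  have h1 : (jtMat (hh x) (delta N)).det = 1 := by
    rw [Matrix.det_of_isUpperTriangular]
    · refine Finset.prod_eq_one fun i _ => ?_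
      simp [jtMat, delta, hh, map_prod]
    · intro i j hij
      have : ¬ (i : ℕ) ≤ j := not_le.mpr hij
      exact if_neg this
  rw [← hC (delta N), h1, mul_one, hC]

/-- The dual Jacobi–Trudi identity, up to sign: if `α` and `2N - 1 - α'` enumerate
complementary subsets of `{0, …, 2N - 1}`, then the determinant of elementary symmetric
functions attached to `α` is the alternant quotient attached to `α'`. -/
theorem jacobiTrudi_e (x : Fin N → R) (α α' : Fin N → ℕ) (e : Fin N ⊕ Fin N ≃ Fin (N + N))
    (h1 : ∀ j, (e (Sum.inl j) : ℕ) = α j) (h2 : ∀ j, (e (Sum.inr j) : ℕ) + α' j = 2 * N - 1) :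
    ∃ s : ℤˣ, altR x (delta N) * (jtMat (ee x) α).det = ((s : ℤ) : R) * altR x α' := by
  let V : Matrix (Fin N) (Fin (N + N)) R :=
    Matrix.of fun k a => (-1) ^ (a : ℕ) * x k ^ (2 * N - 1 - (a : ℕ))
  let C : Matrix (Fin (N + N)) (Fin N) R :=
    Matrix.of fun a i => if (i : ℕ) ≤ a then ee x (a - i) else 0
  let L : Matrix (Fin N ⊕ Fin N) (Fin (N + N)) R :=
    Matrix.of fun r a => Sum.elim (fun j => if a = e (Sum.inl j) then 1 else 0) (fun k => V k a) r
  let M : Matrix (Fin (N + N)) (Fin N ⊕ Fin N) R :=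
    Matrix.of fun a c => Sum.elim (fun i => C a i)
      (fun i => if a = finSumFinEquiv (Sum.inr i) then 1 else 0) c
  -- the rows of `V` are orthogonal to the columns of `C`
  have hVC : V * C = 0 := by
    ext k i
    rw [Matrix.mul_apply, Matrix.zero_apply]
    let w : PowerSeries R := ∏ l ∈ Finset.univ.erase k, (1 + PowerSeries.C (x l) * PowerSeries.X)
    have hw : ∏ l, (1 + PowerSeries.C (x l) * PowerSeries.X) =
        (1 + PowerSeries.C (x k) * PowerSeries.X) * w :=
      (Finset.mul_prod_erase _ _ (Finset.mem_univ k)).symm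
    have hw0 : ∀ r, N ≤ r → PowerSeries.coeff r w = 0 := by
      intro r hr
      apply coeff_linear_prod_eq_zero
      rw [Finset.card_erase_of_mem (Finset.mem_univ _), Finset.card_univ, Fintype.card_fin]
      have := k.pos
      omega
    have he0 : ee x 0 = PowerSeries.coeff 0 w := by
      rw [ee, hw]; simp
    have he : ∀ r, ee x (r + 1) = PowerSeries.coeff (r + 1) w + x k * PowerSeries.coeff r w := by
      intro r
      rw [ee, hw, add_mul, one_mul, mul_assoc, map_add, PowerSeries.coeff_C_mul,
        PowerSeries.coeff_succ_X_mul]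
    -- partial sums telescope
    have htel : ∀ T, T ≤ N + N → ∑ a ∈ Finset.range T, ((-1) ^ a * x k ^ (2 * N - 1 - a)) *
        (if (i : ℕ) ≤ a then ee x (a - i) else 0) =
        if (i : ℕ) < T then (-1) ^ (T - 1) * x k ^ (2 * N - T) * PowerSeries.coeff (T - 1 - i) w
        else 0 := by
      intro T
      induction T with
      | zero => simp
      | succ T ih =>
        intro hT
        rw [Finset.sum_range_succ, ih (by omega)]
        rcases lt_trichotomy (i : ℕ) T with h | h | h
        · rw [if_pos h, if_pos h.le, if_pos (by omega)]
          obtain ⟨q, hq⟩ : ∃ q, T = i + 1 + q := ⟨T - i - 1, by omega⟩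
          have e1 : T - i = q + 1 := by omega
          have e2 : T - 1 - i = q := by omega
          have e3 : T + 1 - 1 - i = q + 1 := by omega
          have e4 : 2 * N - T = (2 * N - 1 - T) + 1 := by omega
          have e5 : 2 * N - (T + 1) = 2 * N - 1 - T := by omega
          have e6 : T + 1 - 1 = (T - 1) + 1 := by omega
          have e7 : T = (T - 1) + 1 := by omega
          rw [e1, e2, e3, e5, he, e4, e6]
          have e8 : ((-1 : R)) ^ T = (-1) ^ (T - 1 + 1) := by rw [← e7]
          rw [e8, pow_succ, pow_succ]
          ring
        · have e1 : T - i = 0 := by omega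
          have e3 : T + 1 - 1 - i = 0 := by omega
          have e5 : 2 * N - (T + 1) = 2 * N - 1 - T := by omega
          rw [if_neg (by omega), if_pos (by omega), if_pos (by omega), e1, e3, e5, he0]
          simp
        · rw [if_neg (by omega), if_neg (by omega), if_neg (by omega)]; simp
    have := htel (N + N) le_rfl
    rw [if_pos (by have := i.2; omega), hw0 _ (by have := i.2; omega), mul_zero] at this
    rw [← this, ← Fin.sum_univ_eq_sum_range (fun a => ((-1) ^ a * x k ^ (2 * N - 1 - a)) *
        (if (i : ℕ) ≤ a then ee x (a - i) else 0)) (N + N)]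
    rfl
  have hLe : (L.submatrix id e) = Matrix.fromBlocks 1 0
      (V.submatrix id (e ∘ Sum.inl)) (V.submatrix id (e ∘ Sum.inr)) := by
    ext r c
    rcases r with r | r <;> rcases c with c | c <;>
      simp [L, Matrix.one_apply, eq_comm]
  have hMe : (M.submatrix finSumFinEquiv id) = Matrix.fromBlocks
      (C.submatrix (finSumFinEquiv ∘ Sum.inl) id) 0
      (C.submatrix (finSumFinEquiv ∘ Sum.inr) id) 1 := by
    ext r c
    rcases r with r | r <;> rcases c with c | c <;>
      simp only [M, Matrix.submatrix_apply, Matrix.of_apply, Sum.elim_inl, Sum.elim_inr,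
        Matrix.fromBlocks_apply₁₁, Matrix.fromBlocks_apply₁₂, Matrix.fromBlocks_apply₂₁,
        Matrix.fromBlocks_apply₂₂, id, Function.comp, EmbeddingLike.apply_eq_iff_eq,
        Matrix.one_apply, Matrix.zero_apply, reduceCtorEq, if_false, Sum.inr.injEq]
  have hLM : L * M = Matrix.fromBlocks (jtMat (ee x) α).transpose
      (Matrix.of fun j i => L (Sum.inl j) (finSumFinEquiv (Sum.inr i)))
      0 (V.submatrix id (finSumFinEquiv ∘ Sum.inr)) := by
    ext r c
    rcases r with r | r <;> rcases c with c | c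
    · rw [Matrix.mul_apply, Finset.sum_eq_single (e (Sum.inl r))]
      · simp [L, M, C, jtMat, h1]
      · intro b _ hb
        simp [L, hb]
      · intro h; exact absurd (Finset.mem_univ _) h
    · simp [Matrix.mul_apply, L, M]
    · have := congrFun (congrFun hVC r) c
      simpa [Matrix.mul_apply, L, M] using this
    · simp [Matrix.mul_apply, L, M]
  have hCtop : (C.submatrix (finSumFinEquiv ∘ Sum.inl) id).det = 1 := by
    rw [Matrix.det_of_isLowerTriangular]
    · refine Finset.prod_eq_one fun i _ => ?_
      simp [C, ee, map_prod]
    · intro i j hij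
      have : ¬ (j : ℕ) ≤ i := not_le.mpr hij
      simp only [C, Matrix.of_apply, Matrix.submatrix_apply, id]
      rw [if_neg (by simpa using hij)]
  have hV2 : ∃ s : ℤˣ, (V.submatrix id (e ∘ Sum.inr)).det = ((s : ℤ) : R) * altR x α' := by
    refine ⟨∏ j, (-1) ^ (e (Sum.inr j) : ℕ), ?_⟩
    have : V.submatrix id (e ∘ Sum.inr) =
        Matrix.of fun k j => (-1 : R) ^ (e (Sum.inr j) : ℕ) * (Matrix.of fun i j => x i ^ α' j) k j := by
      ext k j
      have : 2 * N - 1 - (e (Sum.inr j) : ℕ) = α' j := by have := h2 j; omega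
      simp [V, this]
    rw [this, Matrix.det_mul_row]
    simp [altR]
  have hV3 : ∃ s : ℤˣ, (V.submatrix id (finSumFinEquiv ∘ Sum.inr)).det =
      ((s : ℤ) : R) * altR x (delta N) := by
    have hrev := altR_perm x (delta N) Fin.revPerm
    have : V.submatrix id (finSumFinEquiv ∘ Sum.inr) =
        Matrix.of fun (k j : Fin N) => (-1 : R) ^ (N + (j : ℕ)) *
          (Matrix.of fun i j => x i ^ (delta N ∘ Fin.revPerm) j) k j := by
      ext k j
      have : 2 * N - 1 - ((j : ℕ) + N) = N - (j + 1) := by omega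
      simp [V, delta, this, add_comm N]
    refine ⟨(∏ j : Fin N, (-1) ^ (N + (j : ℕ))) * Equiv.Perm.sign (Fin.revPerm : Equiv.Perm (Fin N)),
      ?_⟩
    rw [this, Matrix.det_mul_row]
    have h3 : (Matrix.of fun i j => x i ^ (delta N ∘ Fin.revPerm) j).det =
      altR x (delta N ∘ Fin.revPerm) := rfl
    rw [h3, hrev]
    push_cast
    ring
  have hdet : (L * M).det = (L.submatrix id e).det * (M.submatrix e id).det := by
    rw [← Matrix.det_mul, Matrix.submatrix_mul_equiv]
    rfl
  have hMe2 : (M.submatrix e id).det =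
      (Equiv.Perm.sign (e.trans finSumFinEquiv.symm) : ℤ) * (M.submatrix finSumFinEquiv id).det := by
    rw [← Matrix.det_permute, Matrix.submatrix_submatrix]
    congr 2
    funext r
    simp
  obtain ⟨s2, hs2⟩ := hV2
  obtain ⟨s3, hs3⟩ := hV3
  rw [hLM, Matrix.det_fromBlocks_zero₂₁, Matrix.det_transpose, hLe, Matrix.det_fromBlocks_zero₁₂,
    hMe2, hMe, Matrix.det_fromBlocks_zero₁₂, hCtop, hs2, hs3] at hdet
  simp only [Matrix.det_one, mul_one, one_mul] at hdet
  refine ⟨s3 * s2 * Equiv.Perm.sign (e.trans finSumFinEquiv.symm), ?_⟩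
  have hs33 : ((s3 : ℤ) : R) * ((s3 : ℤ) : R) = 1 := by
    rw [← Int.cast_mul, ← Units.val_mul, Int.units_mul_self]; simp
  calc altR x (delta N) * (jtMat (ee x) α).det
      = ((s3 : ℤ) : R) * ((jtMat (ee x) α).det * (((s3 : ℤ) : R) * altR x (delta N))) := by
        linear_combination (-(altR x (delta N)) * (jtMat (ee x) α).det) * hs33
    _ = _ := by rw [hdet]; push_cast; ring

end JacobiTrudi

/-! ### Counting functions together with their stabilizers -/

section Counting

variable {ι J : Type} [Fintype ι] [DecidableEq ι] [Fintype J] [DecidableEq J]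

/-- The content of a function `F`: how often each value is taken. -/
def cont {ι J : Type} [Fintype ι] (F : ι → J) : J →₀ ℕ := ∑ i, Finsupp.single (F i) 1

theorem cont_apply (F : ι → J) (j : J) : cont F j = Fintype.card {i // F i = j} := by
  simp [cont, Finsupp.finsetSum_apply, Finsupp.single_apply, Fintype.card_subtype]

theorem cont_sum (F : ι → J) : ∑ j, cont F j = Fintype.card ι := by
  simp only [cont_apply]
  rw [← Fintype.card_sigma, Fintype.card_congr (Equiv.sigmaFiberEquiv F)]

theorem exists_cont (γ : J →₀ ℕ) (h : ∑ j, γ j = Fintype.card ι) : ∃ F : ι → J, cont F = γ := by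
  have hc : Fintype.card ι = Fintype.card (Σ j, Fin (γ j)) := by simp [h]
  let e := Fintype.equivOfCardEq hc
  refine ⟨fun i => (e i).1, ?_⟩
  ext j
  rw [cont_apply]
  have : {i // (e i).1 = j} ≃ Fin (γ j) :=
    (e.subtypeEquiv (q := fun x : Σ j, Fin (γ j) => x.1 = j) (fun _ => Iff.rfl)).trans
      (Equiv.sigmaSubtype j)
  rw [Fintype.card_congr this, Fintype.card_fin]

theorem exists_perm_of_cont {F F0 : ι → J} (h : cont F = cont F0) :
    ∃ s : Equiv.Perm ι, F0 ∘ s = F := by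
  have e : ∀ j, Nonempty ({i // F i = j} ≃ {i // F0 i = j}) := fun j => by
    rw [← Fintype.card_eq, ← cont_apply, ← cont_apply, h]
  refine ⟨Equiv.ofFiberEquiv fun j => (e j).some, ?_⟩
  funext i
  exact Equiv.ofFiberEquiv_map _ i

theorem cont_comp (F : ι → J) (s : Equiv.Perm ι) : cont (F ∘ s) = cont F := by
  unfold cont
  exact Equiv.sum_comp s (fun i => Finsupp.single (F i) 1)

/-- By orbit-stabilizer, the stabilizers of the functions with given content `γ` have total size
`n!`. -/
theorem count_one (γ : J →₀ ℕ) (h : ∑ j, γ j = Fintype.card ι) :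
    ∑ F : ι → J with cont F = γ, ∑ g : Equiv.Perm ι, (if F ∘ g = F then 1 else 0 : ℤ) =
      (Fintype.card ι).factorial := by
  obtain ⟨F0, hF0⟩ := exists_cont γ h
  have h1 : ∀ F ∈ Finset.univ.filter (fun F : ι → J => cont F = γ),
      ∑ g : Equiv.Perm ι, (if F ∘ g = F then 1 else 0 : ℤ) =
      ∑ s : Equiv.Perm ι, (if F0 ∘ s = F then 1 else 0 : ℤ) := by
    intro F hF
    obtain ⟨s0, hs0⟩ := exists_perm_of_cont (((Finset.mem_filter.mp hF).2).trans hF0.symm)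
    refine Fintype.sum_equiv (Equiv.mulLeft s0) _ _ fun g => ?_
    simp only [Equiv.coe_mulLeft, Equiv.Perm.coe_mul, ← Function.comp_assoc, hs0]
  rw [Finset.sum_congr rfl h1, Finset.sum_comm]
  rw [Finset.sum_congr rfl (g := fun _ => (1 : ℤ))]
  · simp [Fintype.card_perm]
  · intro s _
    rw [Finset.sum_ite_eq, if_pos]
    simp [cont_comp, hF0]

/-- The signs of the stabilizer of a function cancel unless the function is injective, since
otherwise the stabilizer contains a transposition. -/
theorem stab_sgn (F : ι → J) :
    ∑ g : Equiv.Perm ι, (if F ∘ g = F then (Equiv.Perm.sign g : ℤ) else 0) =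
      if Function.Injective F then 1 else 0 := by
  split_ifs with hF
  · rw [Finset.sum_eq_single 1]
    · simp
    · intro g _ hg
      rw [if_neg]
      intro h
      apply hg
      ext i
      exact hF (congrFun h i)
    · simp
  · unfold Function.Injective at hF
    push Not at hF
    obtain ⟨a, b, hab, hne⟩ := hF
    set S := ∑ g : Equiv.Perm ι, (if F ∘ g = F then (Equiv.Perm.sign g : ℤ) else 0) with hS
    have hsw : F ∘ Equiv.swap a b = F := by
      funext i
      rw [Function.comp_apply, Equiv.swap_apply_def]
      split_ifs with h1 h2
      · rw [h1, hab]
      · rw [h2, hab]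
      · rfl
    have : S = -S := by
      conv_lhs => rw [hS]
      rw [hS, ← Finset.sum_neg_distrib]
      refine Fintype.sum_equiv (Equiv.mulLeft (Equiv.swap a b)) _ _ fun g => ?_
      simp only [Equiv.coe_mulLeft, Equiv.Perm.coe_mul, ← Function.comp_assoc, hsw, map_mul,
        Equiv.Perm.sign_swap hne]
      split_ifs <;> simp
    omega

/-- The signed variant of `count_one`: only contents without repetition contribute. -/
theorem count_sgn (γ : J →₀ ℕ) (h : ∑ j, γ j = Fintype.card ι) :
    ∑ F : ι → J with cont F = γ,
      ∑ g : Equiv.Perm ι, (if F ∘ g = F then (Equiv.Perm.sign g : ℤ) else 0) =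
      (Fintype.card ι).factorial * ∏ j, (if γ j ≤ 1 then 1 else 0) := by
  have hinj : ∀ F : ι → J, cont F = γ → (Function.Injective F ↔ ∀ j, γ j ≤ 1) := by
    rintro F rfl
    constructor
    · intro hF j
      rw [cont_apply, Fintype.card_le_one_iff]
      rintro ⟨a, ha⟩ ⟨b, hb⟩
      exact Subtype.ext (hF (ha.trans hb.symm))
    · intro hc a b hab
      have := hc (F b)
      rw [cont_apply, Fintype.card_le_one_iff] at this
      exact congrArg Subtype.val (this ⟨a, hab⟩ ⟨b, rfl⟩)
  by_cases hγ : ∀ j, γ j ≤ 1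
  · rw [Finset.prod_eq_one fun j _ => if_pos (hγ j), mul_one, ← count_one γ h]
    refine Finset.sum_congr rfl fun F hF => ?_
    have hFi := (hinj F (Finset.mem_filter.mp hF).2).mpr hγ
    refine Finset.sum_congr rfl fun g _ => ?_
    split_ifs with hg
    · have : g = 1 := by ext i; exact hFi (congrFun hg i)
      simp [this]
    · rfl
  · have : ∏ j, (if γ j ≤ 1 then 1 else 0 : ℤ) = 0 := by
      push Not at hγ
      obtain ⟨j, hj⟩ := hγ
      exact Finset.prod_eq_zero (Finset.mem_univ j) (if_neg (not_le.mpr hj))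
    rw [this, mul_zero]
    refine Finset.sum_eq_zero fun F hF => ?_
    rw [stab_sgn, if_neg]
    rwa [hinj F (Finset.mem_filter.mp hF).2]

theorem prod_eq_cont {R : Type*} [CommRing R] (y : J → R) (F : ι → J) :
    ∏ i, y (F i) = ∏ j, y j ^ cont F j := by
  rw [← Finset.prod_fiberwise_of_maps_to (s := Finset.univ) (t := Finset.univ) (g := F)
    (fun _ _ => Finset.mem_univ _)]
  refine Finset.prod_congr rfl fun j _ => ?_
  rw [Finset.prod_congr rfl (g := fun _ => y j) (fun i hi => by rw [(Finset.mem_filter.mp hi).2]),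
    Finset.prod_const, cont_apply, Fintype.card_subtype]

/-- Packages `count_one` and `count_sgn` as a generating function identity, with the weights
`w = 1` and `w = 1_{s ≤ 1}` giving complete and elementary symmetric functions respectively. -/
theorem sum_stab {R : Type*} [CommRing R] (y : J → R) (ε : Equiv.Perm ι → ℤ) (w : ℕ → ℤ)
    (hw : ∀ γ : J →₀ ℕ, ∑ j, γ j = Fintype.card ι →
      ∑ F : ι → J with cont F = γ, ∑ g : Equiv.Perm ι, (if F ∘ g = F then ε g else 0) =
      (Fintype.card ι).factorial * ∏ j, w (γ j)) :
    ∑ F : ι → J, ((∑ g : Equiv.Perm ι, (if F ∘ g = F then ε g else 0) : ℤ) : R) * ∏ i, y (F i) =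
      (Fintype.card ι).factorial *
        PowerSeries.coeff (Fintype.card ι) (∏ j, PowerSeries.mk fun s => (w s : R) * y j ^ s) := by
  rw [PowerSeries.coeff_prod, Finset.mul_sum,
    ← Finset.sum_fiberwise_of_maps_to (s := Finset.univ)
      (t := Finset.finsuppAntidiag Finset.univ (Fintype.card ι)) (g := fun F : ι → J => cont F)]
  · refine Finset.sum_congr rfl fun γ hγ => ?_
    have hγ' : ∑ j, γ j = Fintype.card ι := (Finset.mem_finsuppAntidiag.mp hγ).1
    have h1 : ∀ F ∈ Finset.univ.filter (fun F : ι → J => cont F = γ),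
        ((∑ g : Equiv.Perm ι, (if F ∘ g = F then ε g else 0) : ℤ) : R) * ∏ i, y (F i) =
        ((∑ g : Equiv.Perm ι, (if F ∘ g = F then ε g else 0) : ℤ) : R) * ∏ j, y j ^ γ j := by
      intro F hF
      rw [prod_eq_cont, (Finset.mem_filter.mp hF).2]
    rw [Finset.sum_congr rfl h1, ← Finset.sum_mul, ← Int.cast_sum, hw γ hγ']
    simp [Finset.prod_mul_distrib, mul_assoc]
  · intro F _
    rw [Finset.mem_finsuppAntidiag]
    exact ⟨cont_sum F, Finset.subset_univ _⟩

end Counting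

/-! ### Power sums attached to permutations, and the characteristic map -/

section Frobenius

open MvPolynomial

variable {ι : Type} [Fintype ι] [DecidableEq ι] {N : ℕ}

/-- Polynomials in `N` variables. -/
abbrev Pol (N : ℕ) := MvPolynomial (Fin N) ℂ

/-- The alternant `det (x_i ^ α_j)` in the polynomial ring. -/
def alt (α : Fin N → ℕ) : Pol N := altR X α

/-- An exponent vector as a finitely supported function. -/
def fs (α : Fin N → ℕ) : Fin N →₀ ℕ := Finsupp.equivFunOnFinite.symm α

@[simp] theorem fs_apply (α : Fin N → ℕ) (i : Fin N) : fs α i = α i := rfl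

@[simp] theorem fs_coe (β : Fin N →₀ ℕ) : fs (β : Fin N → ℕ) = β := by ext; rfl

theorem fs_inj {α β : Fin N → ℕ} : fs α = fs β ↔ α = β :=
  Finsupp.equivFunOnFinite.symm.injective.eq_iff

/-- The power sum symmetric polynomial attached to the cycle type of `g`, written as the sum of the
monomials of all functions which are constant on the cycles of `g`. -/
def pg (N : ℕ) (g : Equiv.Perm ι) : Pol N :=
  ∑ f : ι → Fin N, if f ∘ g = f then ∏ i, X (f i) else 0

theorem prod_X_eq (f : ι → Fin N) : ∏ i, (X (f i) : Pol N) = monomial (cont f) 1 := by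
  rw [prod_eq_cont, monomial_eq, C_1, one_mul, Finsupp.prod_fintype]
  simp

theorem coeff_pg (g : Equiv.Perm ι) (β : Fin N →₀ ℕ) :
    coeff β (pg N g) = ∑ f : ι → Fin N, if f ∘ g = f ∧ cont f = β then 1 else 0 := by
  rw [pg, coeff_sum]
  refine Finset.sum_congr rfl fun f _ => ?_
  by_cases h : f ∘ g = f
  · simp [h, prod_X_eq, coeff_monomial]
  · simp [h]

theorem pg_inv (g : Equiv.Perm ι) : pg N g⁻¹ = pg N g := by
  unfold pg
  refine Finset.sum_congr rfl fun f _ => ?_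
  have : f ∘ ⇑g⁻¹ = f ↔ f ∘ g = f := by
    constructor
    · intro h; nth_rewrite 1 [← h]; funext i; simp
    · intro h; nth_rewrite 1 [← h]; funext i; simp
  simp only [this]

theorem pg_conj (g s : Equiv.Perm ι) : pg N (s * g * s⁻¹) = pg N g := by
  unfold pg
  refine Fintype.sum_equiv (Equiv.arrowCongr s⁻¹ (Equiv.refl _)) _ _ fun f => ?_
  have h1 : (f ∘ (s * g * s⁻¹) = f) ↔ ((f ∘ s) ∘ g = f ∘ s) := by
    constructor
    · intro h
      funext i
      have := congrFun h (s i)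
      simpa using this
    · intro h
      funext i
      have := congrFun h (s⁻¹ i)
      simpa using this
  have h2 : (Equiv.arrowCongr s⁻¹ (Equiv.refl (Fin N))) f = f ∘ s := by
    funext i; rfl
  rw [h2]
  simp only [h1]
  have h3 : ∏ i, (X (f i) : Pol N) = ∏ i, X ((f ∘ s) i) :=
    (Equiv.prod_comp s (fun i => (X (f i) : Pol N))).symm
  rw [h3]

/-- The permutation character on functions of content `β`. -/
def piChar (β : Fin N →₀ ℕ) : Equiv.Perm ι → ℂ := fun g => coeff β (pg N g)

theorem piChar_mem_virt (β : Fin N →₀ ℕ) : (piChar β : Equiv.Perm ι → ℂ) ∈ virt (Equiv.Perm ι) := by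
  let F : Equiv.Perm ι →* Equiv.Perm {f : ι → Fin N // cont f = β} :=
    { toFun := fun g =>
        { toFun := fun f => ⟨f.1 ∘ ⇑g⁻¹, by rw [cont_comp, f.2]⟩
          invFun := fun f => ⟨f.1 ∘ g, by rw [cont_comp, f.2]⟩
          left_inv := fun f => Subtype.ext (by funext i; simp)
          right_inv := fun f => Subtype.ext (by funext i; simp) }
      map_one' := by ext f; rfl
      map_mul' := fun a b => by ext f; simp [Function.comp_assoc] }
  have h := perm_char_mem_virt F
  convert h using 1
  funext g
  have h1 : piChar β g = coeff β (pg N g⁻¹) := by rw [pg_inv]; rfl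
  rw [h1, coeff_pg]
  rw [Finset.card_filter]
  push_cast
  rw [← Finset.sum_filter_add_sum_filter_not Finset.univ (fun f : ι → Fin N => cont f = β)]
  rw [Finset.sum_eq_zero (s := Finset.univ.filter fun f : ι → Fin N => ¬ cont f = β), add_zero,
    Finset.sum_subtype (p := fun f : ι → Fin N => cont f = β)]
  · refine Finset.sum_congr rfl fun f _ => ?_
    have : (F g f = f) ↔ (f.1 ∘ ⇑g⁻¹ = f.1) := by rw [Subtype.ext_iff]; rfl
    simp only [this, f.2, and_true]
  · simp
  · intro f hf
    rw [if_neg]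
    exact fun h => (Finset.mem_filter.mp hf).2 h.2

/-- The characteristic map `φ ↦ |ι|!⁻¹ ∑ φ(g) p_g`. -/
def phi (N : ℕ) : (Equiv.Perm ι → ℂ) →ₗ[ℂ] Pol N :=
  (((Fintype.card ι).factorial : ℂ)⁻¹) •
    ∑ g : Equiv.Perm ι, (LinearMap.proj g : (Equiv.Perm ι → ℂ) →ₗ[ℂ] ℂ).smulRight (pg N g)

theorem phi_apply (φ : Equiv.Perm ι → ℂ) :
    phi N φ = ((Fintype.card ι).factorial : ℂ)⁻¹ • ∑ g : Equiv.Perm ι, φ g • pg N g := by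
  simp [phi, LinearMap.sum_apply]

/-- The characteristic of a Young permutation character, twisted by `ε`, is a product of complete
or elementary symmetric functions, depending on the weight `w` that `ε` produces. -/
theorem sum_piChar_pg (ε : Equiv.Perm ι → ℤ) (w : ℕ → ℤ)
    (hw : ∀ γ : Fin N × Fin N →₀ ℕ, ∑ j, γ j = Fintype.card ι →
      ∑ F : ι → Fin N × Fin N with cont F = γ,
        ∑ g : Equiv.Perm ι, (if F ∘ g = F then ε g else 0) =
      (Fintype.card ι).factorial * ∏ j, w (γ j)) (β : Fin N →₀ ℕ)
    (hβ : ∑ k, β k = Fintype.card ι) :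
    phi N (fun g => (ε g : ℂ) * piChar β g) =
      ∏ k, PowerSeries.coeff (β k) (∏ l, PowerSeries.mk fun s => (w s : Pol N) * X l ^ s) := by
  let u : ℕ → Pol N := fun r =>
    PowerSeries.coeff r (∏ l, PowerSeries.mk fun s => (w s : Pol N) * X l ^ s)
  let y : Fin N × Fin N → MvPolynomial (Fin N) (Pol N) := fun kl => X kl.1 * C (X kl.2)
  have h := sum_stab y ε w hw
  rw [Fintype.prod_prod_type] at h
  have hrow : ∀ k : Fin N, ∏ l : Fin N, (PowerSeries.mk fun s => (w s : MvPolynomial (Fin N) (Pol N)) *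
      y (k, l) ^ s) = PowerSeries.mk fun s => C (u s) * X k ^ s := by
    intro k
    ext1 r
    rw [PowerSeries.coeff_prod, PowerSeries.coeff_mk]
    simp only [u, PowerSeries.coeff_prod, PowerSeries.coeff_mk, map_sum, map_prod, map_mul,
      map_pow, map_intCast, Finset.sum_mul, y]
    refine Finset.sum_congr rfl fun l hl => ?_
    have hl' : ∑ j, l j = r := (Finset.mem_finsuppAntidiag.mp hl).1
    rw [← hl', ← Finset.prod_pow_eq_pow_sum, ← Finset.prod_mul_distrib]
    refine Finset.prod_congr rfl fun j _ => ?_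
    ring
  rw [Finset.prod_congr rfl fun k _ => hrow k, PowerSeries.coeff_prod] at h
  have h2 := congrArg (coeff β) h
  rw [Finset.mul_sum, coeff_sum, coeff_sum] at h2
  have hR : ∑ l ∈ Finset.finsuppAntidiag Finset.univ (Fintype.card ι),
      coeff β (((Fintype.card ι).factorial : MvPolynomial (Fin N) (Pol N)) * ∏ i : Fin N,
        PowerSeries.coeff (l i) (PowerSeries.mk fun s => C (u s) * X i ^ s)) =
      ((Fintype.card ι).factorial : Pol N) * ∏ k, u (β k) := by
    have hm : ∀ l : Fin N →₀ ℕ, ∏ i : Fin N,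
        PowerSeries.coeff (l i) (PowerSeries.mk fun s => C (u s) * X i ^ s) =
        monomial l (∏ i, u (l i)) := by
      intro l
      simp only [PowerSeries.coeff_mk]
      rw [Finset.prod_mul_distrib, monomial_eq, Finsupp.prod_fintype _ _ (by simp), map_prod]
    simp only [hm]
    rw [Finset.sum_eq_single β]
    · rw [← map_natCast C, coeff_C_mul, coeff_monomial, if_pos rfl]
    · intro l _ hl
      rw [← map_natCast C, coeff_C_mul, coeff_monomial, if_neg hl, mul_zero]
    · intro hn
      exact absurd (Finset.mem_finsuppAntidiag.mpr ⟨hβ, Finset.subset_univ _⟩) hn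
  rw [hR] at h2
  have hL : ∑ F : ι → Fin N × Fin N, coeff β
      (((∑ g : Equiv.Perm ι, (if F ∘ g = F then ε g else 0) : ℤ) : MvPolynomial (Fin N) (Pol N)) *
        ∏ i, y (F i)) = ∑ g : Equiv.Perm ι, ((ε g : ℂ) * piChar β g) • pg N g := by
    have hF : ∀ F : ι → Fin N × Fin N, coeff β
      (((∑ g : Equiv.Perm ι, (if F ∘ g = F then ε g else 0) : ℤ) : MvPolynomial (Fin N) (Pol N)) *
        ∏ i, y (F i)) = ∑ g : Equiv.Perm ι, (ε g : Pol N) *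
          ((if (fun i => (F i).1) ∘ g = (fun i => (F i).1) ∧ cont (fun i => (F i).1) = β
            then 1 else 0) *
          (if (fun i => (F i).2) ∘ g = (fun i => (F i).2) then ∏ i, X (F i).2 else 0)) := by
      intro F
      have hy : ∏ i, y (F i) = monomial (cont fun i => (F i).1) (∏ i, X (F i).2) := by
        simp only [y]
        have : ∏ i, (X (F i).1 : MvPolynomial (Fin N) (Pol N)) =
            monomial (cont fun i => (F i).1) 1 := by
          rw [prod_eq_cont (F := fun i => (F i).1), monomial_eq, C_1, one_mul,
            Finsupp.prod_fintype]
          simp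
        rw [Finset.prod_mul_distrib, this, ← map_prod, mul_comm, C_mul_monomial, mul_one]
      rw [hy, ← map_intCast (C : Pol N →+* MvPolynomial (Fin N) (Pol N)), coeff_C_mul, coeff_monomial]
      push_cast
      rw [Finset.sum_mul]
      refine Finset.sum_congr rfl fun g _ => ?_
      have hFg : F ∘ g = F ↔ (fun i => (F i).1) ∘ g = (fun i => (F i).1) ∧
          (fun i => (F i).2) ∘ g = (fun i => (F i).2) := by
        simp only [funext_iff, Function.comp_apply, Prod.ext_iff]
        exact forall_and
      simp only [hFg]
      by_cases h1 : (fun i => (F i).1) ∘ g = (fun i => (F i).1) <;>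
        by_cases h2 : (fun i => (F i).2) ∘ g = (fun i => (F i).2) <;>
        by_cases h3 : cont (fun i => (F i).1) = β <;> simp [h1, h2, h3]
    simp only [hF]
    rw [Finset.sum_comm]
    refine Finset.sum_congr rfl fun g _ => ?_
    rw [← Finset.mul_sum, mul_smul]
    have e1 : (ε g : Pol N) = C (ε g : ℂ) := (map_intCast (C : ℂ →+* Pol N) _).symm
    rw [e1, ← smul_eq_C_mul]
    congr 1
    rw [piChar, coeff_pg, pg, Finset.sum_smul_sum]
    rw [← Finset.sum_product']
    refine Fintype.sum_equiv (Equiv.arrowProdEquivProdArrow ι _ _) _ _ fun F => ?_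
    change _ = (if (fun i => (F i).1) ∘ g = (fun i => (F i).1) ∧ cont (fun i => (F i).1) = β
      then (1 : ℂ) else 0) •
          (if (fun i => (F i).2) ∘ g = (fun i => (F i).2) then ∏ i, (X (F i).2 : Pol N) else 0)
    split_ifs <;> simp
  rw [hL] at h2
  rw [phi_apply, h2]
  have e2 : ((Fintype.card ι).factorial : Pol N) = C ((Fintype.card ι).factorial : ℂ) :=
    (map_natCast C _).symm
  rw [e2, ← smul_eq_C_mul, smul_smul, inv_mul_cancel₀, one_smul]
  exact_mod_cast Nat.factorial_ne_zero _

end Frobenius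

/-! ### The characters of symmetric groups attached to exponent vectors -/

section SymChar

open MvPolynomial

variable {ι : Type} [Fintype ι] [DecidableEq ι] {N : ℕ}

theorem alt_eq (α : Fin N → ℕ) :
    alt α = ∑ σ : Equiv.Perm (Fin N), monomial (fs (α ∘ σ)) ((Equiv.Perm.sign σ : ℤ) : ℂ) := by
  rw [alt, altR, ← Matrix.det_transpose, Matrix.det_apply']
  refine Finset.sum_congr rfl fun σ _ => ?_
  have h1 : monomial (fs (α ∘ σ)) ((Equiv.Perm.sign σ : ℤ) : ℂ) =
      (((Equiv.Perm.sign σ : ℤ)) : Pol N) * ∏ i, X i ^ α (σ i) := by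
    rw [monomial_eq, Finsupp.prod_fintype _ _ (by simp)]
    simp
  rw [h1]
  rfl

theorem alt_comp (α : Fin N → ℕ) (σ : Equiv.Perm (Fin N)) :
    alt (α ∘ σ) = ((Equiv.Perm.sign σ : ℤ) : ℂ) • alt α := by
  rw [alt, altR_perm, smul_eq_C_mul]
  simp [alt]

theorem alt_eq_zero {α : Fin N → ℕ} (h : ¬ Function.Injective α) : alt α = 0 := altR_eq_zero _ _ h

theorem coeff_alt (α β : Fin N → ℕ) : coeff (fs β) (alt α) =
    ∑ σ : Equiv.Perm (Fin N), if α ∘ σ = β then ((Equiv.Perm.sign σ : ℤ) : ℂ) else 0 := by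
  simp only [alt_eq, coeff_sum, coeff_monomial, fs_inj]

theorem coeff_alt_self {α : Fin N → ℕ} (h : Function.Injective α) : coeff (fs α) (alt α) = 1 := by
  rw [coeff_alt, Finset.sum_eq_single 1]
  · simp
  · intro σ _ hσ
    rw [if_neg]
    intro h'
    apply hσ
    ext i
    exact congrArg _ (h (congrFun h' i))
  · simp

theorem alt_ne_zero {α : Fin N → ℕ} (h : Function.Injective α) : alt α ≠ 0 := by
  intro h0
  have := coeff_alt_self h
  rw [h0] at this
  simp at this

theorem delta_injective : Function.Injective (delta N) := Fin.val_injective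

theorem coeff_alt_mul (α : Fin N → ℕ) (β : Fin N →₀ ℕ) (F : Pol N) : coeff β (alt α * F) =
    ∑ σ : Equiv.Perm (Fin N), ((Equiv.Perm.sign σ : ℤ) : ℂ) *
      if fs (α ∘ σ) ≤ β then coeff (β - fs (α ∘ σ)) F else 0 := by
  rw [alt_eq, Finset.sum_mul, coeff_sum]
  refine Finset.sum_congr rfl fun σ _ => ?_
  rw [coeff_monomial_mul', mul_ite, mul_zero]

/-- The class function `g ↦ [x^α] a_δ p_g` on a symmetric group. -/
def chi (α : Fin N → ℕ) : Equiv.Perm ι → ℂ := fun g => coeff (fs α) (alt (delta N) * pg N g)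

theorem chi_eq (α : Fin N → ℕ) : (chi α : Equiv.Perm ι → ℂ) =
    ∑ σ : Equiv.Perm (Fin N), (Equiv.Perm.sign σ : ℤ) •
      (if fs (delta N ∘ σ) ≤ fs α then piChar (fs α - fs (delta N ∘ σ)) else 0) := by
  funext g
  rw [chi, coeff_alt_mul, Finset.sum_apply]
  refine Finset.sum_congr rfl fun σ _ => ?_
  rw [Pi.smul_apply, zsmul_eq_mul]
  split_ifs <;> rfl

theorem chi_mem_virt (α : Fin N → ℕ) : (chi α : Equiv.Perm ι → ℂ) ∈ virt (Equiv.Perm ι) := by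
  rw [chi_eq]
  refine Submodule.sum_mem _ fun σ _ => Submodule.smul_mem _ _ ?_
  split_ifs
  · exact piChar_mem_virt _
  · exact zero_mem _

/-- The degree of the alternants attached to the symmetric group of `m`
letters. -/
def dd (N m : ℕ) : ℕ := m + ∑ i, delta N i

/-- If the characteristics of the twisted permutation characters are products of the `u k`, those
of the twisted `chi α` are the Jacobi–Trudi determinants in the `u k`. -/
theorem phi_twist_chi (ε : Equiv.Perm ι → ℤ) (u : ℕ → Pol N)
    (hu : ∀ β : Fin N →₀ ℕ, ∑ k, β k = Fintype.card ι →
      phi N (fun g : Equiv.Perm ι => (ε g : ℂ) * piChar β g) = ∏ k, u (β k))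
    (α : Fin N → ℕ) (hα : ∑ k, α k = dd N (Fintype.card ι)) :
    phi N (fun g : Equiv.Perm ι => (ε g : ℂ) * chi α g) = (jtMat u α).det := by
  have h1 : (fun g : Equiv.Perm ι => (ε g : ℂ) * chi α g) = ∑ σ : Equiv.Perm (Fin N),
      ((Equiv.Perm.sign σ : ℤ) : ℂ) • (if fs (delta N ∘ σ) ≤ fs α then
        (fun g : Equiv.Perm ι => (ε g : ℂ) * piChar (fs α - fs (delta N ∘ σ)) g) else 0) := by
    rw [chi_eq]
    funext g
    simp only [Finset.sum_apply, Finset.mul_sum]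
    refine Finset.sum_congr rfl fun σ _ => ?_
    rw [Pi.smul_apply, Pi.smul_apply, zsmul_eq_mul, smul_eq_mul]
    split_ifs
    · ring
    · simp
  rw [h1, map_sum, Matrix.det_apply']
  refine Finset.sum_congr rfl fun σ _ => ?_
  rw [map_smul, smul_eq_C_mul, map_intCast]
  congr 1
  simp only [jtMat, Matrix.of_apply]
  by_cases hle : fs (delta N ∘ σ) ≤ fs α
  · have hle' : ∀ j, (σ j : ℕ) ≤ α j := fun j => hle j
    rw [if_pos hle, hu]
    · refine Finset.prod_congr rfl fun j _ => ?_
      rw [if_pos (hle' j)]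
      rfl
    · have h2 : ∑ k, (fs α - fs (delta N ∘ σ)) k + ∑ k, delta N k = ∑ k, α k := by
        rw [← Equiv.sum_comp σ (delta N), ← Finset.sum_add_distrib]
        refine Finset.sum_congr rfl fun k _ => ?_
        have := hle' k
        change α k - σ k + σ k = α k
        omega
      rw [hα, dd] at h2
      omega
  · rw [if_neg hle, map_zero]
    have : ∃ j, ¬ (σ j : ℕ) ≤ α j := by
      by_contra hc
      push Not at hc
      exact hle fun j => hc j
    obtain ⟨j, hj⟩ := this
    exact (Finset.prod_eq_zero (Finset.mem_univ j) (if_neg hj)).symm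

/-- The function `chi α` corresponds to the alternant `a_α`. -/
theorem alt_mul_phi_chi (α : Fin N → ℕ) (hα : ∑ k, α k = dd N (Fintype.card ι)) :
    alt (delta N) * phi N (chi α : Equiv.Perm ι → ℂ) = alt α := by
  have h := phi_twist_chi (ι := ι) (fun _ => 1) (hh (X : Fin N → Pol N)) (fun β hβ => by
    rw [sum_piChar_pg (fun _ => 1) (fun _ => 1) (fun γ hγ => by
      rw [count_one γ hγ]; simp) β hβ]
    simp [hh]) α hα
  simp only [Int.cast_one, one_mul] at h
  rw [h]
  exact jacobiTrudi_h X α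

/-- The sign twist of `chi α` corresponds, up to sign, to the alternant of the conjugate
exponents. -/
theorem alt_mul_phi_sgn_chi (α α' : Fin N → ℕ) (hα : ∑ k, α k = dd N (Fintype.card ι))
    (e : Fin N ⊕ Fin N ≃ Fin (N + N)) (h1 : ∀ j, (e (Sum.inl j) : ℕ) = α j)
    (h2 : ∀ j, (e (Sum.inr j) : ℕ) + α' j = 2 * N - 1) :
    ∃ s : ℤˣ, alt (delta N) * phi N (fun g : Equiv.Perm ι =>
      ((Equiv.Perm.sign g : ℤ) : ℂ) * chi α g) = ((s : ℤ) : Pol N) * alt α' := by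
  have h := phi_twist_chi (ι := ι) (fun g => Equiv.Perm.sign g) (ee (X : Fin N → Pol N))
    (fun β hβ => by
    rw [sum_piChar_pg (fun g => Equiv.Perm.sign g) (fun s => if s ≤ 1 then 1 else 0) count_sgn β hβ]
    refine Finset.prod_congr rfl fun k _ => ?_
    rw [ee]
    congr 1
    refine Finset.prod_congr rfl fun l _ => ?_
    ext1 r
    rw [PowerSeries.coeff_mk]
    match r with
    | 0 => simp
    | 1 => simp [PowerSeries.coeff_one]
    | (n + 2) =>
      rw [map_add, PowerSeries.coeff_C_mul, PowerSeries.coeff_X, PowerSeries.coeff_one]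
      simp) α hα
  rw [h]
  exact jacobiTrudi_e X α α' e h1 h2

theorem pair_chi (φ : Equiv.Perm ι → ℂ) (α : Fin N → ℕ) :
    pair φ (chi α) = coeff (fs α) (alt (delta N) * phi N φ) := by
  rw [phi_apply, mul_smul_comm, coeff_smul, Finset.mul_sum, coeff_sum, pair]
  rw [Nat.card_eq_fintype_card, Fintype.card_perm, smul_eq_mul]
  congr 1
  refine Finset.sum_congr rfl fun g _ => ?_
  rw [mul_smul_comm, coeff_smul, smul_eq_mul, chi, pg_inv]

theorem pair_chi_chi (α β : Fin N → ℕ) (hα : ∑ k, α k = dd N (Fintype.card ι)) :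
    pair (chi α : Equiv.Perm ι → ℂ) (chi β) = coeff (fs β) (alt α) := by
  rw [pair_chi, alt_mul_phi_chi α hα]

/-- The virtual character `chi α` has norm one, so it is irreducible up to sign. -/
theorem chi_irr (α : Fin N → ℕ) (hinj : Function.Injective α)
    (hα : ∑ k, α k = dd N (Fintype.card ι)) :
    (chi α : Equiv.Perm ι → ℂ) ∈ IrrChar (Equiv.Perm ι) ∨
      -(chi α : Equiv.Perm ι → ℂ) ∈ IrrChar (Equiv.Perm ι) := by
  apply virt_norm_one (chi_mem_virt α)
  rw [pair_chi_chi α α hα, coeff_alt_self hinj]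

end SymChar

/-! ### Multiplicativity of the power sums -/

section PowerSums

open MvPolynomial

variable {ι κ : Type} [Fintype ι] [DecidableEq ι] [Fintype κ] [DecidableEq κ] {N : ℕ}

theorem invariant_sameCycle {X Y : Type} {f : X → Y} {g : Equiv.Perm X} (h : f ∘ g = f) {x y : X}
    (hxy : g.SameCycle x y) : f x = f y := by
  obtain ⟨i, rfl⟩ := hxy
  let H : Subgroup (Equiv.Perm X) :=
    { carrier := {s | f ∘ s = f}
      one_mem' := rfl
      mul_mem' := fun {a b} ha hb => by
        have ha' : f ∘ a = f := ha
        have hb' : f ∘ b = f := hb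
        change f ∘ (a ∘ b) = f
        rw [← Function.comp_assoc, ha', hb']
      inv_mem' := fun {a} ha => by
        have ha' : f ∘ a = f := ha
        change f ∘ ⇑a⁻¹ = f
        nth_rewrite 1 [← ha']
        funext x
        simp }
  have : g ^ i ∈ H := zpow_mem (show g ∈ H from h) i
  exact (congrFun (show f ∘ ⇑(g ^ i) = f from this) x).symm

theorem pg_transitive {g : Equiv.Perm ι} (x0 : ι) (h : ∀ x, g.SameCycle x0 x) :
    pg N g = psum (Fin N) ℂ (Fintype.card ι) := by
  rw [pg, psum, ← Finset.sum_filter]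
  symm
  refine Finset.sum_bij (fun k _ => fun _ => k) ?_ ?_ ?_ ?_
  · intro k _
    simp only [Finset.mem_filter, Finset.mem_univ, true_and]
    rfl
  · intro a _ b _ hab
    exact congrFun hab x0
  · intro f hf
    refine ⟨f x0, Finset.mem_univ _, ?_⟩
    funext x
    exact invariant_sameCycle (Finset.mem_filter.mp hf).2 (h x)
  · intro k _
    simp

theorem pg_permCongr (e : ι ≃ κ) (g : Equiv.Perm ι) : pg N (e.permCongr g) = pg N g := by
  unfold pg
  refine Fintype.sum_equiv (Equiv.arrowCongr e.symm (Equiv.refl _)) _ _ fun f => ?_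
  have h1 : (f ∘ (e.permCongr g) = f) ↔ ((f ∘ e) ∘ g = f ∘ e) := by
    constructor
    · intro h
      funext i
      have := congrFun h (e i)
      simpa using this
    · intro h
      funext i
      have := congrFun h (e.symm i)
      simpa using this
  have h2 : (Equiv.arrowCongr e.symm (Equiv.refl (Fin N))) f = f ∘ e := by
    funext i; rfl
  rw [h2]
  simp only [h1]
  have h3 : ∏ i, (X (f i) : Pol N) = ∏ i, X ((f ∘ e) i) :=
    (Equiv.prod_comp e (fun i => (X (f i) : Pol N))).symm
  rw [h3]

theorem pg_sumCongr (g : Equiv.Perm ι) (h : Equiv.Perm κ) :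
    pg N (Equiv.Perm.sumCongr g h) = pg N g * pg N h := by
  unfold pg
  rw [Finset.sum_mul_sum, ← Finset.sum_product']
  refine Fintype.sum_equiv (Equiv.sumArrowEquivProdArrow ι κ _) _ _ fun f => ?_
  have h1 : f ∘ (Equiv.Perm.sumCongr g h) = f ↔ (f ∘ Sum.inl) ∘ g = f ∘ Sum.inl ∧
      (f ∘ Sum.inr) ∘ h = f ∘ Sum.inr := by
    simp only [funext_iff, Sum.forall]
    rfl
  change _ = (if (f ∘ Sum.inl) ∘ g = f ∘ Sum.inl then ∏ i, (X ((f ∘ Sum.inl) i) : Pol N) else 0) *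
    (if (f ∘ Sum.inr) ∘ h = f ∘ Sum.inr then ∏ i, (X ((f ∘ Sum.inr) i) : Pol N) else 0)
  simp only [h1, Fintype.prod_sum_type]
  by_cases a : (f ∘ Sum.inl) ∘ g = f ∘ Sum.inl <;> by_cases b : (f ∘ Sum.inr) ∘ h = f ∘ Sum.inr <;>
    simp [a, b]

/-- A permutation decomposes along an invariant subset. -/
theorem perm_split {X : Type} (g : Equiv.Perm X) (q : X → Prop) (hq : ∀ x, q (g x) ↔ q x) :
    g = (Equiv.sumCompl q).permCongr (Equiv.Perm.sumCongr (g.subtypePerm hq)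
      (g.subtypePerm (p := fun x => ¬ q x) fun x => not_congr (hq x))) := by
  ext x
  by_cases hx : q x
  · simp [Equiv.permCongr_apply, Equiv.sumCompl_symm_apply_of_pos hx]
  · simp [Equiv.permCongr_apply, Equiv.sumCompl_symm_apply_of_neg hx]

/-- A permutation of order divisible by `p` has a cycle of length divisible by `p`. -/
theorem exists_sameCycle_card {p : ℕ} (hp : p.Prime) {g : Equiv.Perm ι} (h : p ∣ orderOf g) :
    ∃ x0, p ∣ Fintype.card {x // g.SameCycle x0 x} := by
  rw [← Equiv.Perm.lcm_cycleType] at h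
  have key : ∀ s : Multiset ℕ, p ∣ s.lcm → ∃ c ∈ s, p ∣ c := by
    intro s
    induction s using Multiset.induction with
    | empty => intro h; exact absurd (Nat.dvd_one.mp h) hp.one_lt.ne'
    | cons a s ih =>
      intro h
      rw [Multiset.lcm_cons] at h
      rcases (Nat.Prime.dvd_mul hp).mp (h.trans (Nat.lcm_dvd_mul a s.lcm)) with h | h
      · exact ⟨a, Multiset.mem_cons_self _ _, h⟩
      · obtain ⟨c, hc, hd⟩ := ih h
        exact ⟨c, Multiset.mem_cons_of_mem hc, hd⟩
  obtain ⟨c, hc, hd⟩ := key _ h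
  rw [Equiv.Perm.cycleType_def, Multiset.mem_map] at hc
  obtain ⟨τ, hτ, rfl⟩ := hc
  have hτ' : τ ∈ g.cycleFactorsFinset := hτ
  have hcyc := (Equiv.Perm.mem_cycleFactorsFinset_iff.mp hτ').1
  obtain ⟨x0, hx0⟩ := hcyc.nonempty_support
  refine ⟨x0, ?_⟩
  have hco := Equiv.Perm.cycle_is_cycleOf hx0 hτ'
  have hgx : g x0 ≠ x0 := by
    have := (Equiv.Perm.mem_cycleFactorsFinset_iff.mp hτ').2 x0 hx0
    rw [← this]
    exact Equiv.Perm.mem_support.mp hx0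
  have : Fintype.card {x // g.SameCycle x0 x} = τ.support.card := by
    rw [Fintype.card_subtype]
    congr 1
    ext x
    rw [hco, Equiv.Perm.mem_support_cycleOf_iff' hgx]
    simp
  rw [this]
  exact hd

/-- For a `p`-singular permutation, the power sum of a cycle of length divisible by `p` splits
off. -/
theorem pg_of_singular {p : ℕ} (hp : p.Prime) {g : Equiv.Perm ι} (h : p ∣ orderOf g) :
    ∃ (j : ℕ) (κ : Type) (_ : Fintype κ) (_ : DecidableEq κ) (g2 : Equiv.Perm κ), 0 < j ∧
      p * j + Fintype.card κ = Fintype.card ι ∧ pg N g = psum (Fin N) ℂ (p * j) * pg N g2 := by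
  obtain ⟨x0, j, hj⟩ := exists_sameCycle_card hp h
  let q : ι → Prop := fun x => g.SameCycle x0 x
  have hq : ∀ x, q (g x) ↔ q x := fun x => Equiv.Perm.sameCycle_apply_right
  have hpos : 0 < Fintype.card {x // q x} :=
    Fintype.card_pos_iff.mpr ⟨⟨x0, Equiv.Perm.SameCycle.refl g x0⟩⟩
  refine ⟨j, {x // ¬ q x}, inferInstance, inferInstance,
    g.subtypePerm (p := fun x => ¬ q x) fun x => not_congr (hq x), ?_, ?_, ?_⟩
  · rcases Nat.eq_zero_or_pos j with h0 | h0
    · rw [h0, mul_zero] at hj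
      exact absurd hj hpos.ne'
    · exact h0
  · rw [← hj, ← Fintype.card_sum, Fintype.card_congr (Equiv.sumCompl q)]
  · conv_lhs => rw [perm_split g q hq]
    rw [pg_permCongr, pg_sumCongr, pg_transitive (⟨x0, Equiv.Perm.SameCycle.refl g x0⟩ : {x // q x}),
      ← hj]
    rintro ⟨x, hx⟩
    rw [Equiv.Perm.sameCycle_subtypePerm]
    exact hx

/-- Conversely, multiplying by the power sum of degree `r` amounts to adding a cycle of
length `r`. -/
theorem exists_pg_mul {r m : ℕ} (hr : 0 < r) (hm : r + Fintype.card κ = m) (h : Equiv.Perm κ) :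
    ∃ g : Equiv.Perm (Fin m), r ∣ orderOf g ∧ pg N g = psum (Fin N) ℂ r * pg N h := by
  have hc : Fintype.card (Fin r ⊕ κ) = Fintype.card (Fin m) := by simp [hm]
  let e := Fintype.equivOfCardEq hc
  have : NeZero r := ⟨hr.ne'⟩
  have hrot : ∀ k : ℕ, ((finRotate r) ^ k) 0 = Fin.ofNat r k := by
    intro k
    obtain ⟨s, rfl⟩ : ∃ s, r = s + 1 := ⟨r - 1, by omega⟩
    induction k with
    | zero => rfl
    | succ k ih =>
      rw [pow_succ', Equiv.Perm.mul_apply, ih, finRotate_apply]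
      ext
      simp [Fin.val_add]
  refine ⟨e.permCongr (Equiv.Perm.sumCongr (finRotate r) h), ?_, ?_⟩
  · have h1 : orderOf (e.permCongr (Equiv.Perm.sumCongr (finRotate r) h)) =
        orderOf (Equiv.Perm.sumCongr (finRotate r) h) :=
      MulEquiv.orderOf_eq e.permCongrHom (Equiv.Perm.sumCongr (finRotate r) h)
    rw [h1]
    set k := orderOf (Equiv.Perm.sumCongr (finRotate r) h) with hk
    have h2 : (Equiv.Perm.sumCongr (finRotate r) h) ^ k = 1 := pow_orderOf_eq_one _
    have h3 : (Equiv.Perm.sumCongr (finRotate r) h) ^ k =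
        Equiv.Perm.sumCongr ((finRotate r) ^ k) (h ^ k) :=
      (map_pow (Equiv.Perm.sumCongrHom (Fin r) κ) (finRotate r, h) k).symm
    have h4 := congrFun (congrArg DFunLike.coe (h3.symm.trans h2)) (Sum.inl 0)
    simp only [Equiv.Perm.sumCongr_apply, Sum.map_inl, Equiv.Perm.coe_one, id, Sum.inl.injEq,
      hrot] at h4
    have h5 := congrArg Fin.val h4
    exact Nat.dvd_of_mod_eq_zero h5
  · rw [pg_permCongr, pg_sumCongr, pg_transitive (0 : Fin r), Fintype.card_fin]
    intro x
    refine ⟨(x : ℕ), ?_⟩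
    rw [zpow_natCast, hrot]
    ext
    simp [Nat.mod_eq_of_lt x.2]

end PowerSums

/-! ### Antisymmetric polynomials and the irreducible characters of symmetric groups -/

section Antisymmetric

open MvPolynomial

variable {ι κ : Type} [Fintype ι] [DecidableEq ι] [Fintype κ] [DecidableEq κ] {N : ℕ}

/-- Antisymmetric polynomials. -/
def IsAlt (F : Pol N) : Prop :=
  ∀ σ : Equiv.Perm (Fin N), rename σ F = ((Equiv.Perm.sign σ : ℤ) : ℂ) • F

theorem rename_pg (σ : Equiv.Perm (Fin N)) (g : Equiv.Perm ι) : rename σ (pg N g) = pg N g := by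
  unfold pg
  rw [map_sum]
  refine Fintype.sum_equiv (Equiv.arrowCongr (Equiv.refl _) σ) _ _ fun f => ?_
  have h2 : (Equiv.arrowCongr (Equiv.refl ι) σ) f = σ ∘ f := by funext i; rfl
  have h1 : f ∘ g = f ↔ (σ ∘ f) ∘ g = σ ∘ f := by
    rw [Function.comp_assoc]
    exact (σ.injective.comp_left.eq_iff).symm
  rw [h2]
  simp only [h1]
  split_ifs <;> simp

theorem rename_alt (σ : Equiv.Perm (Fin N)) (α : Fin N → ℕ) :
    rename σ (alt α) = ((Equiv.Perm.sign σ : ℤ) : ℂ) • alt α := by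
  rw [smul_eq_C_mul, map_intCast, alt, altR, ← Matrix.det_permute, AlgHom.map_det]
  congr 1
  ext i j : 2
  simp

theorem isAlt_mul_pg (g : Equiv.Perm ι) : IsAlt (alt (delta N) * pg N g) := by
  intro σ
  rw [map_mul, rename_pg, rename_alt, smul_mul_assoc]

theorem IsAlt.smul {F : Pol N} (h : IsAlt F) (c : ℂ) : IsAlt (c • F) := by
  intro σ
  rw [map_smul, h σ, smul_comm]

theorem IsAlt.sum {J : Type*} {s : Finset J} {F : J → Pol N} (h : ∀ i ∈ s, IsAlt (F i)) :
    IsAlt (∑ i ∈ s, F i) := by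
  intro σ
  rw [map_sum, Finset.smul_sum]
  exact Finset.sum_congr rfl fun i hi => h i hi σ

/-- An antisymmetric polynomial is a combination of alternants. -/
theorem IsAlt.expand {F : Pol N} (h : IsAlt F) :
    (N.factorial : ℂ) • F = ∑ β ∈ F.support, coeff β F • alt (β : Fin N → ℕ) := by
  have h1 : ∑ σ : Equiv.Perm (Fin N), ((Equiv.Perm.sign σ : ℤ) : ℂ) • rename σ F =
      (N.factorial : ℂ) • F := by
    have : ∀ σ : Equiv.Perm (Fin N), ((Equiv.Perm.sign σ : ℤ) : ℂ) • rename σ F = F := by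
      intro σ
      rw [h σ, smul_smul, ← Int.cast_mul, ← Units.val_mul, Int.units_mul_self]
      simp
    simp only [this, Finset.sum_const, Finset.card_univ, Fintype.card_perm, Fintype.card_fin]
    rw [Nat.cast_smul_eq_nsmul]
  rw [← h1]
  conv_lhs => rw [F.as_sum]
  simp only [map_sum, Finset.smul_sum]
  rw [Finset.sum_comm]
  refine Finset.sum_congr rfl fun β _ => ?_
  rw [alt_eq, Finset.smul_sum]
  refine Fintype.sum_equiv (Equiv.inv _) _ _ fun σ => ?_
  rw [rename_monomial, smul_monomial, smul_monomial]
  have h3 : Finsupp.mapDomain σ β = fs (β ∘ ⇑σ⁻¹) := by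
    ext i
    rw [← Equiv.apply_symm_apply σ i, Finsupp.mapDomain_apply σ.injective]
    simp
  rw [h3]
  simp only [Equiv.inv_apply, Equiv.Perm.sign_inv, smul_eq_mul]
  rw [mul_comm]

theorem alt_isHomogeneous (α : Fin N → ℕ) : (alt α).IsHomogeneous (∑ i, α i) := by
  rw [alt_eq]
  refine IsHomogeneous.sum _ _ _ fun σ _ => ?_
  apply isHomogeneous_monomial
  rw [Finsupp.degree_eq_sum]
  exact Equiv.sum_comp σ α

theorem pg_isHomogeneous (g : Equiv.Perm ι) : (pg N g).IsHomogeneous (Fintype.card ι) := by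
  refine IsHomogeneous.sum _ _ _ fun f _ => ?_
  split_ifs
  · rw [prod_X_eq]
    apply isHomogeneous_monomial
    rw [Finsupp.degree_eq_sum]
    exact cont_sum f
  · exact isHomogeneous_zero _ _ _

theorem altpg_isHomogeneous (g : Equiv.Perm ι) :
    (alt (delta N) * pg N g).IsHomogeneous (dd N (Fintype.card ι)) := by
  rw [dd, add_comm]
  exact (alt_isHomogeneous _).mul (pg_isHomogeneous g)

/-- The span of the alternants of degree `d`. -/
def AltSpan (N d : ℕ) : Submodule ℂ (Pol N) :=
  Submodule.span ℂ {F | ∃ β : Fin N → ℕ, ∑ i, β i = d ∧ F = alt β}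

theorem IsAlt.mem_span {F : Pol N} (h : IsAlt F) {d : ℕ} (hd : F.IsHomogeneous d) :
    F ∈ AltSpan N d := by
  have h1 : F = ((N.factorial : ℂ)⁻¹) • ∑ β ∈ F.support, coeff β F • alt (β : Fin N → ℕ) := by
    rw [← h.expand, smul_smul, inv_mul_cancel₀, one_smul]
    exact_mod_cast Nat.factorial_ne_zero _
  rw [h1]
  refine Submodule.smul_mem _ _ (Submodule.sum_mem _ fun β hβ => Submodule.smul_mem _ _
    (Submodule.subset_span ⟨β, ?_, rfl⟩))
  have := hd (mem_support_iff.mp hβ)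
  rw [Finsupp.weight_apply, Finsupp.sum_fintype _ _ (by simp)] at this
  simpa using this

theorem IsAlt.injective_of_coeff {F : Pol N} (h : IsAlt F) {α : Fin N → ℕ}
    (hα : coeff (fs α) F ≠ 0) : Function.Injective α := by
  by_contra hc
  have h1 := congrArg (coeff (fs α)) h.expand
  rw [coeff_smul, coeff_sum, Finset.sum_eq_zero] at h1
  · rw [smul_eq_zero] at h1
    rcases h1 with h1 | h1
    · exact Nat.factorial_ne_zero N (by exact_mod_cast h1)
    · exact hα h1
  · intro β _
    by_cases hβi : Function.Injective (β : Fin N → ℕ)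
    · rw [coeff_smul, coeff_alt, Finset.sum_eq_zero, smul_zero]
      intro σ _
      rw [if_neg]
      intro hβ
      exact hc (hβ ▸ hβi.comp σ.injective)
    · rw [alt_eq_zero hβi, smul_zero, coeff_zero]

theorem isAlt_phi (φ : Equiv.Perm ι → ℂ) : IsAlt (alt (delta N) * phi N φ) := by
  rw [phi_apply, mul_smul_comm, Finset.mul_sum]
  refine IsAlt.smul (IsAlt.sum fun g _ => ?_) _
  rw [mul_smul_comm]
  exact (isAlt_mul_pg g).smul _

theorem isHomogeneous_phi (φ : Equiv.Perm ι → ℂ) :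
    (alt (delta N) * phi N φ).IsHomogeneous (dd N (Fintype.card ι)) := by
  rw [phi_apply, mul_smul_comm, Finset.mul_sum]
  rw [smul_eq_C_mul]
  refine IsHomogeneous.C_mul (IsHomogeneous.sum _ _ _ fun g _ => ?_) _
  rw [mul_smul_comm, smul_eq_C_mul]
  exact (altpg_isHomogeneous g).C_mul _

/-- With at least as many variables as letters, the coefficient of a squarefree monomial in `p_g`
detects the identity. -/
theorem phi_ne_zero {ρ : Equiv.Perm ι → ℂ} (h1 : ρ 1 ≠ 0) (hN : Fintype.card ι ≤ N) :
    phi N ρ ≠ 0 := by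
  intro h0
  obtain ⟨f0⟩ : Nonempty (ι ↪ Fin N) := by
    rw [Function.Embedding.nonempty_iff_card_le, Fintype.card_fin]
    exact hN
  have h2 := congrArg (coeff (cont f0)) h0
  rw [phi_apply, coeff_smul, coeff_zero, smul_eq_zero, coeff_sum, Finset.sum_eq_single 1] at h2
  · rcases h2 with h2 | h2
    · rw [inv_eq_zero] at h2
      exact Nat.factorial_ne_zero _ (by exact_mod_cast h2)
    · rw [coeff_smul, smul_eq_zero] at h2
      rcases h2 with h2 | h2
      · exact h1 h2
      · rw [coeff_pg, Finset.sum_boole, Nat.cast_eq_zero, Finset.card_eq_zero] at h2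
        have : (f0 : ι → Fin N) ∈ Finset.univ.filter
            (fun f : ι → Fin N => f ∘ (1 : Equiv.Perm ι) = f ∧ cont f = cont f0) := by
          simp only [Finset.mem_filter, Finset.mem_univ, true_and, and_true]
          rfl
        rw [h2] at this
        simp at this
  · intro g _ hg
    rw [coeff_smul, coeff_pg, Finset.sum_eq_zero, smul_zero]
    intro f _
    rw [if_neg]
    rintro ⟨hfg, hfc⟩
    obtain ⟨s, hs⟩ := exists_perm_of_cont hfc
    have hfi : Function.Injective f := hs ▸ f0.injective.comp s.injective
    exact hg (by ext i; exact hfi (congrFun hfg i))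
  · simp

/-- Every irreducible character of a symmetric group on at most `N` letters is, up to sign, one
of the `chi α`. -/
theorem irr_eq_chi {ρ : Equiv.Perm ι → ℂ} (hρ : ρ ∈ IrrChar (Equiv.Perm ι))
    (hN : Fintype.card ι ≤ N) : ∃ α : Fin N → ℕ, Function.Injective α ∧
      ∑ k, α k = dd N (Fintype.card ι) ∧ (chi α = ρ ∨ chi α = -ρ) := by
  have h1 : alt (delta N) * phi N ρ ≠ 0 :=
    mul_ne_zero (alt_ne_zero delta_injective) (phi_ne_zero (irr_one_ne_zero hρ) hN)
  obtain ⟨β, hβ⟩ := exists_coeff_ne_zero h1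
  have hβ' : coeff (fs (β : Fin N → ℕ)) (alt (delta N) * phi N ρ) ≠ 0 := by rwa [fs_coe]
  have hinj := (isAlt_phi ρ).injective_of_coeff hβ'
  have hsum : ∑ k, β k = dd N (Fintype.card ι) := by
    have := isHomogeneous_phi ρ hβ
    rw [Finsupp.weight_apply, Finsupp.sum_fintype _ _ (by simp)] at this
    simpa using this
  refine ⟨β, hinj, hsum, ?_⟩
  rw [← pair_chi] at hβ'
  rcases chi_irr (ι := ι) β hinj hsum with h | h
  · rw [pair_irr hρ h] at hβ'
    left
    by_contra hc
    exact hβ' (if_neg fun h' => hc h'.symm)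
  · right
    rw [← neg_neg (chi (β : Fin N → ℕ) : Equiv.Perm ι → ℂ), pair_neg_right, pair_irr hρ h] at hβ'
    by_contra hc
    refine hβ' (neg_eq_zero.mpr (if_neg fun h' => hc ?_))
    rw [h', neg_neg]

/-- The characteristic map is injective on class functions. -/
theorem cf_ext_phi {φ ψ : Equiv.Perm ι → ℂ} (hφ : IsCF φ) (hψ : IsCF ψ)
    (hN : Fintype.card ι ≤ N) (h : alt (delta N) * phi N φ = alt (delta N) * phi N ψ) :
    φ = ψ := by
  refine cf_ext hφ hψ fun ρ hρ => ?_
  obtain ⟨α, -, -, h1 | h1⟩ := irr_eq_chi hρ hN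
  · rw [← h1, pair_chi, pair_chi, h]
  · rw [← neg_neg ρ, ← h1, pair_neg_right, pair_neg_right, pair_chi, pair_chi, h]

/-! ### The polynomials attached to class functions supported on singular elements -/

/-- The span of the products `p_{pj} a_β` in degree `d`, with `j > 0`. -/
def KK (p N d : ℕ) : Submodule ℂ (Pol N) :=
  Submodule.span ℂ {F | ∃ (j : ℕ) (β : Fin N → ℕ), 0 < j ∧ ∑ i, β i + p * j = d ∧
    F = psum (Fin N) ℂ (p * j) * alt β}

theorem psum_mul_mem_KK {p d d' j : ℕ} (hj : 0 < j) (hd : d' + p * j = d) {F : Pol N}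
    (hF : F ∈ AltSpan N d') : psum (Fin N) ℂ (p * j) * F ∈ KK p N d := by
  induction hF using Submodule.span_induction with
  | mem x hx =>
    obtain ⟨β, hβ, rfl⟩ := hx
    exact Submodule.subset_span ⟨j, β, hj, by rw [hβ, hd], rfl⟩
  | zero => rw [mul_zero]; exact zero_mem _
  | add x y _ _ hx hy => rw [mul_add]; exact add_mem hx hy
  | smul c x _ hx => rw [mul_smul_comm]; exact Submodule.smul_mem _ _ hx

/-- Functions vanishing on `p`-regular elements are sent to the singular subspace. -/
theorem phi_mem_KK {p : ℕ} (hp : p.Prime) {φ : Equiv.Perm ι → ℂ}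
    (hφ : ∀ g ∈ pRegular p (Equiv.Perm ι), φ g = 0) :
    alt (delta N) * phi N φ ∈ KK p N (dd N (Fintype.card ι)) := by
  rw [phi_apply, mul_smul_comm, Finset.mul_sum]
  refine Submodule.smul_mem _ _ (Submodule.sum_mem _ fun g _ => ?_)
  by_cases hg : p ∣ orderOf g
  · rw [mul_smul_comm]
    refine Submodule.smul_mem _ _ ?_
    obtain ⟨j, κ, _, _, g2, hj, hc, he⟩ := pg_of_singular (N := N) hp hg
    rw [he, mul_left_comm]
    refine psum_mul_mem_KK hj ?_ ((isAlt_mul_pg g2).mem_span (altpg_isHomogeneous g2))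
    rw [dd, dd]
    omega
  · have : φ g = 0 := hφ g ((Nat.Prime.coprime_iff_not_dvd hp).mpr hg).symm
    rw [this, zero_smul, mul_zero]
    exact zero_mem _

theorem sum_range_card_le (s : Finset ℕ) : ∑ i ∈ Finset.range s.card, i ≤ ∑ x ∈ s, x := by
  induction s using Finset.induction_on_max with
  | empty => simp
  | insert a s ha ih =>
    have hn : a ∉ s := fun h => lt_irrefl _ (ha a h)
    have hc : s.card ≤ a := by
      have := Finset.card_le_card (show s ⊆ Finset.range a from
        fun x hx => Finset.mem_range.mpr (ha x hx))
      rwa [Finset.card_range] at this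
    rw [Finset.card_insert_of_notMem hn, Finset.sum_range_succ, Finset.sum_insert hn]
    omega

theorem sum_delta_le {α : Fin N → ℕ} (h : Function.Injective α) : ∑ i, delta N i ≤ ∑ i, α i := by
  have h1 : ∑ i, α i = ∑ x ∈ Finset.univ.image α, x := by
    rw [Finset.sum_image fun a _ b _ hab => h hab]
  have h2 : (Finset.univ.image α).card = N := by
    rw [Finset.card_image_of_injective _ h, Finset.card_univ, Fintype.card_fin]
  have h3 := sum_range_card_le (Finset.univ.image α)
  rw [h2, ← h1] at h3
  unfold delta
  rwa [Fin.sum_univ_eq_sum_range (fun i => i) N]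

/-- Conversely every element of `KK` comes from a class function supported on singular
elements. -/
theorem exists_of_mem_KK {p : ℕ} (hp : p.Prime) {m : ℕ} {F : Pol N}
    (hF : F ∈ KK p N (dd N m)) : ∃ ω : Equiv.Perm (Fin m) → ℂ, IsCF ω ∧
      (∀ g ∈ pRegular p (Equiv.Perm (Fin m)), ω g = 0) ∧ alt (delta N) * phi N ω = F := by
  induction hF using Submodule.span_induction with
  | zero => exact ⟨0, fun _ _ => rfl, fun _ _ => rfl, by rw [map_zero, mul_zero]⟩
  | add x y _ _ hx hy =>
    obtain ⟨a, ha, ha', rfl⟩ := hx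
    obtain ⟨b, hb, hb', rfl⟩ := hy
    exact ⟨a + b, ha.add hb, fun g hg => by simp [ha' g hg, hb' g hg], by rw [map_add, mul_add]⟩
  | smul c x _ hx =>
    obtain ⟨a, ha, ha', rfl⟩ := hx
    exact ⟨c • a, ha.smul c, fun g hg => by simp [ha' g hg], by rw [map_smul, mul_smul_comm]⟩
  | mem x hx =>
    obtain ⟨j, β, hj, hd, rfl⟩ := hx
    by_cases hinj : Function.Injective β
    swap
    · exact ⟨0, fun _ _ => rfl, fun _ _ => rfl, by rw [map_zero, alt_eq_zero hinj, mul_zero, mul_zero]⟩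
    have hle := sum_delta_le hinj
    set m' := m - p * j with hm'
    have hmm : p * j + m' = m ∧ ∑ i, β i = dd N m' := by
      rw [dd] at hd ⊢
      omega
    have hpj : 0 < p * j := Nat.mul_pos hp.pos hj
    have hβ := alt_mul_phi_chi (ι := Fin m') β (by rw [Fintype.card_fin]; exact hmm.2)
    choose G hG1 hG2 using fun h : Equiv.Perm (Fin m') =>
      exists_pg_mul (N := N) hpj (m := m) (by rw [Fintype.card_fin]; exact hmm.1) h
    -- the indicator of a conjugacy class
    let Ψ : Equiv.Perm (Fin m) → Equiv.Perm (Fin m) → ℂ :=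
      fun g x => ∑ s : Equiv.Perm (Fin m), if s * g * s⁻¹ = x then 1 else 0
    have hΨ : ∀ g, phi N (Ψ g) = pg N g := by
      intro g
      rw [phi_apply]
      simp only [Ψ, Finset.sum_smul, ite_smul, one_smul, zero_smul]
      rw [Finset.sum_comm]
      simp only [Finset.sum_ite_eq, Finset.mem_univ, if_true, pg_conj, Finset.sum_const]
      rw [← Nat.cast_smul_eq_nsmul ℂ, smul_smul, Finset.card_univ, Fintype.card_perm,
        inv_mul_cancel₀, one_smul]
      exact_mod_cast Nat.factorial_ne_zero _
    refine ⟨((Fintype.card (Fin m')).factorial : ℂ)⁻¹ • ∑ h : Equiv.Perm (Fin m'),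
      chi β h • Ψ (G h), ?_, ?_, ?_⟩
    · refine IsCF.smul (IsCF.sum fun h _ => IsCF.smul ?_ _) _
      intro x t
      simp only [Ψ]
      refine Fintype.sum_equiv (Equiv.mulLeft t⁻¹) _ _ fun s => ?_
      congr 1
      rw [Equiv.coe_mulLeft, eq_iff_iff]
      constructor
      · intro h'
        have : x = t⁻¹ * (t * x * t⁻¹) * t := by group
        rw [this, ← h']
        group
      · rintro rfl
        group
    · intro g hg
      simp only [Pi.smul_apply, Finset.sum_apply, smul_eq_mul]
      rw [Finset.sum_eq_zero, mul_zero]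
      intro h _
      have : Ψ (G h) g = 0 := by
        refine Finset.sum_eq_zero fun s _ => if_neg ?_
        rintro rfl
        have h1 : orderOf (s * G h * s⁻¹) = orderOf (G h) :=
          MulEquiv.orderOf_eq (MulAut.conj s) (G h)
        have h2 : p ∣ orderOf (s * G h * s⁻¹) := h1 ▸ (Dvd.intro j rfl).trans (hG1 h)
        exact (Nat.Prime.coprime_iff_not_dvd hp).mp (Nat.Coprime.symm hg) h2
      rw [this, mul_zero]
    · rw [map_smul, map_sum, ← hβ, phi_apply, mul_smul_comm, mul_smul_comm, mul_smul_comm]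
      congr 1
      rw [Finset.mul_sum, Finset.mul_sum, Finset.mul_sum]
      refine Finset.sum_congr rfl fun h _ => ?_
      rw [map_smul, hΨ, hG2, mul_smul_comm, mul_smul_comm, mul_smul_comm]
      congr 1
      ring

end Antisymmetric

/-! ### Straightening alternants modulo the singular subspace -/

section Straighten

open MvPolynomial

variable {N : ℕ}

/-- The elementary symmetric polynomial of degree `k` in the `p`-th powers of the variables. -/
def ep (p N k : ℕ) : Pol N := expand p (esymm (Fin N) ℂ k)

theorem ep_zero (p : ℕ) : ep p N 0 = 1 := by
  rw [ep, esymm_zero, map_one]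

theorem ep_eq (p k : ℕ) :
    ep p N k = ∑ S ∈ Finset.powersetCard k Finset.univ, ∏ i ∈ S, X i ^ p := by
  simp [ep, esymm, map_sum, map_prod]

theorem expand_psum (p j : ℕ) : expand p (psum (Fin N) ℂ j) = psum (Fin N) ℂ (p * j) := by
  simp [psum, map_sum, pow_mul]

theorem rename_ep (p k : ℕ) (σ : Equiv.Perm (Fin N)) : rename σ (ep p N k) = ep p N k := by
  rw [ep, rename_expand, rename_esymm]

theorem ep_isHomogeneous (p k : ℕ) : (ep p N k).IsHomogeneous (p * k) := by
  rw [ep_eq]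
  refine IsHomogeneous.sum _ _ _ fun S hS => ?_
  have h := IsHomogeneous.prod S (fun i : Fin N => (X i : Pol N) ^ p) (fun _ => p)
    fun i _ => isHomogeneous_X_pow i p
  rwa [Finset.sum_const, (Finset.mem_powersetCard.mp hS).2, smul_eq_mul, mul_comm] at h

/-- Multiplication by a symmetric homogeneous polynomial preserves the span of the alternants. -/
theorem sym_mul_mem_AltSpan {P F : Pol N} {d d' : ℕ}
    (hP : ∀ σ : Equiv.Perm (Fin N), rename σ P = P) (hd : P.IsHomogeneous d)
    (hF : F ∈ AltSpan N d') : P * F ∈ AltSpan N (d + d') := by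
  induction hF using Submodule.span_induction with
  | mem x hx =>
    obtain ⟨β, hβ, rfl⟩ := hx
    refine IsAlt.mem_span (fun σ => ?_) (hd.mul (hβ ▸ alt_isHomogeneous β))
    rw [map_mul, hP, rename_alt, mul_smul_comm]
  | zero => rw [mul_zero]; exact zero_mem _
  | add x y _ _ hx hy => rw [mul_add]; exact add_mem hx hy
  | smul c x _ hx => rw [mul_smul_comm]; exact Submodule.smul_mem _ _ hx

theorem alt_mem_AltSpan (β : Fin N → ℕ) : alt β ∈ AltSpan N (∑ i, β i) :=
  Submodule.subset_span ⟨β, rfl, rfl⟩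

theorem psum_isHomogeneous' (r : ℕ) : (psum (Fin N) ℂ r).IsHomogeneous r :=
  IsHomogeneous.sum _ _ _ fun i _ => isHomogeneous_X_pow i r

theorem ep_mul_mem_AltSpan {F : Pol N} {p k d' d : ℕ} (hd : d' + p * k = d)
    (hF : F ∈ AltSpan N d') : ep p N k * F ∈ AltSpan N d := by
  rw [← hd, add_comm]
  exact sym_mul_mem_AltSpan (rename_ep p k) (ep_isHomogeneous p k) hF

theorem psum_mul_mem_AltSpan {F : Pol N} {r d' d : ℕ} (hd : d' + r = d)
    (hF : F ∈ AltSpan N d') : psum (Fin N) ℂ r * F ∈ AltSpan N d := by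
  rw [← hd, add_comm]
  exact sym_mul_mem_AltSpan (rename_psum _ _ r) (psum_isHomogeneous' r) hF

theorem KK_le_AltSpan (p d : ℕ) : KK p N d ≤ AltSpan N d := by
  refine Submodule.span_le.mpr ?_
  rintro _ ⟨j, β, -, hd, rfl⟩
  exact psum_mul_mem_AltSpan hd (alt_mem_AltSpan β)

/-- Newton's identities: the products `e_k(x^p) a_β` lie in `KK`. -/
theorem ep_mul_mem_KK {p k d' d : ℕ} (hk : 0 < k) (hd : d' + p * k = d) {F : Pol N}
    (hF : F ∈ AltSpan N d') : ep p N k * F ∈ KK p N d := by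
  have h := congrArg (expand p) (mul_esymm_eq_sum (Fin N) ℂ k)
  simp only [map_mul, map_sum, map_pow, map_neg, map_one, map_natCast, expand_psum] at h
  have h2 : ep p N k * F = ((k : ℂ)⁻¹) • ((k : Pol N) * ep p N k * F) := by
    rw [mul_assoc, ← nsmul_eq_mul, ← Nat.cast_smul_eq_nsmul ℂ, smul_smul, inv_mul_cancel₀, one_smul]
    exact_mod_cast hk.ne'
  rw [h2]
  refine Submodule.smul_mem _ _ ?_
  rw [ep, h, mul_assoc, Finset.sum_mul]
  have hs : ∀ (e : ℕ) (G : Pol N), G ∈ KK p N d → (-1) ^ e * G ∈ KK p N d := by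
    intro e G hG
    rcases neg_one_pow_eq_or (Pol N) e with h | h <;> rw [h]
    · rwa [one_mul]
    · rw [neg_one_mul]; exact neg_mem hG
  refine hs _ _ (Submodule.sum_mem _ fun a ha => ?_)
  rw [Finset.mem_filter, Finset.HasAntidiagonal.mem_antidiagonal] at ha
  rw [mul_assoc, mul_assoc]
  refine hs _ _ ?_
  rw [mul_left_comm]
  refine psum_mul_mem_KK (d' := d' + p * a.1) (by omega) ?_ (ep_mul_mem_AltSpan rfl hF)
  rw [← hd, ← ha.1]
  ring

/-- The subspace `KK` is also spanned by the products `e_k(x^p) a_β`. -/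
theorem psum_mul_mem_of_ep {p : ℕ} {d : ℕ} (W : Submodule ℂ (Pol N))
    (hW : ∀ k d' F, 0 < k → d' + p * k = d → F ∈ AltSpan N d' → ep p N k * F ∈ W) :
    KK p N d ≤ W := by
  refine Submodule.span_le.mpr ?_
  rintro _ ⟨j, β, hj, hd, rfl⟩
  have h := congrArg (expand p) (psum_eq_mul_esymm_sub_sum (Fin N) ℂ j hj)
  simp only [map_mul, map_sub, map_sum, map_pow, map_neg, map_one, map_natCast, expand_psum] at h
  have hs : ∀ (e : ℕ) (G : Pol N), G ∈ W → (-1) ^ e * G ∈ W := by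
    intro e G hG
    rcases neg_one_pow_eq_or (Pol N) e with h | h <;> rw [h]
    · rwa [one_mul]
    · rw [neg_one_mul]; exact neg_mem hG
  rw [h, sub_mul]
  refine sub_mem ?_ ?_
  · rw [mul_assoc, mul_assoc]
    refine hs _ _ ?_
    rw [← nsmul_eq_mul]
    exact nsmul_mem (hW j _ _ hj hd (alt_mem_AltSpan β)) _
  · rw [Finset.sum_mul]
    refine Submodule.sum_mem _ fun a ha => ?_
    rw [Finset.mem_filter, Finset.HasAntidiagonal.mem_antidiagonal, Set.mem_Ioo] at ha
    rw [mul_assoc, mul_assoc]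
    refine hs _ _ (hW a.1 (∑ i, β i + p * a.2) _ ha.2.1 ?_
      (psum_mul_mem_AltSpan rfl (alt_mem_AltSpan β)))
    rw [← hd, ← ha.1]
    ring

/-- Pieri's rule. -/
theorem ep_mul_alt (p k : ℕ) (y : Fin N → ℕ) :
    ep p N k * alt y = ∑ S ∈ Finset.powersetCard k Finset.univ,
      alt (fun i => y i + if i ∈ S then p else 0) := by
  have hm : ∀ α : Fin N → ℕ, alt α = ∑ σ : Equiv.Perm (Fin N),
      ((Equiv.Perm.sign σ : ℤ) : Pol N) * ∏ i, X i ^ α (σ i) := by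
    intro α
    rw [alt_eq]
    refine Finset.sum_congr rfl fun σ _ => ?_
    rw [monomial_eq, Finsupp.prod_fintype _ _ (by simp)]
    simp
  simp only [hm]
  rw [Finset.sum_comm, Finset.mul_sum]
  refine Finset.sum_congr rfl fun σ _ => ?_
  rw [mul_left_comm, ← Finset.mul_sum, ep_eq, Finset.sum_mul]
  congr 1
  refine Finset.sum_bij' (fun S _ => S.map σ.toEmbedding) (fun S _ => S.map σ.symm.toEmbedding)
    ?_ ?_ ?_ ?_ ?_
  · intro S hS
    simpa [Finset.mem_powersetCard] using hS
  · intro S hS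
    simpa [Finset.mem_powersetCard] using hS
  · intro S _; ext i; simp
  · intro S _; ext i; simp
  · intro S _
    simp only [pow_add, Finset.prod_mul_distrib, Finset.mem_map_equiv, Equiv.symm_apply_apply]
    rw [mul_comm]
    congr 1
    simp only [pow_ite, pow_zero]
    rw [Finset.prod_ite_mem, Finset.univ_inter]

/-- On the runner of residue `r` modulo `p`, the exponents occurring in `α` are pushed down as
far as possible. -/
def Good (p r : ℕ) (α : Fin N → ℕ) : Prop :=
  ∀ i, α i % p = r → p ≤ α i → ∃ j, α j + p = α i

theorem sum_lt_of_threshold {J : Type*} [DecidableEq J] {S T : Finset J} {c : J → ℕ} {M : ℕ}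
    (hc : S.card = T.card) (hne : S ≠ T) (h1 : ∀ i ∈ T, M ≤ c i) (h2 : ∀ i, i ∉ T → c i < M) :
    ∑ i ∈ S, c i < ∑ i ∈ T, c i := by
  have hc' : (S \ T).card = (T \ S).card := Finset.card_sdiff_comm hc
  have hne' : (S \ T).Nonempty := by
    rw [Finset.sdiff_nonempty]
    intro h
    exact hne (Finset.eq_of_subset_of_card_le h hc.ge)
  rw [← Finset.sum_sdiff_lt_sum_sdiff]
  calc ∑ i ∈ S \ T, c i < ∑ i ∈ S \ T, M :=
        Finset.sum_lt_sum_of_nonempty hne' fun i hi => h2 i (Finset.mem_sdiff.mp hi).2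
    _ = ∑ i ∈ T \ S, M := by rw [Finset.sum_const, Finset.sum_const, hc']
    _ ≤ ∑ i ∈ T \ S, c i := Finset.sum_le_sum fun i hi => h1 i (Finset.mem_sdiff.mp hi).1

/-- The integral span of the alternants of good exponent vectors of sum `d`. -/
def goodSpan (p r N d : ℕ) : Submodule ℤ (Pol N) :=
  Submodule.span ℤ {F | ∃ α : Fin N → ℕ, Function.Injective α ∧ Good p r α ∧ ∑ i, α i = d ∧
    F = alt α}

/-- Every alternant is an integral combination of good ones modulo `KK`. The induction is on the
sum of the squares of the exponents on the chosen runner. -/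
theorem straighten {p r d : ℕ} (hp : 0 < p) (x : Fin N → ℕ) (hx : ∑ i, x i = d) :
    ∃ G ∈ goodSpan p r N d, ∃ F ∈ KK p N d, alt x = G + F := by
  induction hQ : ∑ i, (if x i % p = r then x i ^ 2 else 0) using Nat.strong_induction_on
    generalizing x with
  | _ Q ih =>
  by_cases hinj : Function.Injective x
  swap
  · exact ⟨0, zero_mem _, 0, zero_mem _, by rw [alt_eq_zero hinj, add_zero]⟩
  by_cases hg : Good p r x
  · exact ⟨alt x, Submodule.subset_span ⟨x, hinj, hg, hx, rfl⟩, 0, zero_mem _, by rw [add_zero]⟩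
  unfold Good at hg
  push Not at hg
  obtain ⟨i0, hr, hpx, hgap⟩ := hg
  set τ := x i0 - p with hτ
  have hτ' : τ + p = x i0 := by omega
  have hτr : τ % p = r := by rw [← hr, ← hτ', Nat.add_mod_right]
  have hτn : ∀ j, x j ≠ τ := fun j hj => hgap j (by rw [hj, hτ'])
  set S0 : Finset (Fin N) := Finset.univ.filter fun i => x i % p = r ∧ τ < x i with hS0
  have hmem : ∀ i, i ∈ S0 ↔ x i % p = r ∧ τ < x i := by simp [hS0]
  have hge : ∀ i ∈ S0, τ + p ≤ x i := by
    intro i hi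
    obtain ⟨h1, h2⟩ := (hmem i).mp hi
    have h3 : p ∣ x i - τ := (Nat.modEq_iff_dvd' h2.le).mp (hτr.trans h1.symm)
    have := Nat.le_of_dvd (by omega) h3
    omega
  set y : Fin N → ℕ := fun i => x i - if i ∈ S0 then p else 0 with hy
  have hyx : ∀ i, y i + (if i ∈ S0 then p else 0) = x i := by
    intro i
    simp only [hy]
    split_ifs with h
    · have := hge i h; omega
    · omega
  have hk : 0 < S0.card := Finset.card_pos.mpr ⟨i0, (hmem i0).mpr ⟨hr, by omega⟩⟩
  have hsum : ∀ S : Finset (Fin N), ∑ i, (y i + if i ∈ S then p else 0) =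
      ∑ i, y i + p * S.card := by
    intro S
    rw [Finset.sum_add_distrib, Finset.sum_ite_mem, Finset.univ_inter, Finset.sum_const,
      smul_eq_mul, mul_comm]
  have hyd : ∑ i, y i + p * S0.card = d := by
    rw [← hsum S0, ← hx]
    exact Finset.sum_congr rfl fun i _ => hyx i
  have hyr : ∀ i (S : Finset (Fin N)), (y i + if i ∈ S then p else 0) % p = r ↔ x i % p = r := by
    intro i S
    have h1 : ∀ (a : ℕ) (P : Prop) [Decidable P], (a + if P then p else 0) % p = a % p := by
      intro a P _
      split_ifs <;> simp
    rw [h1, ← hyx i, h1]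
  -- the `S`-term of Pieri's rule, for `S ≠ S0`, has a smaller sum of squares
  set c : Fin N → ℕ := fun i => if x i % p = r then 2 * p * y i + p ^ 2 else 0 with hc
  have hQS : ∀ S : Finset (Fin N), ∑ i, (if (y i + if i ∈ S then p else 0) % p = r then
      (y i + if i ∈ S then p else 0) ^ 2 else 0) =
      ∑ i, (if x i % p = r then y i ^ 2 else 0) + ∑ i ∈ S, c i := by
    intro S
    rw [← Finset.univ_inter S, ← Finset.sum_ite_mem, ← Finset.sum_add_distrib]
    refine Finset.sum_congr rfl fun i _ => ?_
    simp only [Finset.univ_inter, hyr, hc]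
    split_ifs <;> ring
  have hlt : ∀ S : Finset (Fin N), S.card = S0.card → S ≠ S0 →
      ∑ i ∈ S, c i < ∑ i ∈ S0, c i := by
    intro S h1 h2
    refine sum_lt_of_threshold (M := 2 * p * τ + p ^ 2) h1 h2 ?_ ?_
    · intro i hi
      have h3 := hyx i
      rw [if_pos hi] at h3
      have h4 := hge i hi
      have h5 : τ ≤ y i := by omega
      simp only [hc, if_pos ((hmem i).mp hi).1]
      gcongr
    · intro i hi
      have h3 := hyx i
      rw [if_neg hi] at h3
      simp only [hc]
      split_ifs with h4
      · have h5 : y i < τ := by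
          rw [hmem] at hi
          have h6 := hτn i
          have h7 : ¬ τ < x i := fun h => hi ⟨h4, h⟩
          omega
        gcongr
      · positivity
  have hpieri := ep_mul_alt p S0.card y
  rw [← Finset.add_sum_erase _ _ (show S0 ∈ Finset.powersetCard S0.card Finset.univ by
    simp [Finset.mem_powersetCard])] at hpieri
  have hx0 : (fun i => y i + if i ∈ S0 then p else 0) = x := funext hyx
  rw [hx0] at hpieri
  have hterm : ∀ S ∈ (Finset.powersetCard S0.card Finset.univ).erase S0,
      ∃ GF : Pol N × Pol N, GF.1 ∈ goodSpan p r N d ∧ GF.2 ∈ KK p N d ∧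
        alt (fun i => y i + if i ∈ S then p else 0) = GF.1 + GF.2 := by
    intro S hS
    rw [Finset.mem_erase, Finset.mem_powersetCard] at hS
    obtain ⟨G, hG, F, hF, h⟩ := ih _ (by
      rw [← hQ]
      conv_rhs => rw [← hx0]
      rw [hQS S, hQS S0]
      have := hlt S hS.2.2 hS.1
      omega) (fun i => y i + if i ∈ S then p else 0) (by rw [hsum S, hS.2.2, hyd]) rfl
    exact ⟨(G, F), hG, hF, h⟩
  choose! GF h1 h2 h3 using hterm
  refine ⟨-∑ S ∈ (Finset.powersetCard S0.card Finset.univ).erase S0, (GF S).1,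
    neg_mem (Submodule.sum_mem _ h1), ep p N S0.card * alt y -
      ∑ S ∈ (Finset.powersetCard S0.card Finset.univ).erase S0, (GF S).2,
    sub_mem (ep_mul_mem_KK hk hyd (alt_mem_AltSpan y)) (Submodule.sum_mem _ h2), ?_⟩
  rw [hpieri, Finset.sum_congr rfl h3, Finset.sum_add_distrib]
  ring

end Straighten

/-! ### Bead configurations, and independence of the good alternants modulo the singular subspace -/

section Beads

open MvPolynomial

variable {N : ℕ}

/-- The increasing enumeration of a set of `N` exponents (zero for sets of another size). -/
def vec (N : ℕ) (X : Finset ℕ) : Fin N → ℕ :=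
  if h : X.card = N then X.orderEmbOfFin h else 0

theorem vec_strictMono {X : Finset ℕ} (h : X.card = N) : StrictMono (vec N X) := by
  rw [vec, dif_pos h]
  exact (X.orderEmbOfFin h).strictMono

theorem vec_image {X : Finset ℕ} (h : X.card = N) : Finset.univ.image (vec N X) = X := by
  rw [vec, dif_pos h]
  exact Finset.image_orderEmbOfFin_univ X h

theorem sum_vec {X : Finset ℕ} (h : X.card = N) : ∑ i, vec N X i = ∑ x ∈ X, x := by
  conv_rhs => rw [← vec_image h]
  rw [Finset.sum_image fun a _ b _ hab => (vec_strictMono h).injective hab]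

theorem card_image_vec {α : Fin N → ℕ} (h : Function.Injective α) :
    (Finset.univ.image α).card = N := by
  rw [Finset.card_image_of_injective _ h, Finset.card_univ, Fintype.card_fin]

theorem exists_perm_vec {α β : Fin N → ℕ} (hα : Function.Injective α)
    (hβ : Function.Injective β) (h : Finset.univ.image α = Finset.univ.image β) :
    ∃ σ : Equiv.Perm (Fin N), α = β ∘ σ := by
  have h1 : ∀ i, ∃ j, β j = α i := by
    intro i
    have : α i ∈ Finset.univ.image β := h ▸ Finset.mem_image_of_mem _ (Finset.mem_univ i)
    simpa using this
  choose f hf using h1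
  have hfi : Function.Injective f := fun a b hab => hα (by rw [← hf a, ← hf b, hab])
  refine ⟨Equiv.ofBijective f (Finite.injective_iff_bijective.mp hfi), ?_⟩
  funext i
  exact (hf i).symm

theorem alt_eq_vec {α : Fin N → ℕ} (hα : Function.Injective α) :
    ∃ s : ℤˣ, alt α = ((s : ℤ) : ℂ) • alt (vec N (Finset.univ.image α)) := by
  have hc := card_image_vec hα
  obtain ⟨σ, h⟩ := exists_perm_vec hα (vec_strictMono hc).injective (vec_image hc).symm
  refine ⟨Equiv.Perm.sign σ, ?_⟩
  conv_lhs => rw [h]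
  exact alt_comp _ _

/-- The sets of `N` exponents with sum `d`. -/
def conf (N d : ℕ) : Finset (Finset ℕ) :=
  ((Finset.range (d + 1)).powersetCard N).filter fun X => ∑ x ∈ X, x = d

theorem mem_conf {d : ℕ} {X : Finset ℕ} : X ∈ conf N d ↔ X.card = N ∧ ∑ x ∈ X, x = d := by
  rw [conf, Finset.mem_filter, Finset.mem_powersetCard]
  constructor
  · rintro ⟨⟨-, h1⟩, h2⟩
    exact ⟨h1, h2⟩
  · rintro ⟨h1, h2⟩
    refine ⟨⟨fun x hx => ?_, h1⟩, h2⟩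
    rw [Finset.mem_range, ← h2]
    have := Finset.single_le_sum (f := fun x : ℕ => x) (fun _ _ => Nat.zero_le _) hx
    omega

theorem image_mem_conf {α : Fin N → ℕ} (hα : Function.Injective α) {d : ℕ}
    (hd : ∑ i, α i = d) : Finset.univ.image α ∈ conf N d := by
  rw [mem_conf]
  refine ⟨card_image_vec hα, ?_⟩
  rw [Finset.sum_image fun a _ b _ hab => hα hab, hd]

theorem linearIndependent_alt_vec (d : ℕ) :
    LinearIndependent ℂ (fun X : conf N d => alt (vec N X.1)) := by
  rw [linearIndependent_iff']
  intro s g hg X hX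
  have h := congrArg (coeff (fs (vec N X.1))) hg
  rw [coeff_sum, coeff_zero, Finset.sum_eq_single X] at h
  · rw [coeff_smul, coeff_alt_self (vec_strictMono (mem_conf.mp X.2).1).injective] at h
    simpa using h
  · intro Y _ hY
    rw [coeff_smul, coeff_alt, Finset.sum_eq_zero, smul_zero]
    intro σ _
    rw [if_neg]
    intro h'
    apply hY
    apply Subtype.ext
    rw [← vec_image (mem_conf.mp X.2).1, ← vec_image (mem_conf.mp Y.2).1, ← h',
      ← Finset.image_image]
    congr 1
    rw [Finset.image_univ_equiv]
  · exact fun h' => absurd hX h'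

theorem AltSpan_le (d : ℕ) : AltSpan N d ≤
    Submodule.span ℂ ((fun X => alt (vec N X)) '' (conf N d : Set (Finset ℕ))) := by
  refine Submodule.span_le.mpr ?_
  rintro _ ⟨β, hβ, rfl⟩
  by_cases hinj : Function.Injective β
  · obtain ⟨s, hs⟩ := alt_eq_vec hinj
    rw [hs]
    exact Submodule.smul_mem _ _ (Submodule.subset_span ⟨_, image_mem_conf hinj hβ, rfl⟩)
  · rw [alt_eq_zero hinj]
    exact zero_mem _

/-- The parts of the partition with first column hook lengths `Z` (parts `0` included). -/
def kap (Z : Finset ℕ) : Multiset ℕ := Z.val.map fun z => z - (Z.filter (· < z)).card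

theorem kap_insert_max {Z : Finset ℕ} {a : ℕ} (ha : ∀ z ∈ Z, z < a) :
    kap (insert a Z) = (a - Z.card) ::ₘ kap Z := by
  have hn : a ∉ Z := fun h => lt_irrefl _ (ha a h)
  rw [kap, Finset.insert_val_of_notMem hn, Multiset.map_cons, kap]
  congr 1
  · congr 2
    rw [Finset.filter_insert, if_neg (lt_irrefl _)]
    exact Finset.filter_true_of_mem ha
  · refine Multiset.map_congr rfl fun z hz => ?_
    have := ha z hz
    rw [Finset.filter_insert, if_neg (by omega)]

theorem card_le_of_lt {Z : Finset ℕ} {a : ℕ} (ha : ∀ z ∈ Z, z < a) : Z.card ≤ a := by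
  have := Finset.card_le_card (show Z ⊆ Finset.range a from fun x hx =>
    Finset.mem_range.mpr (ha x hx))
  rwa [Finset.card_range] at this

theorem kap_sum (Z : Finset ℕ) :
    (kap Z).sum + ∑ i ∈ Finset.range Z.card, i = ∑ z ∈ Z, z := by
  induction Z using Finset.induction_on_max with
  | empty => simp [kap]
  | insert a s ha ih =>
    have hn : a ∉ s := fun h => lt_irrefl _ (ha a h)
    have hc := card_le_of_lt ha
    rw [kap_insert_max ha, Multiset.sum_cons, Finset.card_insert_of_notMem hn,
      Finset.sum_range_succ, Finset.sum_insert hn]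
    omega

/-- Every multiset arises as the partition of a bead configuration. -/
theorem exists_kap (n : ℕ) (M : Multiset ℕ) (hM : M.card = n) : ∃ Z : Finset ℕ, Z.card = n ∧
    kap Z = M ∧ ∀ z ∈ Z, ∃ m ∈ M, z < m + n := by
  induction n generalizing M with
  | zero =>
    rw [Multiset.card_eq_zero] at hM
    exact ⟨∅, rfl, by simp [kap, hM], by simp⟩
  | succ n ih =>
    have hne : M.toFinset.Nonempty := by
      rw [Multiset.toFinset_nonempty]
      rintro rfl
      simp at hM
    obtain ⟨a, ha, hmax⟩ := Finset.exists_max_image M.toFinset id hne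
    rw [Multiset.mem_toFinset] at ha
    obtain ⟨M', rfl⟩ := Multiset.exists_cons_of_mem ha
    rw [Multiset.card_cons] at hM
    obtain ⟨Z, h1, h2, h3⟩ := ih M' (by omega)
    have hlt : ∀ z ∈ Z, z < a + n := by
      intro z hz
      obtain ⟨m, hm, hzm⟩ := h3 z hz
      have := hmax m (by simp [hm])
      simp only [id] at this
      omega
    have hn : a + n ∉ Z := fun h => lt_irrefl _ (hlt _ h)
    refine ⟨insert (a + n) Z, by rw [Finset.card_insert_of_notMem hn, h1], ?_, ?_⟩
    · rw [kap_insert_max hlt, h1, h2, Nat.add_sub_cancel]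
    · intro z hz
      refine ⟨a, by simp, ?_⟩
      rcases Finset.mem_insert.mp hz with rfl | hz
      · omega
      · have := hlt z hz; omega

/-- The elements of `X` off the runner of residue `r`. -/
def offRun (p r : ℕ) (X : Finset ℕ) : Finset ℕ := X.filter fun x => x % p ≠ r

/-- The positions of the elements of `X` on the runner of residue `r`. -/
def onRun (p r : ℕ) (X : Finset ℕ) : Finset ℕ := (X.filter fun x => x % p = r).image (· / p)

/-- The set with elements `R` off the runner and positions `Z` on it. -/
def mkRun (p r : ℕ) (R Z : Finset ℕ) : Finset ℕ := R ∪ Z.image fun z => r + p * z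

section Run

variable {p r : ℕ}

theorem mem_onRun (hr : r < p) {X : Finset ℕ} {z : ℕ} : z ∈ onRun p r X ↔ r + p * z ∈ X := by
  simp only [onRun, Finset.mem_image, Finset.mem_filter]
  constructor
  · rintro ⟨x, ⟨hx, h1⟩, rfl⟩
    rwa [← h1, Nat.mod_add_div]
  · intro h
    refine ⟨_, ⟨h, ?_⟩, ?_⟩
    · rw [Nat.add_mul_mod_self_left, Nat.mod_eq_of_lt hr]
    · rw [Nat.add_mul_div_left _ _ (by omega), Nat.div_eq_of_lt hr, zero_add]

theorem mkRun_self (hr : r < p) (X : Finset ℕ) : mkRun p r (offRun p r X) (onRun p r X) = X := by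
  ext x
  simp only [mkRun, Finset.mem_union, Finset.mem_image, mem_onRun hr, offRun, Finset.mem_filter]
  constructor
  · rintro (h | ⟨z, h, rfl⟩)
    exacts [h.1, h]
  · intro h
    by_cases hx : x % p = r
    · refine Or.inr ⟨x / p, ?_, ?_⟩ <;> rw [← hx, Nat.mod_add_div]
      exact h
    · exact Or.inl ⟨h, hx⟩

theorem offRun_mkRun (hr : r < p) {X Z : Finset ℕ} :
    offRun p r (mkRun p r (offRun p r X) Z) = offRun p r X := by
  ext x
  simp only [mkRun, Finset.mem_union, Finset.mem_image, offRun, Finset.mem_filter]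
  constructor
  · rintro ⟨h | ⟨z, h, rfl⟩, h2⟩
    · exact h
    · rw [Nat.add_mul_mod_self_left, Nat.mod_eq_of_lt hr] at h2
      exact absurd rfl h2
  · intro h
    exact ⟨Or.inl h, h.2⟩

theorem onRun_mkRun (hr : r < p) {X Z : Finset ℕ} : onRun p r (mkRun p r (offRun p r X) Z) = Z := by
  ext z
  simp only [mem_onRun hr, mkRun, Finset.mem_union, Finset.mem_image, offRun, Finset.mem_filter]
  constructor
  · rintro (h | ⟨z', h, h2⟩)
    · rw [Nat.add_mul_mod_self_left, Nat.mod_eq_of_lt hr] at h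
      exact absurd rfl h.2
    · have : z' = z := Nat.eq_of_mul_eq_mul_left (by omega) (Nat.add_left_cancel h2)
      rwa [← this]
  · intro h
    exact Or.inr ⟨z, h, rfl⟩

theorem sum_mkRun (hr : r < p) {M : Type*} [AddCommMonoid M] (f : ℕ → M) (X Z : Finset ℕ) :
    ∑ x ∈ mkRun p r (offRun p r X) Z, f x =
      ∑ x ∈ offRun p r X, f x + ∑ z ∈ Z, f (r + p * z) := by
  rw [mkRun, Finset.sum_union, Finset.sum_image]
  · intro a _ b _ h
    exact Nat.eq_of_mul_eq_mul_left (by omega) (Nat.add_left_cancel h)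
  · rw [Finset.disjoint_left]
    intro x hx hx'
    obtain ⟨z, -, rfl⟩ := Finset.mem_image.mp hx'
    have := (Finset.mem_filter.mp hx).2
    rw [Nat.add_mul_mod_self_left, Nat.mod_eq_of_lt hr] at this
    exact this rfl

theorem card_mkRun (hr : r < p) (X Z : Finset ℕ) :
    (mkRun p r (offRun p r X) Z).card = (offRun p r X).card + Z.card := by
  have := sum_mkRun hr (fun _ => 1) X Z
  simpa using this

theorem sum_mkRun' (hr : r < p) (X Z : Finset ℕ) : ∑ x ∈ mkRun p r (offRun p r X) Z, x =
    ∑ x ∈ offRun p r X, x + r * Z.card + p * ∑ z ∈ Z, z := by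
  rw [sum_mkRun hr, Finset.sum_add_distrib, Finset.sum_const, smul_eq_mul, ← Finset.mul_sum]
  ring

end Run

/-- All beads of the runner pushed down. -/
def coreRun (p r : ℕ) (X : Finset ℕ) : Finset ℕ :=
  mkRun p r (offRun p r X) (Finset.range (onRun p r X).card)

/-- The product of the polynomials `e_k(x^p)`, with `k` running through the parts of the partition
read off the runner, by the alternant of the configuration with its runner pushed down. -/
def EE (p r N : ℕ) (X : Finset ℕ) : Pol N :=
  ((kap (onRun p r X)).map (ep p N)).prod * alt (vec N (coreRun p r X))

/-- Configurations with no gap on the runner. -/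
def GoodF (p r : ℕ) (X : Finset ℕ) : Prop := ∀ k ∈ kap (onRun p r X), k = 0

theorem EE_of_good {p r : ℕ} (hr : r < p) {X : Finset ℕ} (h : GoodF p r X) :
    EE p r N X = alt (vec N X) := by
  have h1 : ((kap (onRun p r X)).map (ep p N)).prod = 1 := by
    refine Multiset.prod_eq_one fun e he => ?_
    obtain ⟨k, hk, rfl⟩ := Multiset.mem_map.mp he
    rw [h k hk, ep_zero]
  have h2 : onRun p r X = Finset.range (onRun p r X).card := by
    refine Finset.eq_of_subset_of_card_le (fun z hz => ?_) (by rw [Finset.card_range])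
    have h3 := h _ (Multiset.mem_map_of_mem _ hz)
    have h4 : ((onRun p r X).filter (· < z)).card < (onRun p r X).card :=
      Finset.card_lt_card (Finset.filter_ssubset.mpr ⟨z, hz, lt_irrefl _⟩)
    rw [Finset.mem_range]
    omega
  rw [EE, h1, one_mul, coreRun, ← h2, mkRun_self hr]

theorem goodF_of_good {p r : ℕ} (hr : r < p) {α : Fin N → ℕ} (h : Good p r α) :
    GoodF p r (Finset.univ.image α) := by
  set Z := onRun p r (Finset.univ.image α) with hZ
  have hmem : ∀ z, z ∈ Z ↔ ∃ i, α i = r + p * z := by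
    intro z
    rw [hZ, mem_onRun hr]
    simp
  have hdown : ∀ z, z + 1 ∈ Z → z ∈ Z := by
    intro z hz
    obtain ⟨i, hi⟩ := (hmem _).mp hz
    obtain ⟨j, hj⟩ := h i (by rw [hi, Nat.add_mul_mod_self_left, Nat.mod_eq_of_lt hr])
      (by rw [hi, mul_add]; omega)
    refine (hmem _).mpr ⟨j, ?_⟩
    rw [hi, mul_add] at hj
    omega
  have hdown' : ∀ k z, z + k ∈ Z → z ∈ Z := by
    intro k
    induction k with
    | zero => exact fun z hz => hz
    | succ k ih => exact fun z hz => ih z (hdown _ hz)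
  intro k hk
  obtain ⟨z, hz, rfl⟩ := Multiset.mem_map.mp hk
  have : Z.filter (· < z) = Finset.range z := by
    ext y
    rw [Finset.mem_filter, Finset.mem_range]
    refine ⟨fun h => h.2, fun h => ⟨hdown' (z - y) y ?_, h⟩⟩
    rw [Nat.add_sub_cancel' h.le]
    exact hz
  rw [← hZ, this, Finset.card_range, Nat.sub_self]

/-- The family `EE` is stable under multiplication by `e_k(x^p)` in the degrees of interest: there
is then a bead at position `r`, and it can be used to add a part `k`. -/
theorem ep_mul_EE {p r k d d' : ℕ} (hr : r < p) (hk : 0 < k) (hd : d' + p * k = d)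
    (hdN : d ≤ dd N N) {X : Finset ℕ} (hX : X ∈ conf N d') :
    ∃ Y ∈ conf N d, ¬ GoodF p r Y ∧ ep p N k * EE p r N X = EE p r N Y := by
  obtain ⟨hc, hs⟩ := mem_conf.mp hX
  have hrX : r ∈ X := by
    by_contra hrX
    have h1 := sum_range_card_le (insert r X)
    rw [Finset.card_insert_of_notMem hrX, Finset.sum_insert hrX, hc, Finset.sum_range_succ, hs]
      at h1
    rw [dd] at hdN
    unfold delta at hdN
    rw [Fin.sum_univ_eq_sum_range (fun i => i) N] at hdN
    have : p * 1 ≤ p * k := Nat.mul_le_mul_left p hk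
    omega
  have h0 : 0 ∈ kap (onRun p r X) := by
    refine Multiset.mem_map.mpr ⟨0, (mem_onRun hr).mpr (by simpa using hrX), by simp⟩
  obtain ⟨M, hM⟩ := Multiset.exists_cons_of_mem h0
  have hMc : (k ::ₘ M).card = (onRun p r X).card := by
    have : (kap (onRun p r X)).card = (onRun p r X).card := Multiset.card_map _ _
    rw [← this, hM, Multiset.card_cons, Multiset.card_cons]
  obtain ⟨Z, hZc, hZ, -⟩ := exists_kap _ _ hMc
  refine ⟨mkRun p r (offRun p r X) Z, ?_, ?_, ?_⟩
  · have e1 := card_mkRun hr X Z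
    have e2 := card_mkRun hr X (onRun p r X)
    have e3 := sum_mkRun' hr X Z
    have e4 := sum_mkRun' hr X (onRun p r X)
    have e5 := kap_sum Z
    have e6 := kap_sum (onRun p r X)
    rw [mkRun_self hr] at e2 e4
    rw [hM, Multiset.sum_cons, zero_add] at e6
    rw [hZ, Multiset.sum_cons, hZc] at e5
    rw [mem_conf, e1, e3, hZc]
    refine ⟨by omega, ?_⟩
    have e7 : ∑ z ∈ Z, z = ∑ z ∈ onRun p r X, z + k := by omega
    rw [e7, ← hd, ← hs, e4]
    ring
  · intro hg
    have := hg k (by rw [onRun_mkRun hr, hZ]; simp)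
    omega
  · rw [EE, EE, coreRun, coreRun, onRun_mkRun hr, offRun_mkRun hr, hZ, hZc, hM, Multiset.map_cons,
      Multiset.map_cons, Multiset.prod_cons, Multiset.prod_cons, ep_zero, one_mul, mul_assoc]

/-- The elements `EE` span all alternants, and the singular subspace already lies in the span of
those with a nonempty partition on the runner. -/
theorem KK_le_span_EE {p r : ℕ} (hr : r < p) (d : ℕ) (hdN : d ≤ dd N N) :
    KK p N d ≤ Submodule.span ℂ (EE p r N '' {X | X ∈ conf N d ∧ ¬ GoodF p r X}) ∧
    AltSpan N d ≤ Submodule.span ℂ (EE p r N '' (conf N d : Set (Finset ℕ))) := by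
  induction d using Nat.strong_induction_on with
  | _ d ih =>
  have h1 : KK p N d ≤ Submodule.span ℂ (EE p r N '' {X | X ∈ conf N d ∧ ¬ GoodF p r X}) := by
    refine psum_mul_mem_of_ep _ ?_
    intro k d' F hk hd hF
    have hpk : 0 < p * k := Nat.mul_pos (by omega) hk
    have h2 := (ih d' (by omega) (by omega)).2 hF
    clear hF
    induction h2 using Submodule.span_induction with
    | mem x hx =>
      obtain ⟨X, hX, rfl⟩ := hx
      obtain ⟨Y, hY, hYb, he⟩ := ep_mul_EE hr hk hd hdN hX
      rw [he]
      exact Submodule.subset_span ⟨Y, ⟨hY, hYb⟩, rfl⟩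
    | zero => rw [mul_zero]; exact zero_mem _
    | add x y _ _ hx hy => rw [mul_add]; exact add_mem hx hy
    | smul c x _ hx => rw [mul_smul_comm]; exact Submodule.smul_mem _ _ hx
  refine ⟨h1, Submodule.span_le.mpr ?_⟩
  rintro _ ⟨β, hβ, rfl⟩
  obtain ⟨G, hG, F, hF, he⟩ := straighten (r := r) (by omega : 0 < p) β hβ
  rw [he]
  refine add_mem ?_ (Submodule.span_mono (Set.image_mono fun X hX => hX.1) (h1 hF))
  rw [← Submodule.mem_toAddSubgroup]
  clear he
  induction hG using Submodule.span_induction with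
  | mem x hx =>
    obtain ⟨α, hα, hg, hs, rfl⟩ := hx
    obtain ⟨s, hs'⟩ := alt_eq_vec hα
    rw [hs', ← EE_of_good hr (goodF_of_good hr hg)]
    exact Submodule.smul_mem _ _ (Submodule.subset_span ⟨_, image_mem_conf hα hs, rfl⟩)
  | zero => exact zero_mem _
  | add x y _ _ hx hy => exact add_mem hx hy
  | smul c x _ hx => exact zsmul_mem hx c

/-- The family `EE` has as many members as there are alternants and spans all of them, hence it is
independent. -/
theorem linearIndependent_EE {p r : ℕ} (hr : r < p) (d : ℕ) (hdN : d ≤ dd N N) :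
    LinearIndependent ℂ (fun X : conf N d => EE p r N X.1) := by
  rw [linearIndependent_iff_card_le_finrank_span, Set.finrank,
    ← finrank_span_eq_card (linearIndependent_alt_vec (N := N) d)]
  have : FiniteDimensional ℂ
      (Submodule.span ℂ (Set.range fun X : conf N d => EE p r N X.1)) :=
    FiniteDimensional.span_of_finite ℂ (Set.finite_range _)
  refine Submodule.finrank_mono (Submodule.span_le.mpr ?_)
  rintro _ ⟨X, rfl⟩
  obtain ⟨hc, hs⟩ := mem_conf.mp X.2
  have h := (KK_le_span_EE hr d hdN).2 (show alt (vec N X.1) ∈ AltSpan N d from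
    Submodule.subset_span ⟨_, by rw [sum_vec hc, hs], rfl⟩)
  rw [Set.image_eq_range] at h
  exact h

/-- The good alternants are linearly independent modulo `KK`. -/
theorem linearIndependent_good {p r : ℕ} (hr : r < p) (d : ℕ) (hdN : d ≤ dd N N) :
    LinearIndependent ℂ (fun X : {X : conf N d // GoodF p r X.1} =>
      (KK p N d).mkQ (alt (vec N X.1.1))) := by
  have hE := linearIndependent_EE (N := N) hr d hdN
  have h1 : LinearIndependent ℂ (fun X : {X : conf N d // GoodF p r X.1} =>
      alt (vec N X.1.1)) :=
    (linearIndependent_alt_vec d).comp _ Subtype.val_injective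
  refine h1.map (f := (KK p N d).mkQ) ?_
  rw [Submodule.ker_mkQ]
  have h2 := hE.disjoint_span_image (s := {X | GoodF p r X.1}) (t := {X | ¬ GoodF p r X.1})
    (Set.disjoint_left.mpr fun x hx hx' => hx' hx)
  refine h2.mono (Submodule.span_mono ?_) ((KK_le_span_EE hr d hdN).1.trans
    (Submodule.span_mono ?_))
  · rintro _ ⟨X, rfl⟩
    exact ⟨X.1, X.2, EE_of_good hr X.2⟩
  · rintro _ ⟨X, hX, rfl⟩
    exact ⟨⟨X, hX.1⟩, hX.2, rfl⟩

end Beads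

/-! ### A sign-stable basic set of the symmetric group -/

section SymBasic

open MvPolynomial

/-- Truncation as a linear map. -/
def truncL {G : Type} (C : Set G) : (G → ℂ) →ₗ[ℤ] (G → ℂ) where
  toFun := truncCF C
  map_add' a b := by
    funext g
    by_cases h : g ∈ C <;> simp [truncCF, h]
  map_smul' c a := by
    funext g
    by_cases h : g ∈ C <;> simp [truncCF, h]

theorem truncL_apply {G : Type} (C : Set G) (φ : G → ℂ) : truncL C φ = truncCF C φ := rfl

theorem truncL_eq_iff {G : Type} {C : Set G} {φ ψ : G → ℂ} :
    truncL C φ = truncL C ψ ↔ ∀ g ∈ C, φ g = ψ g := by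
  simp only [truncL_apply, funext_iff, truncCF]
  refine forall_congr' fun g => ?_
  by_cases h : g ∈ C <;> simp [h]

theorem truncL_eq_zero_iff {G : Type} {C : Set G} {φ : G → ℂ} :
    truncL C φ = 0 ↔ ∀ g ∈ C, φ g = 0 := by
  rw [← map_zero (truncL C), truncL_eq_iff]
  rfl

/-- The sign character with complex values. -/
def sgnC (X : Type) [Fintype X] [DecidableEq X] : Equiv.Perm X →* ℂ where
  toFun g := ((Equiv.Perm.sign g : ℤ) : ℂ)
  map_one' := by simp
  map_mul' a b := by simp

theorem sgnC_apply {X : Type} [Fintype X] [DecidableEq X] (g : Equiv.Perm X) :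
    sgnC X g = ((Equiv.Perm.sign g : ℤ) : ℂ) := rfl

/-- For odd `p`, the reflection `x ↦ 2n - 1 - x` fixes a residue class modulo `p`. -/
theorem exists_residue {p n : ℕ} (hodd : Odd p) (hn : 0 < n) :
    ∃ r < p, ∀ x y, x + y = 2 * n - 1 → x % p = r → y % p = r := by
  obtain ⟨q, hq⟩ := hodd
  have hp : 0 < p := by omega
  refine ⟨((2 * n - 1) * (q + 1)) % p, Nat.mod_lt _ hp, fun x y hxy hx => ?_⟩
  have h1 : x ≡ (2 * n - 1) * (q + 1) [MOD p] := hx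
  have h2 : 2 * n - 1 ≡ (2 * n - 1) * (q + 1) + (2 * n - 1) * (q + 1) [MOD p] := by
    have : (2 * n - 1) * (q + 1) + (2 * n - 1) * (q + 1) = 2 * n - 1 + p * (2 * n - 1) := by
      rw [hq]; ring
    rw [this]
    simp [Nat.ModEq]
  rw [← hxy] at h2
  rw [← hxy] at h1 ⊢
  exact Nat.ModEq.add_left_cancel h1 h2

/-- The complementary set of a good exponent vector, reversed, is good again. -/
theorem exists_conjugate {p r n : ℕ} (hn : 0 < n)
    (hr : ∀ x y, x + y = 2 * n - 1 → x % p = r → y % p = r) {α : Fin n → ℕ}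
    (hα : Function.Injective α) (hg : Good p r α) (hs : ∑ i, α i = dd n n) :
    ∃ α' : Fin n → ℕ, Function.Injective α' ∧ Good p r α' ∧ ∑ i, α' i = dd n n ∧
      ∃ e : Fin n ⊕ Fin n ≃ Fin (n + n), (∀ j, (e (Sum.inl j) : ℕ) = α j) ∧
        ∀ j, (e (Sum.inr j) : ℕ) + α' j = 2 * n - 1 := by
  have hdd : dd n n = n + ∑ i ∈ Finset.range n, i := by
    rw [dd]
    unfold delta
    rw [Fin.sum_univ_eq_sum_range (fun i => i) n]
  have hlt : ∀ j, α j < n + n := by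
    intro j
    have hj : α j ∈ Finset.univ.image α := Finset.mem_image_of_mem _ (Finset.mem_univ j)
    have h1 := sum_range_card_le ((Finset.univ.image α).erase (α j))
    have h2 := Finset.add_sum_erase _ (fun x => x) hj
    have h3 : ∑ x ∈ Finset.univ.image α, x = dd n n := by
      rw [Finset.sum_image fun a _ b _ hab => hα hab, hs]
    rw [Finset.card_erase_of_mem hj, card_image_vec hα] at h1
    have h4 := Finset.sum_range_succ (fun i => i) (n - 1)
    rw [Nat.sub_add_cancel hn] at h4
    omega
  let f : Fin n → Fin (n + n) := fun j => ⟨α j, hlt j⟩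
  have hf : Function.Injective f := fun a b hab => hα (congrArg Fin.val hab)
  have hcard : Fintype.card ↥(Set.range f)ᶜ = Fintype.card (Fin n) := by
    rw [Fintype.card_compl_set, Set.card_range_of_injective hf]
    simp
  let c : Fin n ≃ ↥(Set.range f)ᶜ := (Fintype.equivOfCardEq hcard).symm
  let e : Fin n ⊕ Fin n ≃ Fin (n + n) :=
    (Equiv.sumCongr (Equiv.ofInjective f hf) c).trans (Equiv.Set.sumCompl (Set.range f))
  have he1 : ∀ j, e (Sum.inl j) = f j := fun j => by simp [e]
  have he2 : ∀ j, (e (Sum.inr j) : ℕ) + (2 * n - 1 - e (Sum.inr j)) = 2 * n - 1 := by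
    intro j
    have := (e (Sum.inr j)).2
    omega
  refine ⟨fun j => 2 * n - 1 - e (Sum.inr j), ?_, ?_, ?_, e, fun j => by rw [he1], he2⟩
  · intro a b hab
    have ha := he2 a
    have hb := he2 b
    simp only at hab
    have : e (Sum.inr a) = e (Sum.inr b) := Fin.ext (by omega)
    exact Sum.inr_injective (e.injective this)
  · intro i hi hpi
    simp only at hi hpi ⊢
    have h1 := he2 i
    have hy : (e (Sum.inr i) : ℕ) % p = r := hr _ _ (by omega) hi
    have hlt' : (e (Sum.inr i) : ℕ) + p < n + n := by omega
    obtain ⟨s, hs'⟩ := e.surjective ⟨(e (Sum.inr i) : ℕ) + p, hlt'⟩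
    have hs'' := congrArg Fin.val hs'
    simp only at hs''
    rcases s with l | j
    · rw [he1] at hs''
      obtain ⟨l', hl'⟩ := hg l (by
        rw [show α l = _ from hs'', Nat.add_mod_right, hy]) (by
        rw [show α l = _ from hs'']; omega)
      have h3 : e (Sum.inl l') = e (Sum.inr i) := by
        rw [he1]
        apply Fin.ext
        have h4 : α l = _ := hs''
        rw [h4] at hl'
        exact Nat.add_right_cancel hl'
      exact absurd (e.injective h3) (by simp)
    · refine ⟨j, ?_⟩
      have := he2 j
      omega
  · have h1 : ∑ s, (e s : ℕ) = ∑ i ∈ Finset.range (n + n), i := by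
      rw [Equiv.sum_comp e (fun x : Fin (n + n) => (x : ℕ)),
        Fin.sum_univ_eq_sum_range (fun i => i) (n + n)]
    rw [Fintype.sum_sum_type] at h1
    have h2 : ∑ j, (e (Sum.inl j) : ℕ) = dd n n := by
      rw [← hs]
      exact Finset.sum_congr rfl fun j _ => by rw [he1]
    have h3 : ∑ j, (e (Sum.inr j) : ℕ) + ∑ j, (2 * n - 1 - (e (Sum.inr j) : ℕ)) =
        n * (2 * n - 1) := by
      rw [← Finset.sum_add_distrib, Finset.sum_congr rfl fun j _ => he2 j]
      simp
    have h4 := Finset.sum_range_id_mul_two (n + n)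
    have h5 : (n + n) * (n + n - 1) = n * (2 * n - 1) * 2 := by
      rw [← two_mul]; ring
    show ∑ j, (2 * n - 1 - (e (Sum.inr j) : ℕ)) = dd n n
    omega

/-- The irreducible characters of the symmetric group attached to good exponent vectors. -/
def B0 (p r n : ℕ) : Set (Equiv.Perm (Fin n) → ℂ) :=
  {ρ | ρ ∈ IrrChar (Equiv.Perm (Fin n)) ∧ ∃ α : Fin n → ℕ, Function.Injective α ∧ Good p r α ∧
    ∑ i, α i = dd n n ∧ (chi α = ρ ∨ chi α = -ρ)}

/-- The good characters are stable under the sign when the chosen residue is fixed by the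
reflection. -/
theorem B0_sgn {p r n : ℕ} (hn : 0 < n)
    (hr : ∀ x y, x + y = 2 * n - 1 → x % p = r → y % p = r) {χ : Equiv.Perm (Fin n) → ℂ}
    (hχ : χ ∈ B0 p r n) : (fun g => sgnC (Fin n) g * χ g) ∈ B0 p r n := by
  obtain ⟨hirr, α, hα, hg, hs, hc⟩ := hχ
  refine ⟨irr_twist hirr _, ?_⟩
  obtain ⟨α', hα', hg', hs', e, he1, he2⟩ := exists_conjugate hn hr hα hg hs
  refine ⟨α', hα', hg', hs', ?_⟩
  have hs2 : ∑ i, α i = dd n (Fintype.card (Fin n)) := by rw [Fintype.card_fin, hs]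
  have hs2' : ∑ i, α' i = dd n (Fintype.card (Fin n)) := by rw [Fintype.card_fin, hs']
  obtain ⟨s, h⟩ := alt_mul_phi_sgn_chi (ι := Fin n) α α' hs2 e he1 he2
  have h2 : (fun g : Equiv.Perm (Fin n) => ((Equiv.Perm.sign g : ℤ) : ℂ) * chi α g) =
      ((s : ℤ) : ℂ) • chi α' := by
    refine cf_ext_phi (N := n) ?_ ((virt_isCF (chi_mem_virt α')).smul _) (by simp) ?_
    · intro a b
      have : Equiv.Perm.sign (b * a * b⁻¹) = Equiv.Perm.sign a := by
        rw [map_mul, map_mul, map_inv, mul_comm, inv_mul_cancel_left]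
      simp only [virt_isCF (chi_mem_virt α) a b, this]
    · rw [h, map_smul, mul_smul_comm, alt_mul_phi_chi α' hs2', smul_eq_C_mul, map_intCast]
  have h3 : ∀ t : ℂ, (t = 1 ∨ t = -1) → chi α = t • χ →
      (fun g => sgnC (Fin n) g * χ g) = (t * ((s : ℤ) : ℂ)) • chi α' := by
    intro t ht h4
    rw [mul_smul, ← h2, h4]
    funext g
    simp only [sgnC_apply, Pi.smul_apply, smul_eq_mul]
    rcases ht with rfl | rfl <;> ring
  have h5 : ∃ t : ℂ, (t = 1 ∨ t = -1) ∧ chi α = t • χ := by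
    rcases hc with h | h
    · exact ⟨1, Or.inl rfl, by rw [h, one_smul]⟩
    · exact ⟨-1, Or.inr rfl, by rw [h, neg_one_smul]⟩
  obtain ⟨t, ht, h6⟩ := h5
  rw [h3 t ht h6]
  rcases Int.units_eq_one_or s with rfl | rfl <;> rcases ht with rfl | rfl <;> simp

/-- The symmetric group has a basic set stable under multiplication by the sign character. -/
theorem sym_basic {p n : ℕ} (hp : p.Prime) (hodd : Odd p) (hn : 0 < n) :
    ∃ B : Set (Equiv.Perm (Fin n) → ℂ),
      IsBasicSetOf (pRegular p (Equiv.Perm (Fin n))) (IrrChar (Equiv.Perm (Fin n))) B ∧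
      ∀ χ ∈ B, (fun g => sgnC (Fin n) g * χ g) ∈ B := by
  obtain ⟨r, hrp, hr⟩ := exists_residue (n := n) hodd hn
  refine ⟨B0 p r n, ⟨fun χ hχ => hχ.1, ?_, le_antisymm ?_ ?_⟩, fun χ hχ => B0_sgn hn hr hχ⟩
  · -- choose a good configuration for each character of the set
    have hch : ∀ ρ : B0 p r n, ∃ X : {X : conf n (dd n n) // GoodF p r X.1}, ∃ t : ℤˣ,
        alt (delta n) * phi n ρ.1 = ((t : ℤ) : ℂ) • alt (vec n X.1.1) := by
      rintro ⟨ρ, hρ, α, hα, hg, hs, hc⟩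
      refine ⟨⟨⟨Finset.univ.image α, image_mem_conf hα hs⟩, goodF_of_good hrp hg⟩, ?_⟩
      obtain ⟨s, hs'⟩ := alt_eq_vec hα
      have h1 := alt_mul_phi_chi (ι := Fin n) α (by rw [Fintype.card_fin, hs])
      rcases hc with h | h
      · refine ⟨s, ?_⟩
        show alt (delta n) * phi n ρ = _
        rw [← h, h1, hs']
      · refine ⟨-s, ?_⟩
        show alt (delta n) * phi n ρ = _
        rw [← neg_neg ρ, ← h, map_neg, mul_neg, h1, hs']
        simp
    choose Xf t hX using hch
    have hXinj : Function.Injective Xf := by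
      intro a b hab
      have h1 : alt (delta n) * phi n a.1 =
          alt (delta n) * phi n ((((t a * t b : ℤˣ) : ℤ) : ℂ) • b.1) := by
        rw [map_smul, mul_smul_comm, hX a, hX b, smul_smul, hab, ← Int.cast_mul, ← Units.val_mul,
          mul_assoc, Int.units_mul_self, mul_one]
      have h2 := cf_ext_phi (irr_isCF a.2.1) ((irr_isCF b.2.1).smul _) (by simp) h1
      have h3 := pair_irr a.2.1 b.2.1
      have h4 := pair_irr b.2.1 b.2.1
      by_contra hne
      rw [if_neg (fun h => hne (Subtype.ext h)), h2, pair_smul_left, h4, if_pos rfl, mul_one] at h3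
      rcases Int.units_eq_one_or (t a * t b) with h | h <;> rw [h] at h3 <;> norm_num at h3
    have hli := (linearIndependent_good (N := n) hrp (dd n n) le_rfl).comp Xf hXinj
    rw [linearIndependent_iff'] at hli ⊢
    intro s c hc ρ hρ
    have h1 : (KK p n (dd n n)).mkQ (alt (delta n) * phi n (∑ ρ ∈ s, (c ρ : ℂ) • ρ.1)) = 0 := by
      rw [← LinearMap.mem_ker, Submodule.ker_mkQ]
      have := phi_mem_KK (N := n) hp (φ := ∑ ρ ∈ s, (c ρ : ℂ) • ρ.1) (ι := Fin n) ?_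
      · rwa [Fintype.card_fin] at this
      · rw [← truncL_eq_zero_iff, map_sum, ← hc]
        refine Finset.sum_congr rfl fun ρ _ => ?_
        rw [Int.cast_smul_eq_zsmul, map_smul, truncL_apply]
    have h2 := hli s (fun ρ => (c ρ : ℂ) * ((t ρ : ℤ) : ℂ)) (by
      rw [← h1, map_sum, Finset.mul_sum, map_sum]
      refine Finset.sum_congr rfl fun ρ _ => ?_
      rw [map_smul, mul_smul_comm, hX, smul_smul, map_smul]
      rfl) ρ hρ
    rcases Int.units_eq_one_or (t ρ) with h | h <;> rw [h] at h2 <;> simpa using h2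
  · exact Submodule.span_mono (Set.image_mono fun χ hχ => hχ.1)
  · refine Submodule.span_le.mpr ?_
    rintro _ ⟨ρ, hρ, rfl⟩
    obtain ⟨x, hx, hxs, hxc⟩ := irr_eq_chi (N := n) hρ (by simp)
    rw [Fintype.card_fin] at hxs
    -- good combinations come from the span of the set
    have hgood : ∀ G ∈ goodSpan p r n (dd n n), ∃ φ ∈ Submodule.span ℤ (B0 p r n),
        alt (delta n) * phi n φ = G := by
      intro G hG
      induction hG using Submodule.span_induction with
      | mem G hG =>
        obtain ⟨α, hα, hg, hs, rfl⟩ := hG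
        have hs2 : ∑ i, α i = dd n (Fintype.card (Fin n)) := by rw [Fintype.card_fin, hs]
        refine ⟨chi α, ?_, alt_mul_phi_chi α hs2⟩
        rcases chi_irr α hα hs2 with h | h
        · exact Submodule.subset_span ⟨h, α, hα, hg, hs, Or.inl rfl⟩
        · rw [← neg_neg (chi α : Equiv.Perm (Fin n) → ℂ)]
          exact neg_mem (Submodule.subset_span ⟨h, α, hα, hg, hs, Or.inr (neg_neg _).symm⟩)
      | zero => exact ⟨0, zero_mem _, by simp⟩
      | add G G' _ _ h h' =>
        obtain ⟨a, ha, rfl⟩ := h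
        obtain ⟨b, hb, rfl⟩ := h'
        exact ⟨a + b, add_mem ha hb, by rw [map_add, mul_add]⟩
      | smul c G _ h =>
        obtain ⟨a, ha, rfl⟩ := h
        refine ⟨c • a, Submodule.smul_mem _ _ ha, by rw [map_zsmul, mul_smul_comm]⟩
    obtain ⟨G, hG, F, hF, hGF⟩ := straighten (r := r) hp.pos x hxs
    obtain ⟨φ, hφ, hφG⟩ := hgood G hG
    obtain ⟨ω, hω, hω0, hωF⟩ := exists_of_mem_KK (m := n) hp hF
    have hφv : φ ∈ virt (Equiv.Perm (Fin n)) :=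
      Submodule.span_mono (fun χ hχ => hχ.1) hφ
    have h1 : chi x = φ + ω := by
      refine cf_ext_phi (N := n) (virt_isCF (chi_mem_virt x)) ((virt_isCF hφv).add hω) (by simp) ?_
      rw [map_add, mul_add, hφG, hωF, ← hGF]
      exact alt_mul_phi_chi x (by rw [Fintype.card_fin, hxs])
    have h2 : truncL (pRegular p (Equiv.Perm (Fin n))) (chi x) =
        truncL (pRegular p (Equiv.Perm (Fin n))) φ := by
      rw [truncL_eq_iff]
      intro g hg
      rw [h1, Pi.add_apply, hω0 g hg, add_zero]
    have h3 : truncL (pRegular p (Equiv.Perm (Fin n))) φ ∈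
        Submodule.span ℤ (truncCF (pRegular p (Equiv.Perm (Fin n))) '' B0 p r n) := by
      have := Submodule.mem_map_of_mem (f := truncL (pRegular p (Equiv.Perm (Fin n)))) hφ
      rwa [Submodule.map_span] at this
    rw [← h2] at h3
    rcases hxc with h | h
    · rw [h] at h3
      exact h3
    · rw [h, map_neg] at h3
      exact neg_mem_iff.mp h3

end SymBasic

/-! ### Class functions of the alternating group that change sign under odd permutations -/

section Anti

open Equiv

variable {X : Type} [Fintype X] [DecidableEq X]

theorem sgnC_mul_self (s : Perm X) : sgnC X s * sgnC X s = 1 := by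
  rw [sgnC_apply]
  rcases Int.units_eq_one_or (Perm.sign s) with h | h <;> simp [h]

theorem sgnC_inv (s : Perm X) : sgnC X s⁻¹ = sgnC X s := by
  simp [sgnC_apply]

theorem sgnC_of_mem {s : Perm X} (h : s ∈ alternatingGroup X) : sgnC X s = 1 := by
  rw [sgnC_apply, Perm.mem_alternatingGroup.mp h]; simp

theorem sgnC_of_not_mem {s : Perm X} (h : s ∉ alternatingGroup X) : sgnC X s = -1 := by
  rw [Perm.mem_alternatingGroup] at h
  rw [sgnC_apply, (Int.units_eq_one_or (Perm.sign s)).resolve_left h]; simp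

theorem sgnC_eq_one_iff {s : Perm X} : sgnC X s = 1 ↔ s ∈ alternatingGroup X := by
  refine ⟨fun h => ?_, sgnC_of_mem⟩
  by_contra hs
  rw [sgnC_of_not_mem hs] at h
  norm_num at h

theorem conj_mem_alt_iff (s h : Perm X) :
    s * h * s⁻¹ ∈ alternatingGroup X ↔ h ∈ alternatingGroup X := by
  simp only [Perm.mem_alternatingGroup, map_mul, map_inv]
  rw [mul_comm, ← mul_assoc]; simp

/-- Extension by zero from the alternating group to the symmetric group. -/
def extA (f : alternatingGroup X → ℂ) : Perm X → ℂ := fun h =>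
  if hh : h ∈ alternatingGroup X then f ⟨h, hh⟩ else 0

/-- Restriction from the symmetric group to the alternating group. -/
def resA (Θ : Perm X → ℂ) : alternatingGroup X → ℂ := fun a => Θ a

theorem resA_apply (Θ : Perm X → ℂ) (a : alternatingGroup X) : resA Θ a = Θ a := rfl

theorem extA_coe (f : alternatingGroup X → ℂ) (a : alternatingGroup X) : extA f a = f a := by
  simp [extA]

theorem extA_of_mem (f : alternatingGroup X → ℂ) {h : Perm X} (hh : h ∈ alternatingGroup X) :
    extA f h = f ⟨h, hh⟩ := dif_pos hh

theorem extA_of_not_mem (f : alternatingGroup X → ℂ) {h : Perm X}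
    (hh : h ∉ alternatingGroup X) : extA f h = 0 := dif_neg hh

theorem extA_conj {f : alternatingGroup X → ℂ} (hf : IsCF f) {t : Perm X}
    (ht : t ∈ alternatingGroup X) (h : Perm X) : extA f (t * h * t⁻¹) = extA f h := by
  by_cases hh : h ∈ alternatingGroup X
  · rw [extA_of_mem _ ((conj_mem_alt_iff t h).mpr hh), extA_of_mem _ hh]
    exact hf ⟨h, hh⟩ ⟨t, ht⟩
  · rw [extA_of_not_mem _ (fun h' => hh ((conj_mem_alt_iff t h).mp h')), extA_of_not_mem _ hh]

theorem sum_extA_mul (f : alternatingGroup X → ℂ) (F : Perm X → ℂ) :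
    ∑ h, extA f h * F h = ∑ a : alternatingGroup X, f a * F a := by
  symm
  refine Fintype.sum_of_injective _ Subtype.val_injective _ _ ?_ fun a => ?_
  · intro h hh
    rw [extA_of_not_mem _ fun h' => hh ⟨⟨h, h'⟩, rfl⟩, zero_mul]
  · rw [extA_coe]

/-- Functions on the symmetric group that are multiplied by the sign under conjugation. -/
def IsAnti (Θ : Perm X → ℂ) : Prop := ∀ s h : Perm X, Θ (s * h * s⁻¹) = sgnC X s * Θ h

theorem IsAnti.odd_eq_zero {Θ : Perm X → ℂ} (hΘ : IsAnti Θ) {h : Perm X}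
    (hh : h ∉ alternatingGroup X) : Θ h = 0 := by
  have := hΘ h h
  rw [mul_inv_cancel_right, sgnC_of_not_mem hh] at this
  linear_combination (1 / 2) * this

theorem IsAnti.extA_resA {Θ : Perm X → ℂ} (hΘ : IsAnti Θ) : extA (resA Θ) = Θ := by
  funext h
  by_cases hh : h ∈ alternatingGroup X
  · rw [extA_of_mem _ hh, resA_apply]
  · rw [extA_of_not_mem _ hh, hΘ.odd_eq_zero hh]

theorem IsAnti.isCF {Θ : Perm X → ℂ} (hΘ : IsAnti Θ) : IsCF (resA Θ) := by
  intro g h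
  rw [resA_apply, resA_apply]
  have := hΘ h g
  rw [sgnC_of_mem h.2, one_mul] at this
  exact this

theorem pair_resA {Θ : Perm X → ℂ} (f : alternatingGroup X → ℂ) :
    pair (resA Θ) f = (Nat.card (alternatingGroup X) : ℂ)⁻¹ * ∑ h, Θ h * extA f h⁻¹ := by
  rw [pair]
  congr 1
  have := sum_extA_mul f fun h => Θ h⁻¹
  rw [← Equiv.sum_comp (Equiv.inv (Perm X))] at this
  rw [← Equiv.sum_comp (Equiv.inv (alternatingGroup X))] at this
  simp only [Equiv.inv_apply, inv_inv, InvMemClass.coe_inv] at this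
  rw [Finset.sum_congr rfl fun h _ => mul_comm (Θ h) _, this]
  exact Finset.sum_congr rfl fun h _ => mul_comm _ _

theorem IsAnti.pair_resA' {Θ Ψ : Perm X → ℂ} (hΨ : IsAnti Ψ) :
    pair (resA Θ) (resA Ψ) = (Nat.card (alternatingGroup X) : ℂ)⁻¹ * ∑ h, Θ h * Ψ h⁻¹ := by
  rw [pair_resA, hΨ.extA_resA]

/-- The antisymmetrisation of a function on the alternating group; for a class function `f` and
an odd permutation `τ` it is `f - f^τ` on even permutations (for at least two points). -/
def dif (f : alternatingGroup X → ℂ) : Perm X → ℂ := fun h =>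
  (Nat.card (alternatingGroup X) : ℂ)⁻¹ * ∑ s : Perm X, sgnC X s * extA f (s * h * s⁻¹)

theorem dif_isAnti (f : alternatingGroup X → ℂ) : IsAnti (dif f) := by
  intro t h
  simp only [dif]
  rw [← Equiv.sum_comp (Equiv.mulRight t) (fun s : Perm X => sgnC X s * extA f (s * h * s⁻¹))]
  rw [mul_left_comm]
  congr 1
  rw [Finset.mul_sum]
  refine Finset.sum_congr rfl fun s _ => ?_
  simp only [Equiv.coe_mulRight, map_mul, mul_inv_rev]
  rw [show s * t * h * (t⁻¹ * s⁻¹) = s * (t * h * t⁻¹) * s⁻¹ by group]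
  linear_combination (-sgnC X s * extA f (s * (t * h * t⁻¹) * s⁻¹)) * sgnC_mul_self t

theorem card_alt_ne : (Nat.card (alternatingGroup X) : ℂ) ≠ 0 := by
  exact_mod_cast Nat.card_pos.ne'

theorem card_perm_ne : (Nat.card (Perm X) : ℂ) ≠ 0 := by
  exact_mod_cast Nat.pos_iff_ne_zero.mp Nat.card_pos

/-- The antisymmetrisation can be moved across a sum against an antisymmetric function. -/
theorem sum_dif_mul (f : alternatingGroup X → ℂ) {F : Perm X → ℂ} (hF : IsAnti F) :
    (Nat.card (alternatingGroup X) : ℂ) * ∑ h, dif f h * F h⁻¹ =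
      Nat.card (Perm X) * ∑ h, extA f h * F h⁻¹ := by
  simp only [dif, mul_assoc, ← Finset.mul_sum]
  rw [mul_inv_cancel_left₀ card_alt_ne]
  simp only [Finset.sum_mul]
  rw [Finset.sum_comm]
  have : ∀ s : Perm X, ∑ h, sgnC X s * extA f (s * h * s⁻¹) * F h⁻¹ =
      ∑ h, extA f h * F h⁻¹ := by
    intro s
    rw [← Equiv.sum_comp (MulAut.conj s).toEquiv (fun h => extA f h * F h⁻¹)]
    refine Finset.sum_congr rfl fun h _ => ?_
    have := hF s h⁻¹
    simp only [MulEquiv.toEquiv_eq_coe, EquivLike.coe_coe, MulAut.conj_apply]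
    rw [show (s * h * s⁻¹)⁻¹ = s * h⁻¹ * s⁻¹ by group, this]
    ring
  have h2 := Finset.sum_congr (s₁ := (Finset.univ : Finset (Perm X))) rfl fun s _ => this s
  rw [Finset.sum_const, Finset.card_univ, ← Nat.card_eq_fintype_card, nsmul_eq_mul] at h2
  rw [← h2]
  simp only [mul_assoc]

theorem IsAnti.pair_dif {Θ : Perm X → ℂ} (hΘ : IsAnti Θ) (f : alternatingGroup X → ℂ) :
    (Nat.card (alternatingGroup X) : ℂ) * pair (resA Θ) (resA (dif f)) =
      Nat.card (Perm X) * pair (resA Θ) f := by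
  have h1 := sum_dif_mul f hΘ
  rw [pair_comm, hΘ.pair_resA', mul_left_comm, h1, pair_comm (resA Θ) f, ]
  rw [pair, sum_extA_mul f fun h => Θ h⁻¹]
  simp only [resA_apply, InvMemClass.coe_inv]
  ring

/-- The order of the centralizer of `g`. -/
def cz (g : Perm X) : ℕ := (Finset.univ.filter fun s : Perm X => s * g = g * s).card

theorem cz_pos (g : Perm X) : 0 < cz g :=
  Finset.card_pos.mpr ⟨1, by simp⟩

theorem cz_ne (g : Perm X) : (cz g : ℂ) ≠ 0 := by exact_mod_cast (cz_pos g).ne'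

theorem card_conj_fiber (g u : Perm X) :
    (Finset.univ.filter fun s : Perm X => s * g * s⁻¹ = u * g * u⁻¹).card = cz g := by
  refine Finset.card_bij (fun s _ => u⁻¹ * s) ?_ ?_ ?_
  · intro s hs
    simp only [Finset.mem_filter, Finset.mem_univ, true_and] at hs ⊢
    have : s * g = u * g * u⁻¹ * s := by rw [← hs]; group
    rw [mul_assoc, this]; group
  · intro a _ b _ h; exact mul_left_cancel h
  · intro s hs
    simp only [Finset.mem_filter, Finset.mem_univ, true_and] at hs ⊢
    refine ⟨u * s, ?_, by group⟩
    rw [mul_assoc u s g, hs]; group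

theorem IsAnti.sum_supp {Θ Ψ : Perm X → ℂ} (hΘ : IsAnti Θ) (hΨ : IsAnti Ψ) {g : Perm X}
    (hs : ∀ h, Θ h ≠ 0 → IsConj g h) :
    (cz g : ℂ) * ∑ h, Θ h * Ψ h⁻¹ = Nat.card (Perm X) * (Θ g * Ψ g⁻¹) := by
  have h1 : ∑ s : Perm X, Θ (s * g * s⁻¹) * Ψ (s * g * s⁻¹)⁻¹ =
      Nat.card (Perm X) * (Θ g * Ψ g⁻¹) := by
    rw [Finset.sum_congr rfl (g := fun _ => Θ g * Ψ g⁻¹), Finset.sum_const, Finset.card_univ,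
      ← Nat.card_eq_fintype_card, nsmul_eq_mul]
    intro s _
    rw [show (s * g * s⁻¹)⁻¹ = s * g⁻¹ * s⁻¹ by group, hΘ, hΨ]
    linear_combination (Θ g * Ψ g⁻¹) * sgnC_mul_self s
  rw [← h1, ← Finset.sum_fiberwise Finset.univ (fun s : Perm X => s * g * s⁻¹)
    (fun s => Θ (s * g * s⁻¹) * Ψ (s * g * s⁻¹)⁻¹), Finset.mul_sum]
  refine Finset.sum_congr rfl fun h _ => ?_
  rw [Finset.sum_congr (s₁ := Finset.univ.filter fun s : Perm X => s * g * s⁻¹ = h) rfl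
    (g := fun _ => Θ h * Ψ h⁻¹), Finset.sum_const, nsmul_eq_mul]
  · by_cases h0 : Θ h = 0
    · simp [h0]
    · obtain ⟨u, rfl⟩ := isConj_iff.mp (hs h h0)
      rw [card_conj_fiber]
  · intro s hs
    rw [(Finset.mem_filter.mp hs).2]

/-- Permutations whose centralizer consists of even permutations: those whose conjugacy class
splits in the alternating group. -/
def IsSplit (g : Perm X) : Prop := ∀ s : Perm X, s * g = g * s → s ∈ alternatingGroup X

theorem IsAnti.isSplit {Θ : Perm X → ℂ} (hΘ : IsAnti Θ) {h : Perm X} (h0 : Θ h ≠ 0) :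
    IsSplit h := by
  intro s hs
  have := hΘ s h
  rw [hs, mul_inv_cancel_right] at this
  rw [← sgnC_eq_one_iff]
  have h2 : (sgnC X s - 1) * Θ h = 0 := by linear_combination -this
  exact sub_eq_zero.mp ((mul_eq_zero.mp h2).resolve_right h0)

/-- A virtual character of the alternating group, antisymmetric under odd permutations,
supported on the class of `g` and normalised like the difference of the two irreducible
characters attached to a split class. -/
structure SplitChar (g : Perm X) (Θ : Perm X → ℂ) : Prop where
  anti : IsAnti Θ
  supp : ∀ h, Θ h ≠ 0 → IsConj g h
  virt : resA Θ ∈ virt (alternatingGroup X)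
  val : Θ g * Θ g⁻¹ = cz g

theorem SplitChar.norm {g : Perm X} {Θ : Perm X → ℂ} (h : SplitChar g Θ) :
    (Nat.card (alternatingGroup X) : ℂ) * pair (resA Θ) (resA Θ) = Nat.card (Perm X) := by
  rw [h.anti.pair_resA', mul_inv_cancel_left₀ card_alt_ne]
  have := h.anti.sum_supp h.anti h.supp
  rw [h.val] at this
  apply mul_left_cancel₀ (cz_ne g)
  rw [this]; ring

theorem isConj_inv (g : Perm X) : IsConj g g⁻¹ := by
  rw [Perm.isConj_iff_cycleType_eq, Perm.cycleType_inv]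

theorem IsAnti.inv_ne_zero {Θ : Perm X → ℂ} (hΘ : IsAnti Θ) {g : Perm X} (h : Θ g ≠ 0) :
    Θ g⁻¹ ≠ 0 := by
  obtain ⟨u, hu⟩ := isConj_iff.mp (isConj_inv g)
  rw [← hu, hΘ]
  exact mul_ne_zero (left_ne_zero_of_mul_eq_one (sgnC_mul_self u)) h

theorem SplitChar.ne_zero {g : Perm X} {Θ : Perm X → ℂ} (h : SplitChar g Θ) : Θ g ≠ 0 := by
  intro h0
  have := h.val
  rw [h0, zero_mul] at this
  exact cz_ne g this.symm

theorem SplitChar.sq {g : Perm X} {Θ : Perm X → ℂ} (h : SplitChar g Θ) :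
    Θ g ^ 2 = cz g ∨ Θ g ^ 2 = -cz g := by
  obtain ⟨u, hu⟩ := isConj_iff.mp (isConj_inv g)
  have h1 := h.val
  rw [← hu, h.anti] at h1
  by_cases hs : u ∈ alternatingGroup X
  · left; rw [sgnC_of_mem hs] at h1; rw [← h1]; ring
  · right; rw [sgnC_of_not_mem hs] at h1; rw [← h1]; ring

end Anti

section AntiPairs

open Equiv

variable {X : Type} [Fintype X] [DecidableEq X]

theorem exists_odd_perm [Nontrivial X] : ∃ τ : Perm X, τ ∉ alternatingGroup X := by
  obtain ⟨a, b, hab⟩ := exists_pair_ne X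
  refine ⟨Equiv.swap a b, ?_⟩
  rw [Perm.mem_alternatingGroup, Perm.sign_swap hab]
  decide

/-- The conjugate of a function on the alternating group by a permutation. -/
def tw (τ : Perm X) (f : alternatingGroup X → ℂ) : alternatingGroup X → ℂ :=
  f ∘ (MulAut.conjNormal τ : alternatingGroup X ≃* alternatingGroup X)

theorem tw_apply (τ : Perm X) (f : alternatingGroup X → ℂ) (a : alternatingGroup X) :
    tw τ f a = extA f (τ * a * τ⁻¹) := by
  rw [← MulAut.conjNormal_apply, extA_coe]; rfl

theorem tw_irr (τ : Perm X) {ρ : alternatingGroup X → ℂ} (h : ρ ∈ IrrChar (alternatingGroup X)) :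
    tw τ ρ ∈ IrrChar (alternatingGroup X) := irr_comp_equiv h _

theorem tw_virt (τ : Perm X) {ρ : alternatingGroup X → ℂ} (h : ρ ∈ virt (alternatingGroup X)) :
    tw τ ρ ∈ virt (alternatingGroup X) :=
  virt_comp h (MulAut.conjNormal τ : alternatingGroup X ≃* alternatingGroup X).toMonoidHom

theorem card_perm_eq [Nontrivial X] :
    (Nat.card (Perm X) : ℂ) = 2 * Nat.card (alternatingGroup X) := by
  exact_mod_cast (two_mul_nat_card_alternatingGroup (α := X)).symm

theorem sum_sgnC [Nontrivial X] : ∑ s : Perm X, sgnC X s = 0 := by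
  obtain ⟨τ, hτ⟩ := exists_odd_perm (X := X)
  have := Equiv.sum_comp (Equiv.mulLeft τ) (fun s => sgnC X s)
  simp only [Equiv.coe_mulLeft, map_mul, ← Finset.mul_sum, sgnC_of_not_mem hτ] at this
  linear_combination (-1 / 2) * this

theorem sum_by_sign [Nontrivial X] (F : Perm X → ℂ) (a b : ℂ)
    (ha : ∀ s ∈ alternatingGroup X, F s = a) (hb : ∀ s ∉ alternatingGroup X, F s = b) :
    ∑ s, F s = Nat.card (alternatingGroup X) * (a + b) := by
  have : ∀ s, F s = (a + b) / 2 + sgnC X s * ((a - b) / 2) := by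
    intro s
    by_cases hs : s ∈ alternatingGroup X
    · rw [ha s hs, sgnC_of_mem hs]; ring
    · rw [hb s hs, sgnC_of_not_mem hs]; ring
  rw [Finset.sum_congr rfl fun s _ => this s, Finset.sum_add_distrib, ← Finset.sum_mul, sum_sgnC,
    Finset.sum_const, Finset.card_univ, ← Nat.card_eq_fintype_card, nsmul_eq_mul, card_perm_eq]
  ring

theorem extA_conj_odd {f : alternatingGroup X → ℂ} (hf : IsCF f) {s τ : Perm X}
    (hs : s ∉ alternatingGroup X) (hτ : τ ∉ alternatingGroup X) (h : Perm X) :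
    extA f (s * h * s⁻¹) = extA f (τ * h * τ⁻¹) := by
  have hm : s * τ⁻¹ ∈ alternatingGroup X := by
    rw [← sgnC_eq_one_iff, map_mul, sgnC_inv, sgnC_of_not_mem hs, sgnC_of_not_mem hτ]; norm_num
  rw [← extA_conj hf hm (τ * h * τ⁻¹)]
  congr 1; group

theorem resA_dif [Nontrivial X] {f : alternatingGroup X → ℂ} (hf : IsCF f) {τ : Perm X}
    (hτ : τ ∉ alternatingGroup X) : resA (dif f) = f - tw τ f := by
  funext a
  rw [resA_apply, dif, sum_by_sign _ (f a) (-tw τ f a), inv_mul_cancel_left₀ card_alt_ne]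
  · simp [sub_eq_add_neg]
  · intro s hs
    rw [extA_conj hf hs, extA_coe, sgnC_of_mem hs, one_mul]
  · intro s hs
    rw [extA_conj_odd hf hs hτ, ← tw_apply, sgnC_of_not_mem hs]; ring

theorem resA_dif_virt [Nontrivial X] {f : alternatingGroup X → ℂ}
    (hf : f ∈ virt (alternatingGroup X)) : resA (dif f) ∈ virt (alternatingGroup X) := by
  obtain ⟨τ, hτ⟩ := exists_odd_perm (X := X)
  rw [resA_dif (virt_isCF hf) hτ]
  exact sub_mem hf (tw_virt τ hf)

theorem dif_norm [Nontrivial X] {ρ : alternatingGroup X → ℂ}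
    (hρ : ρ ∈ IrrChar (alternatingGroup X)) (h0 : dif ρ ≠ 0) :
    pair (resA (dif ρ)) (resA (dif ρ)) = 2 := by
  obtain ⟨τ, hτ⟩ := exists_odd_perm (X := X)
  have hne : ρ ≠ tw τ ρ := by
    intro h
    apply h0
    have : resA (dif ρ) = 0 := by rw [resA_dif (irr_isCF hρ) hτ, ← h, sub_self]
    rw [← (dif_isAnti ρ).extA_resA, this]
    funext x; simp [extA]
  rw [resA_dif (irr_isCF hρ) hτ, pair_sub_left, pair_sub_right, pair_sub_right,
    pair_irr hρ hρ, pair_irr hρ (tw_irr τ hρ), pair_irr (tw_irr τ hρ) hρ,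
    pair_irr (tw_irr τ hρ) (tw_irr τ hρ), if_pos rfl, if_pos rfl, if_neg hne, if_neg hne.symm]
  norm_num

/-- Two virtual characters of norm two whose product is a non-zero even number agree up to
sign. -/
theorem norm_two_uniq {G : Type} [Group G] [Fintype G] {f D : G → ℂ} (hf : f ∈ virt G)
    (hD : D ∈ virt G) (hff : pair f f = 2) (hDD : pair D D = 2) {k : ℤ} (hk : k ≠ 0)
    (hfD : pair f D = 2 * k) : f = D ∨ f = -D := by
  have key : ∀ (u : G → ℂ) (z : ℤ), u ∈ virt G → pair u u = z → z ≤ 0 → u = 0 := by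
    intro u z hu huz hz
    obtain ⟨c, hc, huc, hp⟩ := virt_expand hu
    have hs : ∑ χ ∈ irrF G, c χ * c χ = z := by
      have := hp u hu
      rw [huz, Finset.sum_congr rfl fun χ hχ => by rw [hc χ (mem_irrF.mp hχ)]] at this
      exact_mod_cast this.symm
    have hz0 : ∑ χ ∈ irrF G, c χ * c χ = 0 :=
      le_antisymm (by omega) (Finset.sum_nonneg fun i _ => mul_self_nonneg _)
    rw [huc]
    refine Finset.sum_eq_zero fun χ hχ => ?_
    rw [mul_self_eq_zero.mp
      ((Finset.sum_eq_zero_iff_of_nonneg fun i _ => mul_self_nonneg _).mp hz0 χ hχ), zero_smul]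
  rcases lt_or_gt_of_ne hk with h | h
  · right
    have := key (f + D) (4 + 4 * k) (add_mem hf hD) (by
      rw [pair_add_left, pair_add_right, pair_add_right, pair_comm D f, hff, hDD, hfD]
      push_cast; ring) (by omega)
    exact eq_neg_of_add_eq_zero_left this
  · left
    have := key (f - D) (4 - 4 * k) (sub_mem hf hD) (by
      rw [pair_sub_left, pair_sub_right, pair_sub_right, pair_comm D f, hff, hDD, hfD]
      push_cast; ring) (by omega)
    exact sub_eq_zero.mp this

theorem IsAnti.ext {Θ Ψ : Perm X → ℂ} (h : IsAnti Θ) (h' : IsAnti Ψ) (he : resA Θ = resA Ψ) :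
    Θ = Ψ := by rw [← h.extA_resA, he, h'.extA_resA]

theorem IsAnti.neg {Θ : Perm X → ℂ} (h : IsAnti Θ) : IsAnti (-Θ) := by
  intro s t; simp [h s t]

theorem IsAnti.pair_dif_two [Nontrivial X] {Θ : Perm X → ℂ} (hΘ : IsAnti Θ)
    (f : alternatingGroup X → ℂ) :
    pair (resA Θ) (resA (dif f)) = 2 * pair (resA Θ) f := by
  have := hΘ.pair_dif f
  rw [card_perm_eq, mul_comm (2 : ℂ), mul_assoc] at this
  exact mul_left_cancel₀ card_alt_ne this

theorem SplitChar.norm_two [Nontrivial X] {g : Perm X} {Θ : Perm X → ℂ} (h : SplitChar g Θ) :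
    pair (resA Θ) (resA Θ) = 2 := by
  have := h.norm
  rw [card_perm_eq, mul_comm (2 : ℂ)] at this
  exact mul_left_cancel₀ card_alt_ne this

/-- An irreducible character not orthogonal to a split character determines it up to sign. -/
theorem SplitChar.eq_dif_of_pair [Nontrivial X] {g : Perm X} {Θ : Perm X → ℂ}
    (h : SplitChar g Θ) {ρ : alternatingGroup X → ℂ} (hρ : ρ ∈ IrrChar (alternatingGroup X))
    (hne : pair (resA Θ) ρ ≠ 0) : Θ = dif ρ ∨ Θ = -dif ρ := by
  obtain ⟨k, hk⟩ := virt_pair_int h.virt (irr_mem_virt hρ)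
  have h2 := h.anti.pair_dif_two ρ
  rw [hk] at h2 hne
  have hk0 : k ≠ 0 := by rintro rfl; simp at hne
  have hd : dif ρ ≠ 0 := by
    intro h0
    rw [h0] at h2
    have : resA (0 : Perm X → ℂ) = 0 := rfl
    rw [this, pair_zero_right] at h2
    exact hne (by linear_combination (-1 / 2) * h2)
  rcases norm_two_uniq h.virt (resA_dif_virt (irr_mem_virt hρ)) h.norm_two (dif_norm hρ hd) hk0 h2
    with h3 | h3
  · left; exact h.anti.ext (dif_isAnti ρ) h3
  · right; exact h.anti.ext (dif_isAnti ρ).neg h3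

theorem SplitChar.eq_dif_of_ne [Nontrivial X] {g : Perm X} {Θ : Perm X → ℂ}
    (h : SplitChar g Θ) {ρ : alternatingGroup X → ℂ} (hρ : ρ ∈ IrrChar (alternatingGroup X))
    (hne : dif ρ g ≠ 0) : Θ = dif ρ ∨ Θ = -dif ρ := by
  apply h.eq_dif_of_pair hρ
  intro h0
  have h1 := h.anti.pair_dif_two ρ
  rw [h0, mul_zero, (dif_isAnti ρ).pair_resA'] at h1
  have h2 := (mul_eq_zero.mp h1).resolve_left (inv_ne_zero card_alt_ne)
  have h3 := h.anti.sum_supp (dif_isAnti ρ) h.supp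
  rw [h2, mul_zero] at h3
  exact mul_ne_zero card_perm_ne (mul_ne_zero h.ne_zero ((dif_isAnti ρ).inv_ne_zero hne)) h3.symm

theorem neg_dif (f : alternatingGroup X → ℂ) : dif (-f) = -dif f := by
  funext h
  have : ∀ x, extA (-f) x = -extA f x := by
    intro x; unfold extA; split_ifs <;> simp
  simp [dif, this]

theorem SplitChar.exists_dif {g : Perm X} {Θ : Perm X → ℂ} (h : SplitChar g Θ) :
    ∃ α ∈ _root_.virt (alternatingGroup X), dif α = Θ := by
  rcases subsingleton_or_nontrivial X with hX | hX
  · refine ⟨resA Θ, h.virt, ?_⟩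
    funext x
    have h1 : ∀ s : Perm X, s = 1 := fun s => Subsingleton.elim _ _
    have h2 : Nat.card (alternatingGroup X) = 1 := by
      have : Subsingleton (alternatingGroup X) := inferInstance
      exact Nat.card_unique
    rw [dif, h2, Fintype.sum_subsingleton _ 1, h.anti.extA_resA]
    simp
  · have : ∃ ρ ∈ IrrChar (alternatingGroup X), pair (resA Θ) ρ ≠ 0 := by
      by_contra hcon
      push Not at hcon
      have := cf_eq_zero h.anti.isCF hcon
      have h2 := h.norm_two
      rw [this, pair_zero_left] at h2
      norm_num at h2
    obtain ⟨ρ, hρ, hne⟩ := this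
    rcases h.eq_dif_of_pair hρ hne with h3 | h3
    · exact ⟨ρ, irr_mem_virt hρ, h3.symm⟩
    · exact ⟨-ρ, neg_mem (irr_mem_virt hρ), by rw [neg_dif, h3]⟩

end AntiPairs

/-! ### Split characters of products -/

section Step

open Equiv

variable {α β : Type} [Fintype α] [DecidableEq α] [Fintype β] [DecidableEq β]

theorem minimalPeriod_semiconj {X Y : Type} {f : X → Y} (hf : Function.Injective f) {a : X → X}
    {b : Y → Y} (h : Function.Semiconj f a b) (x : X) :
    Function.minimalPeriod b (f x) = Function.minimalPeriod a x := by
  rw [Function.minimalPeriod_eq_minimalPeriod_iff]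
  intro n
  have := (h.iterate_right n).eq x
  rw [Function.IsPeriodicPt, Function.IsPeriodicPt, Function.IsFixedPt, Function.IsFixedPt,
    ← this, hf.eq_iff]

theorem minimalPeriod_conj {X : Type} (s h : Perm X) (x : X) :
    Function.minimalPeriod (s * h * s⁻¹ : Perm X) (s x) = Function.minimalPeriod h x :=
  minimalPeriod_semiconj s.injective (fun y => by simp) x

theorem minimalPeriod_of_isConj {X : Type} {g h : Perm X} (hgh : IsConj g h) (x : X) :
    ∃ y, Function.minimalPeriod h x = Function.minimalPeriod g y := by
  obtain ⟨u, rfl⟩ := isConj_iff.mp hgh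
  refine ⟨u⁻¹ x, ?_⟩
  rw [← minimalPeriod_conj u g (u⁻¹ x)]; simp

theorem minimalPeriod_sum_inl (y : Perm α × Perm β) (a : α) :
    Function.minimalPeriod (Perm.sumCongrHom α β y) (Sum.inl a) =
      Function.minimalPeriod y.1 a :=
  minimalPeriod_semiconj Sum.inl_injective (fun y => by simp) a

theorem minimalPeriod_sum_inr (y : Perm α × Perm β) (b : β) :
    Function.minimalPeriod (Perm.sumCongrHom α β y) (Sum.inr b) =
      Function.minimalPeriod y.2 b :=
  minimalPeriod_semiconj Sum.inr_injective (fun y => by simp) b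

/-- If the cycle lengths of `g₁` and `g₂` are disjoint, conjugation between elements of type
`(g₁, g₂)` preserves the two blocks. -/
theorem conj_mem_range {g1 : Perm α} {g2 : Perm β} {l : ℕ}
    (h1 : ∀ a, Function.minimalPeriod g1 a = l) (h2 : ∀ b, Function.minimalPeriod g2 b ≠ l)
    {s : Perm (α ⊕ β)} {y z : Perm α × Perm β} (hy1 : IsConj g1 y.1)
    (hz2 : IsConj g2 z.2)
    (hs : s * Perm.sumCongrHom α β y * s⁻¹ = Perm.sumCongrHom α β z) :
    s ∈ (Perm.sumCongrHom α β).range := by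
  apply Perm.mem_sumCongrHom_range_of_perm_mapsTo_inl
  rintro _ ⟨a, rfl⟩
  rcases hsa : s (Sum.inl a) with a' | b
  · exact ⟨a', rfl⟩
  · exfalso
    have := minimalPeriod_conj s (Perm.sumCongrHom α β y) (Sum.inl a)
    rw [hs, hsa, minimalPeriod_sum_inl, minimalPeriod_sum_inr] at this
    obtain ⟨a', ha'⟩ := minimalPeriod_of_isConj hy1 a
    obtain ⟨b', hb'⟩ := minimalPeriod_of_isConj hz2 b
    rw [ha', hb', h1] at this
    exact h2 b' this

theorem sgnC_sum (y : Perm α × Perm β) :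
    sgnC (α ⊕ β) (Perm.sumCongrHom α β y) = sgnC α y.1 * sgnC β y.2 := by
  simp only [sgnC_apply, Perm.sumCongrHom_apply, Perm.sign_sumCongr]
  push_cast; rfl

/-- The extension by zero of an exterior product to the symmetric group. -/
def boxF (Θ₁ : Perm α → ℂ) (Θ₂ : Perm β → ℂ) : Perm (α ⊕ β) → ℂ := fun h =>
  ∑ y : Perm α × Perm β, if Perm.sumCongrHom α β y = h then Θ₁ y.1 * Θ₂ y.2 else 0

theorem boxF_coe (Θ₁ : Perm α → ℂ) (Θ₂ : Perm β → ℂ) (y : Perm α × Perm β) :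
    boxF Θ₁ Θ₂ (Perm.sumCongrHom α β y) = Θ₁ y.1 * Θ₂ y.2 := by
  rw [boxF, Finset.sum_eq_single y]
  · simp
  · intro z _ hz
    rw [if_neg fun h => hz (Perm.sumCongrHom_injective h)]
  · simp

theorem boxF_ne_zero {Θ₁ : Perm α → ℂ} {Θ₂ : Perm β → ℂ} {h : Perm (α ⊕ β)}
    (h0 : boxF Θ₁ Θ₂ h ≠ 0) :
    ∃ y : Perm α × Perm β, Perm.sumCongrHom α β y = h ∧ Θ₁ y.1 ≠ 0 ∧ Θ₂ y.2 ≠ 0 := by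
  obtain ⟨y, _, hy⟩ := Finset.exists_ne_zero_of_sum_ne_zero h0
  by_cases hyh : Perm.sumCongrHom α β y = h
  · rw [if_pos hyh] at hy
    exact ⟨y, hyh, left_ne_zero_of_mul hy, right_ne_zero_of_mul hy⟩
  · rw [if_neg hyh] at hy
    exact absurd rfl hy

theorem sum_boxF (Θ₁ : Perm α → ℂ) (Θ₂ : Perm β → ℂ) (F : Perm (α ⊕ β) → ℂ) :
    ∑ h, boxF Θ₁ Θ₂ h * F h = ∑ y1, ∑ y2, Θ₁ y1 * Θ₂ y2 * F (Perm.sumCongrHom α β (y1, y2)) := by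
  simp only [boxF, Finset.sum_mul]
  rw [Finset.sum_comm, Fintype.sum_prod_type]
  refine Finset.sum_congr rfl fun y1 _ => Finset.sum_congr rfl fun y2 _ => ?_
  simp

theorem extA_boxF {Θ₁ : Perm α → ℂ} {Θ₂ : Perm β → ℂ} (h1 : IsAnti Θ₁) (h2 : IsAnti Θ₂) :
    extA (resA (boxF Θ₁ Θ₂)) = boxF Θ₁ Θ₂ := by
  funext h
  by_cases hh : h ∈ alternatingGroup (α ⊕ β)
  · rw [extA_of_mem _ hh, resA_apply]
  · rw [extA_of_not_mem _ hh]
    by_contra hne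
    obtain ⟨y, rfl, hy1, hy2⟩ := boxF_ne_zero (Ne.symm hne)
    apply hh
    rw [← sgnC_eq_one_iff, sgnC_sum, sgnC_of_mem, sgnC_of_mem, one_mul]
    · by_contra hc; exact hy2 (h2.odd_eq_zero hc)
    · by_contra hc; exact hy1 (h1.odd_eq_zero hc)

/-- The product of even permutations of two blocks. -/
def altSum : alternatingGroup α × alternatingGroup β →* alternatingGroup (α ⊕ β) :=
  MonoidHom.codRestrict
    ((Perm.sumCongrHom α β).comp
      ((alternatingGroup α).subtype.prodMap (alternatingGroup β).subtype)) _ fun y => by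
    rw [← sgnC_eq_one_iff]
    change sgnC _ (Perm.sumCongrHom α β (y.1, y.2)) = 1
    rw [sgnC_sum, sgnC_of_mem y.1.2, sgnC_of_mem y.2.2, one_mul]

theorem altSum_coe (y : alternatingGroup α × alternatingGroup β) :
    (altSum y : Perm (α ⊕ β)) = Perm.sumCongrHom α β (y.1, y.2) := rfl

/-- The induced antisymmetric function of an exterior product. -/
def indBox (Θ₁ : Perm α → ℂ) (Θ₂ : Perm β → ℂ) : Perm (α ⊕ β) → ℂ :=
  ((Nat.card (alternatingGroup (α ⊕ β)) : ℂ) / (Nat.card (Perm α) * Nat.card (Perm β))) •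
    dif (resA (boxF Θ₁ Θ₂))

theorem indBox_anti (Θ₁ : Perm α → ℂ) (Θ₂ : Perm β → ℂ) : IsAnti (indBox Θ₁ Θ₂) := by
  intro s h
  simp only [indBox, Pi.smul_apply, dif_isAnti _ s h, smul_eq_mul]
  ring

theorem indBox_eq {Θ₁ : Perm α → ℂ} {Θ₂ : Perm β → ℂ} (h1 : IsAnti Θ₁) (h2 : IsAnti Θ₂)
    (h : Perm (α ⊕ β)) : indBox Θ₁ Θ₂ h = ((Nat.card (Perm α) : ℂ) * Nat.card (Perm β))⁻¹ *
      ∑ s, sgnC _ s * boxF Θ₁ Θ₂ (s * h * s⁻¹) := by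
  rw [indBox, Pi.smul_apply, dif, extA_boxF h1 h2, smul_eq_mul, div_eq_mul_inv]
  have := card_alt_ne (X := α ⊕ β)
  field_simp

theorem sum_dif_dif (α1 : alternatingGroup α → ℂ) (α2 : alternatingGroup β → ℂ)
    {F : Perm α → Perm β → ℂ} (a1 : ∀ y2, IsAnti fun y1 => F y1 y2) (a2 : ∀ y1, IsAnti (F y1)) :
    (Nat.card (alternatingGroup α) : ℂ) * Nat.card (alternatingGroup β) *
      ∑ y1, ∑ y2, dif α1 y1 * dif α2 y2 * F y1⁻¹ y2⁻¹ =
      Nat.card (Perm α) * Nat.card (Perm β) *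
      ∑ y1 : alternatingGroup α, ∑ y2 : alternatingGroup β,
        α1 y1 * α2 y2 * F (y1 : Perm α)⁻¹ (y2 : Perm β)⁻¹ := by
  have i1 : ∀ y1, (Nat.card (alternatingGroup β) : ℂ) *
      ∑ y2, dif α1 y1 * dif α2 y2 * F y1⁻¹ y2⁻¹ =
      dif α1 y1 * (Nat.card (Perm β) *
        ∑ y2 : alternatingGroup β, α2 y2 * F y1⁻¹ (y2 : Perm β)⁻¹) := by
    intro y1
    rw [← sum_extA_mul α2 (fun y2 => F y1⁻¹ y2⁻¹), ← sum_dif_mul α2 (a2 y1⁻¹), mul_left_comm,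
      Finset.mul_sum]
    congr 1
    rw [Finset.mul_sum, Finset.mul_sum]
    exact Finset.sum_congr rfl fun y2 _ => by ring
  have i2 : ∀ y2 : Perm β, (Nat.card (alternatingGroup α) : ℂ) *
      ∑ y1, dif α1 y1 * F y1⁻¹ y2⁻¹ =
      Nat.card (Perm α) * ∑ y1 : alternatingGroup α, α1 y1 * F (y1 : Perm α)⁻¹ y2⁻¹ := by
    intro y2
    rw [← sum_extA_mul α1 (fun y1 => F y1⁻¹ y2⁻¹), ← sum_dif_mul α1 (a1 y2⁻¹)]
  rw [mul_assoc, Finset.mul_sum Finset.univ _ (Nat.card (alternatingGroup β) : ℂ),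
    Finset.sum_congr rfl fun y1 _ => i1 y1]
  have i3 : ∑ y1, dif α1 y1 * (Nat.card (Perm β) *
        ∑ y2 : alternatingGroup β, α2 y2 * F y1⁻¹ (y2 : Perm β)⁻¹) =
      Nat.card (Perm β) * ∑ y2 : alternatingGroup β, α2 y2 *
        ∑ y1, dif α1 y1 * F y1⁻¹ (y2 : Perm β)⁻¹ := by
    simp only [Finset.mul_sum]
    rw [Finset.sum_comm]
    refine Finset.sum_congr rfl fun y2 _ => Finset.sum_congr rfl fun y1 _ => ?_
    ring
  rw [i3, mul_left_comm, Finset.mul_sum, mul_comm (Nat.card (Perm α) : ℂ), mul_assoc]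
  congr 1
  rw [Finset.sum_comm, Finset.mul_sum]
  refine Finset.sum_congr rfl fun y2 _ => ?_
  rw [mul_left_comm, i2, mul_left_comm, Finset.mul_sum]
  congr 1
  exact Finset.sum_congr rfl fun y1 _ => by ring

theorem anti_inl {D : Perm (α ⊕ β) → ℂ} (hD : IsAnti D) (y2 : Perm β) :
    IsAnti (fun y1 : Perm α => D (Perm.sumCongrHom α β (y1, y2))) := by
  intro s h
  have := hD (Perm.sumCongrHom α β (s, 1)) (Perm.sumCongrHom α β (h, y2))
  rw [← map_mul, ← map_inv, ← map_mul, sgnC_sum] at this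
  simpa using this

theorem anti_inr {D : Perm (α ⊕ β) → ℂ} (hD : IsAnti D) (y1 : Perm α) :
    IsAnti (fun y2 : Perm β => D (Perm.sumCongrHom α β (y1, y2))) := by
  intro s h
  have := hD (Perm.sumCongrHom α β (1, s)) (Perm.sumCongrHom α β (y1, h))
  rw [← map_mul, ← map_inv, ← map_mul, sgnC_sum] at this
  simpa using this

/-- Frobenius reciprocity for the induced antisymmetric function of an exterior product. -/
theorem indBox_pair [Nontrivial (α ⊕ β)] (α1 : alternatingGroup α → ℂ)
    (α2 : alternatingGroup β → ℂ) (ρ : alternatingGroup (α ⊕ β) → ℂ) :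
    pair (resA (indBox (dif α1) (dif α2))) ρ =
      pair (fun y : alternatingGroup α × alternatingGroup β => α1 y.1 * α2 y.2)
        (resA (dif ρ) ∘ altSum) := by
  have hDa : IsAnti (dif ρ) := dif_isAnti ρ
  generalize hD : dif ρ = D at hDa
  have e1 := (indBox_anti (dif α1) (dif α2)).pair_dif_two ρ
  rw [hD, hDa.pair_resA'] at e1
  have e2 := sum_dif_mul (resA (boxF (dif α1) (dif α2))) hDa
  rw [extA_boxF (dif_isAnti _) (dif_isAnti _), sum_boxF _ _ (fun h => D h⁻¹), card_perm_eq] at e2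
  have e3 := sum_dif_dif α1 α2 (F := fun y1 y2 => D (Perm.sumCongrHom α β (y1, y2)))
    (anti_inl hDa) (anti_inr hDa)
  have e4 : pair (fun y : alternatingGroup α × alternatingGroup β => α1 y.1 * α2 y.2)
      (resA D ∘ altSum) = ((Nat.card (alternatingGroup α) : ℂ) * Nat.card (alternatingGroup β))⁻¹ *
      ∑ y1 : alternatingGroup α, ∑ y2 : alternatingGroup β,
        α1 y1 * α2 y2 * D (Perm.sumCongrHom α β ((y1 : Perm α)⁻¹, (y2 : Perm β)⁻¹)) := by
    rw [pair, Nat.card_prod, Fintype.sum_prod_type]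
    push_cast
    rfl
  have e5 : ∑ h, indBox (dif α1) (dif α2) h * D h⁻¹ =
      ((Nat.card (alternatingGroup (α ⊕ β)) : ℂ) / (Nat.card (Perm α) * Nat.card (Perm β))) *
        ∑ h, dif (resA (boxF (dif α1) (dif α2))) h * D h⁻¹ := by
    rw [Finset.mul_sum]
    refine Finset.sum_congr rfl fun h _ => ?_
    simp only [indBox, Pi.smul_apply, smul_eq_mul, mul_assoc]
  have e6 : ∀ y1 y2, D (Perm.sumCongrHom α β (y1, y2))⁻¹ =
      D (Perm.sumCongrHom α β (y1⁻¹, y2⁻¹)) := fun y1 y2 => by rw [← map_inv]; rfl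
  simp only [e6] at e2
  rw [e4]
  rw [e5] at e1
  generalize (∑ y1 : alternatingGroup α, ∑ y2 : alternatingGroup β,
    α1 y1 * α2 y2 * D (Perm.sumCongrHom α β ((y1 : Perm α)⁻¹, (y2 : Perm β)⁻¹))) = S at e3 ⊢
  generalize (∑ y1, ∑ y2, dif α1 y1 * dif α2 y2 *
    D (Perm.sumCongrHom α β (y1⁻¹, y2⁻¹))) = S2 at e2 e3
  generalize (∑ h, dif (resA (boxF (dif α1) (dif α2))) h * D h⁻¹) = S3 at e1 e2
  have c1 := card_alt_ne (X := α)
  have c2 := card_alt_ne (X := β)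
  have c3 := card_perm_ne (X := α)
  have c4 := card_perm_ne (X := β)
  have c5 := card_alt_ne (X := α ⊕ β)
  generalize pair (resA (indBox (dif α1) (dif α2))) ρ = P at e1 ⊢
  generalize (Nat.card (alternatingGroup α) : ℂ) = n1 at *
  generalize (Nat.card (alternatingGroup β) : ℂ) = n2 at *
  generalize (Nat.card (Perm α) : ℂ) = n3 at *
  generalize (Nat.card (Perm β) : ℂ) = n4 at *
  generalize (Nat.card (alternatingGroup (α ⊕ β)) : ℂ) = n5 at *
  have e7 : S3 = 2 * S2 := by
    apply mul_left_cancel₀ c5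
    rw [e2]; ring
  rw [e7] at e1
  field_simp at e1 ⊢
  apply mul_left_cancel₀ (mul_ne_zero c3 c4)
  linear_combination (n1 * n2) * (-e1) + e3

end Step

section Step2

open Equiv

variable {α β : Type} [Fintype α] [DecidableEq α] [Fintype β] [DecidableEq β]

theorem isConj_sum {g1 : Perm α} {g2 : Perm β} {y : Perm α × Perm β} (h1 : IsConj g1 y.1)
    (h2 : IsConj g2 y.2) :
    IsConj (Perm.sumCongrHom α β (g1, g2)) (Perm.sumCongrHom α β y) := by
  obtain ⟨u, hu⟩ := isConj_iff.mp h1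
  obtain ⟨v, hv⟩ := isConj_iff.mp h2
  refine isConj_iff.mpr ⟨Perm.sumCongrHom α β (u, v), ?_⟩
  rw [← map_mul, ← map_inv, ← map_mul]
  congr 1
  exact Prod.ext hu hv

/-- When the two factors share no cycle length, inducing does not change the values on the
product subgroup, because only that subgroup conjugates such an element into the support of the product. -/
theorem indBox_value {g1 : Perm α} {g2 : Perm β} {l : ℕ}
    (hl : ∀ a, Function.minimalPeriod g1 a = l) (hl2 : ∀ b, Function.minimalPeriod g2 b ≠ l)
    {Θ₁ : Perm α → ℂ} {Θ₂ : Perm β → ℂ} (h1 : SplitChar g1 Θ₁) (h2 : SplitChar g2 Θ₂)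
    (y : Perm α × Perm β) (hy1 : IsConj g1 y.1) :
    indBox Θ₁ Θ₂ (Perm.sumCongrHom α β y) = Θ₁ y.1 * Θ₂ y.2 := by
  rw [indBox_eq h1.anti h2.anti]
  have : ∑ s, sgnC _ s * boxF Θ₁ Θ₂ (s * Perm.sumCongrHom α β y * s⁻¹) =
      ∑ t : Perm α × Perm β, Θ₁ y.1 * Θ₂ y.2 := by
    symm
    refine Fintype.sum_of_injective _ (Perm.sumCongrHom_injective (α := α) (β := β)) _ _ ?_ ?_
    · intro s hs
      by_contra hne
      obtain ⟨z, hz, hz1, hz2⟩ := boxF_ne_zero (right_ne_zero_of_mul hne)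
      exact hs (conj_mem_range hl hl2 hy1 (h2.supp _ hz2) hz.symm)
    · intro t
      rw [← map_mul, ← map_inv, ← map_mul, boxF_coe, sgnC_sum]
      change _ = _ * (Θ₁ (t.1 * y.1 * t.1⁻¹) * Θ₂ (t.2 * y.2 * t.2⁻¹))
      rw [h1.anti, h2.anti]
      linear_combination (-Θ₁ y.1 * Θ₂ y.2) * (sgnC β t.2 * sgnC β t.2) *
        sgnC_mul_self t.1 + (-Θ₁ y.1 * Θ₂ y.2) * sgnC_mul_self t.2
  rw [this, Finset.sum_const, Finset.card_univ, Fintype.card_prod, nsmul_eq_mul,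
    ← Nat.card_eq_fintype_card, ← Nat.card_eq_fintype_card]
  have c3 := card_perm_ne (X := α)
  have c4 := card_perm_ne (X := β)
  push_cast
  field_simp

/-- Centralizers multiply when the two factors share no cycle length. -/
theorem cz_sum {g1 : Perm α} {g2 : Perm β} {l : ℕ}
    (hl : ∀ a, Function.minimalPeriod g1 a = l) (hl2 : ∀ b, Function.minimalPeriod g2 b ≠ l) :
    cz (Perm.sumCongrHom α β (g1, g2)) = cz g1 * cz g2 := by
  rw [cz, cz, cz, ← Finset.card_product]
  symm
  refine Finset.card_bij (fun t _ => Perm.sumCongrHom α β t) ?_ ?_ ?_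
  · intro t ht
    simp only [Finset.mem_product, Finset.mem_filter, Finset.mem_univ, true_and] at ht ⊢
    rw [← map_mul, ← map_mul]
    exact congrArg _ (Prod.ext ht.1 ht.2)
  · intro a _ b _ h; exact Perm.sumCongrHom_injective h
  · intro s hs
    simp only [Finset.mem_filter, Finset.mem_univ, true_and] at hs
    have hs' : s * Perm.sumCongrHom α β (g1, g2) * s⁻¹ = Perm.sumCongrHom α β (g1, g2) := by
      rw [hs, mul_inv_cancel_right]
    obtain ⟨t, rfl⟩ := conj_mem_range hl hl2 (IsConj.refl g1) (IsConj.refl g2) hs'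
    refine ⟨t, ?_, rfl⟩
    rw [← map_mul, ← map_mul] at hs
    have := Perm.sumCongrHom_injective hs
    simp only [Finset.mem_product, Finset.mem_filter, Finset.mem_univ, true_and]
    exact ⟨congrArg Prod.fst this, congrArg Prod.snd this⟩

/-- Split characters on two blocks with disjoint cycle lengths induce to a split character. -/
theorem splitChar_sum [Nontrivial (α ⊕ β)] {g1 : Perm α} {g2 : Perm β} {l : ℕ}
    (hl : ∀ a, Function.minimalPeriod g1 a = l) (hl2 : ∀ b, Function.minimalPeriod g2 b ≠ l)
    {Θ₁ : Perm α → ℂ} {Θ₂ : Perm β → ℂ} (h1 : SplitChar g1 Θ₁) (h2 : SplitChar g2 Θ₂) :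
    SplitChar (Perm.sumCongrHom α β (g1, g2)) (indBox Θ₁ Θ₂) where
  anti := indBox_anti _ _
  supp := by
    intro h hh
    rw [indBox_eq h1.anti h2.anti] at hh
    obtain ⟨s, _, hs⟩ := Finset.exists_ne_zero_of_sum_ne_zero (right_ne_zero_of_mul hh)
    obtain ⟨y, hy, hy1, hy2⟩ := boxF_ne_zero (right_ne_zero_of_mul hs)
    have := isConj_sum (h1.supp _ hy1) (h2.supp _ hy2)
    rw [hy] at this
    refine this.trans (IsConj.symm (isConj_iff.mpr ⟨s, rfl⟩))
  virt := by
    obtain ⟨α1, hα1, rfl⟩ := h1.exists_dif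
    obtain ⟨α2, hα2, rfl⟩ := h2.exists_dif
    refine mem_virt_of_pair (indBox_anti _ _).isCF fun ρ hρ => ?_
    rw [indBox_pair]
    refine virt_pair_int ?_ (virt_comp (resA_dif_virt (irr_mem_virt hρ)) _)
    have v1 := virt_comp hα1 (MonoidHom.fst (alternatingGroup α) (alternatingGroup β))
    have v2 := virt_comp hα2 (MonoidHom.snd (alternatingGroup α) (alternatingGroup β))
    exact virt_mul v1 v2
  val := by
    rw [← map_inv, indBox_value hl hl2 h1 h2 _ (IsConj.refl g1),
      indBox_value hl hl2 h1 h2 (g1, g2)⁻¹ (isConj_inv g1), cz_sum hl hl2]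
    push_cast
    rw [← h1.val, ← h2.val]
    simp only [Prod.fst_inv, Prod.snd_inv]
    ring

section Transport

variable {X Y : Type} [Fintype X] [DecidableEq X] [Fintype Y] [DecidableEq Y]

theorem permCongrHom_mem (e : X ≃ Y) (h : Perm X) :
    e.permCongrHom h ∈ alternatingGroup Y ↔ h ∈ alternatingGroup X := by
  rw [Perm.mem_alternatingGroup, Perm.mem_alternatingGroup]
  rw [show e.permCongrHom h = e.permCongr h from rfl, Perm.sign_permCongr]

theorem sgnC_permCongr (e : X ≃ Y) (h : Perm X) : sgnC Y (e.permCongrHom h) = sgnC X h := by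
  rw [sgnC_apply, sgnC_apply, show e.permCongrHom h = e.permCongr h from rfl, Perm.sign_permCongr]

theorem cz_permCongr (e : X ≃ Y) (g : Perm X) : cz (e.permCongrHom g) = cz g := by
  rw [cz, cz]
  symm
  refine Finset.card_bij (fun s _ => e.permCongrHom s) ?_ ?_ ?_
  · intro s hs
    simp only [Finset.mem_filter, Finset.mem_univ, true_and] at hs ⊢
    rw [← map_mul, hs, map_mul]
  · intro a _ b _ h; exact e.permCongrHom.injective h
  · intro s hs
    obtain ⟨t, rfl⟩ := e.permCongrHom.surjective s
    simp only [Finset.mem_filter, Finset.mem_univ, true_and] at hs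
    refine ⟨t, ?_, rfl⟩
    simp only [Finset.mem_filter, Finset.mem_univ, true_and]
    rw [← map_mul, ← map_mul] at hs
    exact e.permCongrHom.injective hs

theorem SplitChar.transport (e : X ≃ Y) {g : Perm X} {Θ : Perm Y → ℂ}
    (h : SplitChar (e.permCongrHom g) Θ) : SplitChar g (Θ ∘ e.permCongrHom) where
  anti := by
    intro s t
    simp only [Function.comp, map_mul, map_inv]
    rw [h.anti, sgnC_permCongr]
  supp := by
    intro t ht
    obtain ⟨u, hu⟩ := isConj_iff.mp (h.supp _ ht)
    obtain ⟨v, rfl⟩ := e.permCongrHom.surjective u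
    rw [← map_mul, ← map_inv, ← map_mul] at hu
    exact isConj_iff.mpr ⟨v, e.permCongrHom.injective hu⟩
  virt := by
    let f : alternatingGroup X →* alternatingGroup Y :=
      MonoidHom.codRestrict ((e.permCongrHom : Perm X →* Perm Y).comp (alternatingGroup X).subtype)
        _ fun a => (permCongrHom_mem e _).mpr a.2
    exact virt_comp h.virt f
  val := by
    simp only [Function.comp, map_inv]
    rw [h.val, cz_permCongr]

end Transport

end Step2

/-! ### Existence of split characters -/

section Existence

open Equiv

variable {X : Type} [Fintype X] [DecidableEq X]

theorem exists_minimalPeriod_of_mem_cycleType {g : Perm X} {m : ℕ} (hm : m ∈ g.cycleType) :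
    ∃ x, Function.minimalPeriod g x = m := by
  obtain ⟨c, τ, rfl, hd, hc, rfl⟩ := Perm.mem_cycleType_iff.mp hm
  obtain ⟨x, hx, hx2⟩ := hc
  refine ⟨x, ?_⟩
  have hτ : τ x = x := (hd x).resolve_left hx
  rw [← Perm.IsCycle.orderOf ⟨x, hx, hx2⟩, ← Nat.dvd_right_iff_eq]
  intro k
  rw [← Function.isPeriodicPt_iff_minimalPeriod_dvd, orderOf_dvd_iff_pow_eq_one,
    Perm.IsCycle.pow_eq_one_iff' ⟨x, hx, hx2⟩ hx, Function.IsPeriodicPt, Function.IsFixedPt,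
    ← Perm.coe_pow, hd.commute.mul_pow, Perm.mul_apply]
  have : (τ ^ k) x = x := Perm.pow_apply_eq_self_of_apply_eq_self hτ k
  rw [this]

theorem IsSplit.cycleType {g : Perm X} (hg : IsSplit g) :
    (∀ c ∈ g.cycleType, Odd c) ∧ Fintype.card X ≤ g.cycleType.sum + 1 ∧
      ∀ i, g.cycleType.count i ≤ 1 := by
  rw [← Perm.centralizer_le_alternating_iff]
  intro s hs
  exact hg s (Subgroup.mem_centralizer_singleton_iff.mp hs)

/-- A split permutation has distinct cycle lengths, so if all its cycles have the same length it
is a single cycle on all letters. -/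
theorem cycleType_of_isotypic [Nontrivial X] {g : Perm X} (hg : IsSplit g)
    (h : ∀ x y, Function.minimalPeriod g x = Function.minimalPeriod g y) :
    g.cycleType = {Fintype.card X} := by
  obtain ⟨_, h2, h3⟩ := hg.cycleType
  obtain ⟨x0⟩ : Nonempty X := inferInstance
  set m := Function.minimalPeriod g x0 with hm
  have hall : ∀ c ∈ g.cycleType, c = m := by
    intro c hc
    obtain ⟨x, rfl⟩ := exists_minimalPeriod_of_mem_cycleType hc
    exact h x x0
  have hr := Multiset.eq_replicate_of_mem hall
  have hcard : Multiset.card g.cycleType ≤ 1 := by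
    have := h3 m
    rw [hr, Multiset.count_replicate_self] at this
    exact this
  have h1 : 1 < Fintype.card X := Fintype.one_lt_card
  have hc0 : Multiset.card g.cycleType ≠ 0 := by
    intro h0
    rw [Multiset.card_eq_zero] at h0
    rw [h0] at h2
    simp at h2
    omega
  have hc1 : Multiset.card g.cycleType = 1 := by omega
  rw [hc1, Multiset.replicate_one] at hr
  have hm2 : 2 ≤ m := Perm.two_le_of_mem_cycleType (σ := g) (by rw [hr]; simp)
  have hs : g.support = Finset.univ := by
    rw [Finset.eq_univ_iff_forall]
    intro x
    rw [Perm.mem_support]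
    intro hx
    have : Function.minimalPeriod g x = 1 := Function.minimalPeriod_eq_one_iff_isFixedPt.mpr hx
    rw [h x x0] at this
    omega
  have hsum := Perm.sum_cycleType g
  rw [hs, Finset.card_univ, hr, Multiset.sum_singleton] at hsum
  rw [hr, hsum]

theorem IsSplit.mem {g : Perm X} (hg : IsSplit g) : g ∈ alternatingGroup X := hg g rfl

/-- If all non-isotypic split permutations carry a split character, so do the isotypic ones. -/
theorem exists_splitChar_isotypic [Nontrivial X] {g : Perm X} (hg : IsSplit g)
    (hiso : ∀ x y, Function.minimalPeriod g x = Function.minimalPeriod g y)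
    (hex : ∀ h : Perm X, IsSplit h →
      ¬ (∀ x y, Function.minimalPeriod h x = Function.minimalPeriod h y) → ∃ Θ, SplitChar h Θ) :
    ∃ Θ, SplitChar g Θ := by
  set f : Perm X → ℂ := Pi.single g 1 with hf
  have hfe : extA (resA f) = f := by
    funext h
    by_cases hh : h ∈ alternatingGroup X
    · rw [extA_of_mem _ hh, resA_apply]
    · rw [extA_of_not_mem _ hh, hf, Pi.single_eq_of_ne]
      rintro rfl; exact hh hg.mem
  have hwa := dif_isAnti (resA f)
  have hwv : ∀ h, dif (resA f) h =
      (Nat.card (alternatingGroup X) : ℂ)⁻¹ * ∑ s, sgnC X s * f (s * h * s⁻¹) := by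
    intro h; rw [dif, hfe]
  generalize dif (resA f) = w at hwa hwv
  have hwg : w g ≠ 0 := by
    rw [hwv]
    refine mul_ne_zero (inv_ne_zero card_alt_ne) ?_
    have : ∀ s, sgnC X s * f (s * g * s⁻¹) = if s * g = g * s then 1 else 0 := by
      intro s
      by_cases hs : s * g = g * s
      · rw [if_pos hs, sgnC_of_mem (hg s hs), hs, mul_inv_cancel_right, hf, Pi.single_eq_same,
          one_mul]
      · rw [if_neg hs, hf, Pi.single_eq_of_ne, mul_zero]
        intro h; exact hs (by rw [← mul_inv_eq_iff_eq_mul.mp h])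
    rw [Finset.sum_congr rfl fun s _ => this s, Finset.sum_boole]
    exact cz_ne g
  have hws : ∀ h, w h ≠ 0 → IsConj g h := by
    intro h hh
    rw [hwv] at hh
    obtain ⟨s, _, hs⟩ := Finset.exists_ne_zero_of_sum_ne_zero (right_ne_zero_of_mul hh)
    have h2 : s * h * s⁻¹ = g := by
      by_contra hne
      apply right_ne_zero_of_mul hs
      rw [hf, Pi.single_eq_of_ne hne]
    exact IsConj.symm (isConj_iff.mpr ⟨s, h2⟩)
  have : ∃ ρ ∈ IrrChar (alternatingGroup X), pair (resA w) ρ ≠ 0 := by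
    by_contra hcon
    push Not at hcon
    have := congrFun (cf_eq_zero hwa.isCF hcon) ⟨g, hg.mem⟩
    exact hwg this
  obtain ⟨ρ, hρ, hne⟩ := this
  have hDa := dif_isAnti ρ
  have hp := hwa.pair_dif_two ρ
  have hDg' : dif ρ g⁻¹ ≠ 0 := by
    intro h0
    have h3 := hwa.sum_supp hDa hws
    rw [h0, mul_zero, mul_zero] at h3
    have h4 := (mul_eq_zero.mp h3).resolve_left (cz_ne g)
    rw [hDa.pair_resA', h4, mul_zero] at hp
    exact hne ((mul_eq_zero.mp hp.symm).resolve_left two_ne_zero)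
  have hDg : dif ρ g ≠ 0 := by
    have := hDa.inv_ne_zero hDg'
    rwa [inv_inv] at this
  have hsupp : ∀ h, dif ρ h ≠ 0 → IsConj g h := by
    intro h hh
    by_cases hi : ∀ x y, Function.minimalPeriod h x = Function.minimalPeriod h y
    · rw [Perm.isConj_iff_cycleType_eq, cycleType_of_isotypic hg hiso,
        cycleType_of_isotypic (hDa.isSplit hh) hi]
    · obtain ⟨Θ, hΘ⟩ := hex h (hDa.isSplit hh) hi
      refine (hΘ.supp g ?_).symm
      rcases hΘ.eq_dif_of_ne hρ hh with h1 | h1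
      · rwa [h1]
      · rw [h1]; simpa using hDg
  refine ⟨dif ρ, hDa, hsupp, resA_dif_virt (irr_mem_virt hρ), ?_⟩
  have h1 := hDa.sum_supp hDa hsupp
  have h2 := dif_norm hρ (fun h => hDg (by rw [h]; rfl))
  rw [hDa.pair_resA', inv_mul_eq_iff_eq_mul₀ card_alt_ne] at h2
  rw [h2, card_perm_eq] at h1
  apply mul_left_cancel₀ (mul_ne_zero (two_ne_zero (α := ℂ)) (card_alt_ne (X := X)))
  rw [← h1]; ring

theorem one_mem_virt (G : Type) [Group G] [Finite G] : (fun _ => 1 : G → ℂ) ∈ virt G := by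
  have := perm_char_mem_virt (G := G) (X := Unit) 1
  simpa using this

theorem exists_splitChar_subsingleton [Subsingleton X] (g : Perm X) :
    SplitChar g (fun _ => 1) where
  anti := by
    intro s h
    rw [Subsingleton.elim s 1, map_one]; simp
  supp := by
    intro h _
    rw [Subsingleton.elim h g]
  virt := one_mem_virt _
  val := by
    have : cz g = 1 := by
      rw [cz, Finset.filter_true_of_mem fun s _ => Subsingleton.elim _ _, Finset.card_univ,
        Fintype.card_eq_one_iff]
      exact ⟨1, fun y => Subsingleton.elim _ _⟩
    rw [this]; simp

/-- A split permutation with two different cycle lengths decomposes into one on the cycles of a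
given length and one on the remaining letters. -/
theorem exists_splitChar_of_block {g : Perm X} (hg : IsSplit g) {x0 x1 : X}
    (hne : Function.minimalPeriod g x1 ≠ Function.minimalPeriod g x0)
    (ih : ∀ (Y : Type) [Fintype Y] [DecidableEq Y], Fintype.card Y < Fintype.card X →
      ∀ h : Perm Y, IsSplit h → ∃ Θ, SplitChar h Θ) : ∃ Θ, SplitChar g Θ := by
  set q : X → Prop := fun x => Function.minimalPeriod g x = Function.minimalPeriod g x0 with hq
  have hqg : ∀ x, q (g x) ↔ q x := by
    intro x
    have : Function.minimalPeriod g (g x) = Function.minimalPeriod g x :=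
      minimalPeriod_semiconj g.injective (fun y => rfl) x
    simp only [hq, this]
  set g1 := g.subtypePerm hqg with hg1
  set g2 := g.subtypePerm (p := fun x => ¬ q x) (fun x => not_congr (hqg x)) with hg2
  set e := Equiv.sumCompl q with he
  have hge : g = e.permCongrHom (Perm.sumCongrHom _ _ (g1, g2)) := by
    refine (perm_split g q hqg).trans ?_
    ext x
    simp only [Equiv.permCongrHom_coe, Perm.sumCongrHom_apply, he, hg1, hg2]
    congr!
  have hs : ∀ t : Perm {x // q x} × Perm {x // ¬ q x}, t * (g1, g2) = (g1, g2) * t →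
      sgnC _ t.1 * sgnC _ t.2 = 1 := by
    intro t ht
    rw [← sgnC_sum, ← sgnC_permCongr e, sgnC_eq_one_iff]
    apply hg
    rw [hge, ← map_mul, ← map_mul, ht, map_mul, map_mul]
  obtain ⟨Θ₁, h1⟩ := ih {x // q x} (Fintype.card_subtype_lt (x := x1) hne) g1 (by
    intro s hs'
    have := hs (s, 1) (Prod.ext hs' (by simp))
    simpa [sgnC_eq_one_iff] using this)
  obtain ⟨Θ₂, h2⟩ := ih {x // ¬ q x} (Fintype.card_subtype_lt (x := x0) (by simp [hq])) g2 (by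
    intro s hs'
    have := hs (1, s) (Prod.ext (by simp) hs')
    simpa [sgnC_eq_one_iff] using this)
  have : Nontrivial ({x // q x} ⊕ {x // ¬ q x}) :=
    ⟨Sum.inl ⟨x0, rfl⟩, Sum.inr ⟨x1, hne⟩, by simp⟩
  have hl : ∀ a, Function.minimalPeriod g1 a = Function.minimalPeriod g x0 := by
    intro a
    rw [← minimalPeriod_semiconj (b := g) Subtype.val_injective (fun y => rfl) a]
    exact a.2
  have hl2 : ∀ b, Function.minimalPeriod g2 b ≠ Function.minimalPeriod g x0 := by
    intro b
    rw [← minimalPeriod_semiconj (b := g) Subtype.val_injective (fun y => rfl) b]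
    exact b.2
  have h3 := splitChar_sum hl hl2 h1 h2
  refine ⟨_, SplitChar.transport e.symm (Θ := indBox Θ₁ Θ₂) ?_⟩
  have : e.symm.permCongrHom g = Perm.sumCongrHom _ _ (g1, g2) := by
    conv_lhs => rw [hge]
    ext x; simp
  rw [this]
  exact h3

/-- Every split permutation carries a split character. -/
theorem exists_splitChar {g : Perm X} (hg : IsSplit g) : ∃ Θ, SplitChar g Θ := by
  have key : ∀ (k : ℕ) (X : Type) [Fintype X] [DecidableEq X], Fintype.card X = k →
      ∀ g : Perm X, IsSplit g → ∃ Θ, SplitChar g Θ := by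
    intro k
    induction k using Nat.strong_induction_on with
    | _ k ih =>
    intro X _ _ hX g hg
    rcases subsingleton_or_nontrivial X with hs | hs
    · exact ⟨_, exists_splitChar_subsingleton g⟩
    have hex : ∀ h : Perm X, IsSplit h →
      ¬ (∀ x y, Function.minimalPeriod h x = Function.minimalPeriod h y) →
        ∃ Θ, SplitChar h Θ := by
      intro h hh hni
      push Not at hni
      obtain ⟨x, y, hxy⟩ := hni
      exact exists_splitChar_of_block hh hxy fun Y _ _ hY h' hh' => ih _ (hX ▸ hY) Y rfl h' hh'
    by_cases hi : ∀ x y, Function.minimalPeriod g x = Function.minimalPeriod g y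
    · exact exists_splitChar_isotypic hg hi hex
    · exact hex g hg hi
  exact key _ X rfl g hg

end Existence

/-! ### Characters of the alternating group that are not invariant under the symmetric group -/

section NonFixed

open Equiv

variable {X : Type} [Fintype X] [DecidableEq X]

theorem IsSplit.odd_cz {g : Perm X} (hg : IsSplit g) : Odd (cz g) := by
  have h1 : cz g = Nat.card (Subgroup.centralizer ({g} : Set (Perm X))) := by
    rw [cz, Nat.card_eq_fintype_card, Fintype.card_subtype]
    congr 1
    ext s
    simp only [Finset.mem_filter, Finset.mem_univ, true_and, Subgroup.mem_centralizer_singleton_iff]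
  obtain ⟨h2, h3, h4⟩ := hg.cycleType
  rw [h1, Equiv.Perm.nat_card_centralizer]
  have hf : ∀ k : ℕ, k ≤ 1 → k.factorial = 1 := fun k hk => by
    interval_cases k <;> rfl
  rw [hf _ (by omega), one_mul, Finset.prod_eq_one fun i _ => hf _ (h4 i), mul_one]
  exact Multiset.prod_induction (p := fun k => Odd k) _ (fun a b => Odd.mul) odd_one h2

theorem tw_eq_of_isCF {f : alternatingGroup X → ℂ} (hf : IsCF f) {s τ : Perm X}
    (hs : s ∉ alternatingGroup X) (hτ : τ ∉ alternatingGroup X) : tw s f = tw τ f := by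
  funext a
  rw [tw_apply, tw_apply, extA_conj_odd hf hs hτ]

theorem tw_tw {f : alternatingGroup X → ℂ} (hf : IsCF f) {τ : Perm X}
    (hτ : τ ∉ alternatingGroup X) : tw τ (tw τ f) = f := by
  funext a
  have h1 : τ * (a : Perm X) * τ⁻¹ ∈ alternatingGroup X := (conj_mem_alt_iff _ _).mpr a.2
  have h2 : τ * τ ∈ alternatingGroup X := by
    rw [← sgnC_eq_one_iff, map_mul, sgnC_mul_self]
  rw [tw_apply, extA_of_mem _ h1, tw_apply, ← extA_coe f a, ← extA_conj hf h2 a]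
  congr 1

theorem tw_add (τ : Perm X) (f g : alternatingGroup X → ℂ) :
    tw τ (f + g) = tw τ f + tw τ g := rfl

theorem tw_sub (τ : Perm X) (f g : alternatingGroup X → ℂ) :
    tw τ (f - g) = tw τ f - tw τ g := rfl

theorem tw_zsmul (τ : Perm X) (z : ℤ) (f : alternatingGroup X → ℂ) :
    tw τ (z • f) = z • tw τ f := rfl

theorem pair_tw (τ : Perm X) (f g : alternatingGroup X → ℂ) :
    pair (tw τ f) (tw τ g) = pair f g := pair_comp_equiv _ _ _

theorem pair_tw_left {τ : Perm X} (hτ : τ ∉ alternatingGroup X) {f g : alternatingGroup X → ℂ}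
    (hf : IsCF f) : pair (tw τ f) g = pair f (tw τ g) := by
  rw [← pair_tw τ (tw τ f) g, tw_tw hf hτ]

/-- An irreducible character `ρ` of the alternating group that is moved by an odd permutation
differs from its conjugate on a single class of the symmetric group, the square of the difference
is an odd integer there, and only `ρ` and its conjugate are moved on that class. -/
theorem exists_split_class [Nontrivial X] {τ : Perm X} (hτ : τ ∉ alternatingGroup X)
    {ρ : alternatingGroup X → ℂ} (hρ : ρ ∈ IrrChar (alternatingGroup X)) (hne : tw τ ρ ≠ ρ) :
    ∃ a : alternatingGroup X, (∃ m : ℤ, Odd m ∧ (ρ a - tw τ ρ a) ^ 2 = m) ∧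
      (∀ ρ' ∈ IrrChar (alternatingGroup X), tw τ ρ' a ≠ ρ' a → ρ' = ρ ∨ ρ' = tw τ ρ) ∧
      ∀ b : alternatingGroup X, tw τ ρ b ≠ ρ b → IsConj (a : Perm X) b := by
  have hval : ∀ {f : alternatingGroup X → ℂ} (_ : f ∈ IrrChar (alternatingGroup X)) (b : alternatingGroup X),
      dif f (b : Perm X) = f b - tw τ f b := fun hf b =>
    congrFun (resA_dif (irr_isCF hf) hτ) b
  obtain ⟨a, ha⟩ : ∃ a, tw τ ρ a ≠ ρ a := by
    by_contra hcon
    push Not at hcon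
    exact hne (funext hcon)
  have hda : dif ρ (a : Perm X) ≠ 0 := by
    rw [hval hρ]; exact sub_ne_zero.mpr ha.symm
  have hs := (dif_isAnti ρ).isSplit hda
  obtain ⟨Θ, hΘ⟩ := exists_splitChar hs
  have h1 := hΘ.eq_dif_of_ne hρ hda
  have hodd := hs.odd_cz
  refine ⟨a, ?_, ?_, ?_⟩
  · have h2 : (ρ a - tw τ ρ a) ^ 2 = Θ a ^ 2 := by
      rw [← hval hρ]
      rcases h1 with h | h <;> simp [h]
    rw [h2]
    rcases hΘ.sq with h | h
    · exact ⟨cz (a : Perm X), by exact_mod_cast hodd, by rw [h]; simp⟩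
    · exact ⟨-cz (a : Perm X), Odd.neg (by exact_mod_cast hodd), by rw [h]; simp⟩
  · intro ρ' hρ' hne'
    have hda' : dif ρ' (a : Perm X) ≠ 0 := by
      rw [hval hρ']; exact sub_ne_zero.mpr hne'.symm
    have h2 := hΘ.eq_dif_of_ne hρ' hda'
    have h3 : dif ρ = dif ρ' ∨ dif ρ = -dif ρ' := by
      rcases h1 with h | h <;> rcases h2 with h' | h'
      · left; rw [← h, h']
      · right; rw [← h, h']
      · right; rw [← h', h, neg_neg]
      · left; rw [← neg_inj, ← h, h']
    by_contra hcon
    push Not at hcon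
    have h4 : pair (resA (dif ρ)) ρ' = 0 := by
      rw [resA_dif (irr_isCF hρ) hτ, pair_sub_left, pair_irr hρ hρ',
        pair_irr (tw_irr τ hρ) hρ', if_neg hcon.1.symm, if_neg hcon.2.symm, sub_zero]
    have h5 : pair (resA (dif ρ')) ρ' = 1 := by
      have : tw τ ρ' ≠ ρ' := fun h => hne' (congrFun h a)
      rw [resA_dif (irr_isCF hρ') hτ, pair_sub_left, pair_irr hρ' hρ',
        pair_irr (tw_irr τ hρ') hρ', if_pos rfl, if_neg this, sub_zero]
    rcases h3 with h | h
    · rw [h, h5] at h4; exact one_ne_zero h4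
    · have h6 : resA (-dif ρ') = -resA (dif ρ') := rfl
      rw [h, h6, pair_neg_left, h5] at h4
      norm_num at h4
  · intro b hb
    apply hΘ.supp
    have hdb : dif ρ (b : Perm X) ≠ 0 := by
      rw [hval hρ]; exact sub_ne_zero.mpr hb.symm
    rcases h1 with h | h
    · rwa [h]
    · rw [h]; simpa using hdb

end NonFixed

/-! ### Restriction and induction between symmetric and alternating groups -/

section Clifford

open Equiv

variable {X : Type} [Fintype X] [DecidableEq X]

/-- The product of a function on the symmetric group with the sign character. -/
def sgnM (χ : Perm X → ℂ) : Perm X → ℂ := fun g => sgnC X g * χ g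

theorem sgnM_irr {χ : Perm X → ℂ} (h : χ ∈ IrrChar (Perm X)) : sgnM χ ∈ IrrChar (Perm X) :=
  irr_twist h (sgnC X)

theorem sgnM_sgnM (χ : Perm X → ℂ) : sgnM (sgnM χ) = χ := by
  funext g; simp only [sgnM, ← mul_assoc, sgnC_mul_self, one_mul]

theorem resA_sgnM (χ : Perm X → ℂ) : resA (sgnM χ) = resA χ := by
  funext a; rw [resA_apply, resA_apply, sgnM, sgnC_of_mem a.2, one_mul]

theorem extA_resA (χ : Perm X → ℂ) : (2 : ℤ) • extA (resA χ) = χ + sgnM χ := by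
  funext g
  by_cases hg : g ∈ alternatingGroup X
  · simp [extA_of_mem _ hg, sgnM, sgnC_of_mem hg, resA, two_mul]
  · simp [extA_of_not_mem _ hg, sgnM, sgnC_of_not_mem hg]

theorem extA_add (f g : alternatingGroup X → ℂ) : extA (f + g) = extA f + extA g := by
  funext h
  by_cases hh : h ∈ alternatingGroup X
  · simp [extA_of_mem _ hh]
  · simp [extA_of_not_mem _ hh]

theorem pair_sgnM (α β : Perm X → ℂ) : pair (sgnM α) (sgnM β) = pair α β := by
  unfold pair
  congr 1
  refine Finset.sum_congr rfl fun g _ => ?_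
  simp only [sgnM, sgnC_inv]
  linear_combination α g * β g⁻¹ * sgnC_mul_self g

theorem pair_extA (f : alternatingGroup X → ℂ) (β : Perm X → ℂ) [Nontrivial X] :
    2 * pair (extA f) β = pair f (resA β) := by
  unfold pair
  rw [sum_extA_mul f fun h => β h⁻¹, card_perm_eq, mul_inv, ← mul_assoc, ← mul_assoc,
    mul_inv_cancel₀ two_ne_zero, one_mul]
  rfl

theorem pair_resA_resA [Nontrivial X] (α β : Perm X → ℂ) :
    pair (resA α) (resA β) = pair α β + pair (sgnM α) β := by
  rw [← pair_extA, ← pair_add_left, ← extA_resA, pair_zsmul_left]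
  norm_num

/-- The class function of the symmetric group induced from `f`, written with an odd
permutation `τ`. -/
def indA (τ : Perm X) : (alternatingGroup X → ℂ) →ₗ[ℤ] (Perm X → ℂ) where
  toFun f := extA (f + tw τ f)
  map_add' f g := by rw [← extA_add, tw_add]; congr 1; abel
  map_smul' z f := by
    rw [tw_zsmul, ← smul_add]
    funext h
    by_cases hh : h ∈ alternatingGroup X
    · simp [extA_of_mem _ hh]
    · simp [extA_of_not_mem _ hh]

theorem indA_apply (τ : Perm X) (f : alternatingGroup X → ℂ) : indA τ f = extA (f + tw τ f) := rfl

theorem resA_indA (τ : Perm X) (f : alternatingGroup X → ℂ) : resA (indA τ f) = f + tw τ f := by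
  funext a; rw [resA_apply, indA_apply, extA_coe]

theorem sgnM_indA (τ : Perm X) (f : alternatingGroup X → ℂ) : sgnM (indA τ f) = indA τ f := by
  funext g
  by_cases hg : g ∈ alternatingGroup X
  · rw [sgnM, sgnC_of_mem hg, one_mul]
  · rw [sgnM, indA_apply, extA_of_not_mem _ hg, mul_zero]

theorem tw_isCF {τ : Perm X} {f : alternatingGroup X → ℂ} (hf : IsCF f) : IsCF (tw τ f) := by
  intro g h
  simp only [tw, Function.comp_apply, map_mul, map_inv]
  exact hf _ _

theorem indA_isCF {τ : Perm X} (hτ : τ ∉ alternatingGroup X) {f : alternatingGroup X → ℂ}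
    (hf : IsCF f) : IsCF (indA τ f) := by
  intro g s
  have h1 := tw_isCF (τ := τ) hf
  rw [indA_apply, extA_add, Pi.add_apply, Pi.add_apply]
  by_cases hs : s ∈ alternatingGroup X
  · rw [extA_conj hf hs, extA_conj h1 hs]
  · have key : ∀ {u : alternatingGroup X → ℂ}, IsCF u → extA u (s * g * s⁻¹) = extA (tw τ u) g := by
      intro u hu
      rw [extA_conj_odd hu hs hτ]
      by_cases hg : g ∈ alternatingGroup X
      · rw [extA_of_mem _ hg, tw_apply]
      · rw [extA_of_not_mem _ hg, extA_of_not_mem]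
        rwa [conj_mem_alt_iff]
    rw [key hf, key h1, tw_tw hf hτ, add_comm]

theorem tw_resA {χ : Perm X → ℂ} (hχ : IsCF χ) (τ : Perm X) : tw τ (resA χ) = resA χ := by
  funext a
  rw [tw_apply, extA_of_mem _ ((conj_mem_alt_iff _ _).mpr a.2), resA_apply, resA_apply]
  exact hχ _ _

theorem indA_frobenius [Nontrivial X] {τ : Perm X} (hτ : τ ∉ alternatingGroup X)
    {f : alternatingGroup X → ℂ} (hf : IsCF f) {χ : Perm X → ℂ} (hχ : IsCF χ) :
    pair (indA τ f) χ = pair f (resA χ) := by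
  have h := pair_extA (f + tw τ f) χ
  rw [pair_add_left, pair_tw_left hτ hf, tw_resA hχ, ← indA_apply, ← two_mul] at h
  exact mul_left_cancel₀ two_ne_zero h

theorem resA_mem_closure {χ : Perm X → ℂ} (hχ : χ ∈ IrrChar (Perm X)) :
    resA χ ∈ AddSubmonoid.closure (IrrChar (alternatingGroup X)) :=
  irr_comp_mem_closure hχ (alternatingGroup X).subtype

theorem resA_virt {χ : Perm X → ℂ} (hχ : χ ∈ virt (Perm X)) :
    resA χ ∈ virt (alternatingGroup X) :=
  virt_comp hχ (alternatingGroup X).subtype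

theorem indA_virt [Nontrivial X] {τ : Perm X} (hτ : τ ∉ alternatingGroup X)
    {f : alternatingGroup X → ℂ} (hf : f ∈ virt (alternatingGroup X)) :
    indA τ f ∈ virt (Perm X) := by
  refine mem_virt_of_pair (indA_isCF hτ (virt_isCF hf)) fun χ hχ => ?_
  rw [indA_frobenius hτ (virt_isCF hf) (irr_isCF hχ)]
  exact virt_pair_int hf (resA_virt (irr_mem_virt hχ))

/-- The restriction of a character not stable under the sign is irreducible. -/
theorem resA_irr [Nontrivial X] {χ : Perm X → ℂ} (hχ : χ ∈ IrrChar (Perm X))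
    (hs : sgnM χ ≠ χ) : resA χ ∈ IrrChar (alternatingGroup X) := by
  have h1 : pair (resA χ) (resA χ) = 1 := by
    rw [pair_resA_resA, pair_irr hχ hχ, pair_irr (sgnM_irr hχ) hχ, if_pos rfl, if_neg hs, add_zero]
  rcases virt_norm_one (resA_virt (irr_mem_virt hχ)) h1 with h | h
  · exact h
  · obtain ⟨k, hk⟩ := closure_pair_nat (resA_mem_closure hχ) h
    rw [pair_neg_right, h1] at hk
    have : (k : ℤ) = -1 := by exact_mod_cast hk.symm
    omega

/-- The restriction of a sign-stable character is the sum of an irreducible character and its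
distinct conjugate. -/
theorem resA_split [Nontrivial X] {τ : Perm X} (hτ : τ ∉ alternatingGroup X) {χ : Perm X → ℂ}
    (hχ : χ ∈ IrrChar (Perm X)) (hs : sgnM χ = χ) :
    ∃ ρ ∈ IrrChar (alternatingGroup X), tw τ ρ ≠ ρ ∧ resA χ = ρ + tw τ ρ := by
  have h1 : pair (resA χ) (resA χ) = 2 := by
    rw [pair_resA_resA, hs, pair_irr hχ hχ, if_pos rfl]; norm_num
  obtain ⟨ρ, hρ, ρ', hρ', hne, a, b, ha, hb, hab⟩ :=
    virt_norm_two (resA_virt (irr_mem_virt hχ)) h1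
  have pa : pair (resA χ) ρ = a := by
    rw [hab, pair_add_left, pair_zsmul_left, pair_zsmul_left, pair_irr hρ hρ, pair_irr hρ' hρ,
      if_pos rfl, if_neg hne.symm]; ring
  have pb : pair (resA χ) ρ' = b := by
    rw [hab, pair_add_left, pair_zsmul_left, pair_zsmul_left, pair_irr hρ hρ', pair_irr hρ' hρ',
      if_pos rfl, if_neg hne]; ring
  have pos : ∀ {z : ℤ} {r}, z * z = 1 → r ∈ IrrChar (alternatingGroup X) →
      pair (resA χ) r = z → z = 1 := by
    intro z r hz hr hzr
    obtain ⟨k, hk⟩ := closure_pair_nat (resA_mem_closure hχ) hr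
    have : z = k := by rw [hzr] at hk; exact_mod_cast hk
    nlinarith
  obtain rfl := pos ha hρ pa
  obtain rfl := pos hb hρ' pb
  rw [one_smul, one_smul] at hab
  have htw : tw τ ρ = ρ ∨ tw τ ρ = ρ' := by
    by_contra hcon
    push Not at hcon
    have h2 : pair (resA χ) (tw τ ρ) = 1 := by
      rw [← tw_resA (irr_isCF hχ) τ, pair_tw, pa]; norm_num
    rw [hab, pair_add_left, pair_irr hρ (tw_irr τ hρ), pair_irr hρ' (tw_irr τ hρ),
      if_neg hcon.1.symm, if_neg hcon.2.symm] at h2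
    norm_num at h2
  rcases htw with h | h
  · -- If `ρ` were fixed, its induction would be orthogonal to that of `ρ'`; but both contain `χ`.
    exfalso
    have h0 : pair (indA τ ρ) (indA τ ρ') = 0 := by
      rw [pair_comm, indA_frobenius hτ (irr_isCF hρ') (indA_isCF hτ (irr_isCF hρ)), resA_indA, h,
        pair_add_right, pair_irr hρ' hρ, if_neg hne.symm, add_zero]
    have hn : ∀ ψ : Perm X → ℂ, ∀ r ∈ IrrChar (alternatingGroup X), ∃ k : ℕ,
        ψ ∈ IrrChar (Perm X) → pair (indA τ r) ψ = k := by
      intro ψ r hr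
      by_cases hψ : ψ ∈ IrrChar (Perm X)
      · obtain ⟨k, hk⟩ := closure_pair_nat (resA_mem_closure hψ) hr
        exact ⟨k, fun _ => by rw [indA_frobenius hτ (irr_isCF hr) (irr_isCF hψ), pair_comm, hk]⟩
      · exact ⟨0, fun h => absurd h hψ⟩
    choose k hk using fun ψ => hn ψ ρ hρ
    choose k' hk' using fun ψ => hn ψ ρ' hρ'
    obtain ⟨c, hc, -, hp⟩ := virt_expand (indA_virt hτ (irr_mem_virt hρ))
    have h3 := hp _ (indA_virt hτ (irr_mem_virt hρ'))
    rw [h0] at h3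
    have h4 : ∑ ψ ∈ irrF (Perm X), k ψ * k' ψ = 0 := by
      have : ((∑ ψ ∈ irrF (Perm X), k ψ * k' ψ : ℕ) : ℂ) = 0 := by
        rw [h3]; push_cast
        refine Finset.sum_congr rfl fun ψ hψ => ?_
        rw [← hk ψ (mem_irrF.mp hψ), ← hk' ψ (mem_irrF.mp hψ), hc ψ (mem_irrF.mp hψ)]
      exact_mod_cast this
    have h5 := (Finset.sum_eq_zero_iff.mp h4) χ (mem_irrF.mpr hχ)
    have h6 : (k χ : ℂ) = 1 := by
      rw [← hk χ hχ, indA_frobenius hτ (irr_isCF hρ) (irr_isCF hχ), pair_comm, pa]; norm_num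
    have h7 : (k' χ : ℂ) = 1 := by
      rw [← hk' χ hχ, indA_frobenius hτ (irr_isCF hρ') (irr_isCF hχ), pair_comm, pb]; norm_num
    have h8 : k χ = 1 := by exact_mod_cast h6
    have h9 : k' χ = 1 := by exact_mod_cast h7
    rw [h8, h9] at h5
    omega
  · exact ⟨ρ, hρ, by rw [h]; exact hne.symm, by rw [hab, h]⟩

theorem indA_resA {τ : Perm X} {χ : Perm X → ℂ} (hχ : IsCF χ) :
    indA τ (resA χ) = χ + sgnM χ := by
  rw [indA_apply, tw_resA hχ, extA_add, ← extA_resA, two_smul]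

theorem extA_resA_of_sgnM {χ : Perm X → ℂ} (hs : sgnM χ = χ) : extA (resA χ) = χ := by
  have := extA_resA χ
  rw [hs, two_smul] at this
  funext g
  have := congrFun this g
  simp only [Pi.add_apply] at this
  linear_combination (1 / 2) * this

/-- Every irreducible character of the alternating group is the restriction of a character of the
symmetric group, or induces to an irreducible one. -/
theorem irr_alt_cases [Nontrivial X] {τ : Perm X} (hτ : τ ∉ alternatingGroup X)
    {ρ : alternatingGroup X → ℂ} (hρ : ρ ∈ IrrChar (alternatingGroup X)) :
    ∃ χ ∈ IrrChar (Perm X), pair (resA χ) ρ ≠ 0 ∧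
      (sgnM χ ≠ χ ∧ ρ = resA χ ∨ sgnM χ = χ ∧ tw τ ρ ≠ ρ ∧ indA τ ρ = χ) := by
  have h0 : ∃ χ ∈ IrrChar (Perm X), pair (indA τ ρ) χ ≠ 0 := by
    by_contra hcon
    push Not at hcon
    have h1 := cf_eq_zero (indA_isCF hτ (irr_isCF hρ)) hcon
    have h2 : pair ρ (resA (indA τ ρ)) = 0 := by
      rw [h1]; exact pair_zero_right _
    rw [resA_indA, pair_add_right, pair_irr hρ hρ, pair_irr hρ (tw_irr τ hρ), if_pos rfl] at h2
    split_ifs at h2 <;> norm_num at h2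
  obtain ⟨χ, hχ, hne⟩ := h0
  rw [indA_frobenius hτ (irr_isCF hρ) (irr_isCF hχ), pair_comm] at hne
  refine ⟨χ, hχ, hne, ?_⟩
  by_cases hs : sgnM χ = χ
  · right
    refine ⟨hs, ?_⟩
    obtain ⟨r, hr, hrne, hres⟩ := resA_split hτ hχ hs
    have hcase : ρ = r ∨ ρ = tw τ r := by
      by_contra hcon
      push Not at hcon
      rw [hres, pair_add_left, pair_irr hr hρ, pair_irr (tw_irr τ hr) hρ, if_neg hcon.1.symm,
        if_neg hcon.2.symm] at hne
      norm_num at hne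
    have htt := tw_tw (irr_isCF hr) hτ
    rcases hcase with h | h
    · subst h
      exact ⟨hrne, by rw [indA_apply, ← hres, extA_resA_of_sgnM hs]⟩
    · subst h
      rw [htt]
      exact ⟨hrne.symm, by rw [indA_apply, htt, add_comm, ← hres, extA_resA_of_sgnM hs]⟩
  · left
    refine ⟨hs, ?_⟩
    by_contra hcon
    rw [pair_irr (resA_irr hχ hs) hρ, if_neg (Ne.symm hcon)] at hne
    exact hne rfl

end Clifford

/-! ### Descent of a sign-stable basic set to the alternating group -/

section Descent

open Equiv

variable {X : Type} [Fintype X] [DecidableEq X] {p : ℕ}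

theorem even_of_eq_two_mul {z : ℤ} {x : ℂ} (hx : IsIntegral ℤ x) (h : (z : ℂ) = 2 * x) :
    Even z := by
  have h1 : IsIntegral ℤ ((z : ℚ) / 2) := by
    rw [← isIntegral_algebraMap_iff (algebraMap ℚ ℂ).injective]
    convert hx using 1
    rw [map_div₀, map_intCast, h]
    simp
  obtain ⟨y, hy⟩ := IsIntegrallyClosed.isIntegral_iff.mp h1
  have h2 : (z : ℚ) = 2 * y := by
    have : (y : ℚ) = z / 2 := by simpa using hy
    rw [this]; ring
  have h3 : z = 2 * y := by exact_mod_cast h2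
  exact ⟨y, by omega⟩

theorem coe_mem_pRegular {a : alternatingGroup X} :
    (a : Perm X) ∈ pRegular p (Perm X) ↔ a ∈ pRegular p (alternatingGroup X) := by
  simp [pRegular, Subgroup.orderOf_coe]

theorem pRegular_of_isConj {g h : Perm X} (hgh : IsConj g h) (hg : h ∈ pRegular p (Perm X)) :
    g ∈ pRegular p (Perm X) := by
  obtain ⟨s, rfl⟩ := isConj_iff.mp hgh
  have : orderOf (s * g * s⁻¹) = orderOf g :=
    (MulAut.conj s).orderOf_eq g
  simpa only [pRegular, Set.mem_ofPred_eq, this] using hg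

theorem trunc_indA {τ : Perm X} {f : alternatingGroup X → ℂ} {Φ : Perm X → ℂ}
    (h : truncL (pRegular p (Perm X)) (indA τ f) = truncL (pRegular p (Perm X)) Φ) :
    ∀ a ∈ pRegular p (alternatingGroup X), f a + tw τ f a = Φ a := by
  intro a ha
  rw [← truncL_eq_iff.mp h a (coe_mem_pRegular.mpr ha)]
  exact (congrFun (resA_indA τ f) a).symm

/-- The integral span of a family with independent truncations is determined by truncations. -/
theorem eq_zero_of_trunc {G : Type} [Group G] {C : Set G} {b K : Set (G → ℂ)}
    (hK : IsBasicSetOf C b K) {Φ : G → ℂ} (hΦ : Φ ∈ Submodule.span ℤ K)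
    (h0 : truncL C Φ = 0) : Φ = 0 := by
  obtain ⟨l, rfl⟩ := (Finsupp.mem_span_iff_linearCombination ℤ K Φ).mp hΦ
  rw [Finsupp.apply_linearCombination] at h0
  rw [linearIndependent_iff.mp hK.2.1 l h0, map_zero]

/-- The irreducible characters of the alternating group lying below a character in `K`. -/
def below (K : Set (Perm X → ℂ)) : Set (alternatingGroup X → ℂ) :=
  {ρ | ρ ∈ IrrChar (alternatingGroup X) ∧ ∃ χ ∈ K, pair (resA χ) ρ ≠ 0}

variable {K : Set (Perm X → ℂ)}

theorem tw_mem_below (hK : K ⊆ IrrChar (Perm X)) (τ : Perm X) {ρ : alternatingGroup X → ℂ}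
    (h : ρ ∈ below K) : tw τ ρ ∈ below K := by
  obtain ⟨hρ, χ, hχ, hne⟩ := h
  refine ⟨tw_irr τ hρ, χ, hχ, ?_⟩
  rwa [← tw_resA (irr_isCF (hK hχ)) τ, pair_tw]

theorem below_span_virt {f : alternatingGroup X → ℂ} (h : f ∈ Submodule.span ℤ (below K)) :
    f ∈ virt (alternatingGroup X) :=
  Submodule.span_mono (fun _ h => h.1) h

theorem pair_span_irr {G : Type} [Group G] [Fintype G] {K : Set (G → ℂ)} (hK : K ⊆ IrrChar G)
    {f ρ : G → ℂ} (h : f ∈ Submodule.span ℤ K) (hρ : ρ ∈ IrrChar G) (hn : ρ ∉ K) :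
    pair f ρ = 0 := by
  induction h using Submodule.span_induction with
  | mem x hx => rw [pair_irr (hK hx) hρ, if_neg]; rintro rfl; exact hn hx
  | zero => exact pair_zero_left _
  | add x y _ _ hx hy => rw [pair_add_left, hx, hy, add_zero]
  | smul z x _ hx => rw [pair_zsmul_left, hx, mul_zero]

theorem resA_mem_below_span (hK : K ⊆ IrrChar (Perm X)) {ψ : Perm X → ℂ} (hψ : ψ ∈ K) :
    resA ψ ∈ Submodule.span ℤ (below K) := by
  obtain ⟨c, hc, he, -⟩ := virt_expand (resA_virt (irr_mem_virt (hK hψ)))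
  rw [he]
  refine Submodule.sum_mem _ fun ρ hρ => ?_
  rw [mem_irrF] at hρ
  by_cases h0 : c ρ = 0
  · rw [h0, zero_smul]; exact zero_mem _
  · refine Submodule.smul_mem _ _ (Submodule.subset_span ⟨hρ, ψ, hψ, ?_⟩)
    rw [hc ρ hρ]; exact_mod_cast h0

/-- Induction sends the characters below a sign-stable `K` into the integral span of `K`. -/
theorem indA_below_mem [Nontrivial X] (hK : K ⊆ IrrChar (Perm X)) (hs : ∀ χ ∈ K, sgnM χ ∈ K)
    {τ : Perm X} (hτ : τ ∉ alternatingGroup X) {ρ : alternatingGroup X → ℂ} (h : ρ ∈ below K) :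
    indA τ ρ ∈ Submodule.span ℤ K := by
  obtain ⟨hρ, ψ, hψ, hne⟩ := h
  obtain ⟨χ, hχ, -, hcase⟩ := irr_alt_cases hτ hρ
  rw [pair_comm, ← indA_frobenius hτ (irr_isCF hρ) (irr_isCF (hK hψ))] at hne
  rcases hcase with ⟨h1, rfl⟩ | ⟨h1, h2, h3⟩
  · rw [indA_resA (irr_isCF hχ)] at hne ⊢
    have hχK : χ ∈ K := by
      by_contra hn
      have hn' : sgnM χ ∉ K := fun h => hn (by simpa [sgnM_sgnM] using hs _ h)
      rw [pair_add_left, pair_irr hχ (hK hψ), pair_irr (sgnM_irr hχ) (hK hψ),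
        if_neg (by rintro rfl; exact hn hψ), if_neg (by rintro rfl; exact hn' hψ)] at hne
      norm_num at hne
    exact add_mem (Submodule.subset_span hχK) (Submodule.subset_span (hs _ hχK))
  · rw [h3] at hne ⊢
    rw [pair_irr hχ (hK hψ)] at hne
    have : χ = ψ := by by_contra h; exact hne (if_neg h)
    rw [this]
    exact Submodule.subset_span hψ

/-- A sign-stable integral combination of `K` is induced from an integral combination of the
characters below `K`. -/
theorem exists_lift [Nontrivial X] (hK : K ⊆ IrrChar (Perm X)) (hs : ∀ χ ∈ K, sgnM χ ∈ K)
    {τ : Perm X} (hτ : τ ∉ alternatingGroup X) {Φ : Perm X → ℂ} (hΦ : Φ ∈ Submodule.span ℤ K)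
    (hΦs : sgnM Φ = Φ) : Φ ∈ (Submodule.span ℤ (below K)).map (indA τ) := by
  have hv : Φ ∈ virt (Perm X) := Submodule.span_mono hK hΦ
  obtain ⟨c, hc, he, -⟩ := virt_expand hv
  have hcs : ∀ χ ∈ IrrChar (Perm X), c (sgnM χ) = c χ := by
    intro χ hχ
    have := hc _ (sgnM_irr hχ)
    rw [← hΦs, pair_sgnM, hc χ hχ] at this
    exact_mod_cast this.symm
  have hc0 : ∀ χ ∈ IrrChar (Perm X), χ ∉ K → c χ = 0 := by
    intro χ hχ hn
    have := hc χ hχ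
    rw [pair_span_irr hK hΦ hχ hn] at this
    exact_mod_cast this.symm
  -- The characters with a given restriction form an orbit of the sign twist.
  rw [he, ← Finset.sum_fiberwise_of_maps_to (g := resA) (t := (irrF (Perm X)).image resA)
    fun χ hχ => Finset.mem_image_of_mem _ hχ]
  refine Submodule.sum_mem _ fun r hr => ?_
  obtain ⟨χ, hχ, rfl⟩ := Finset.mem_image.mp hr
  rw [mem_irrF] at hχ
  have hfib : (irrF (Perm X)).filter (fun ψ => resA ψ = resA χ) = {χ, sgnM χ} := by
    ext ψ
    simp only [Finset.mem_filter, mem_irrF, Finset.mem_insert, Finset.mem_singleton]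
    constructor
    · rintro ⟨hψ, h⟩
      by_contra hcon
      push Not at hcon
      have h1 := pair_resA_resA ψ χ
      have h2 := pair_resA_resA χ χ
      rw [h, h2, pair_irr hψ hχ, pair_irr (sgnM_irr hψ) hχ, if_neg hcon.1, if_neg, pair_irr hχ hχ,
        pair_irr (sgnM_irr hχ) hχ, if_pos rfl] at h1
      · split_ifs at h1 <;> norm_num at h1
      · intro h3
        exact hcon.2 (by rw [← h3, sgnM_sgnM])
    · rintro (rfl | rfl)
      · exact ⟨hχ, rfl⟩
      · exact ⟨sgnM_irr hχ, resA_sgnM χ⟩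
  rw [hfib]
  by_cases hχK : χ ∈ K
  · by_cases hst : sgnM χ = χ
    · rw [hst, Finset.pair_eq_singleton, Finset.sum_singleton]
      refine Submodule.smul_mem _ _ ?_
      obtain ⟨ρ, hρ, hne, hres⟩ := resA_split hτ hχ hst
      refine ⟨ρ, Submodule.subset_span ⟨hρ, χ, hχK, ?_⟩, ?_⟩
      · rw [hres, pair_add_left, pair_irr hρ hρ, pair_irr (tw_irr τ hρ) hρ, if_pos rfl,
          if_neg hne]
        norm_num
      · rw [indA_apply, ← hres, extA_resA_of_sgnM hst]
    · rw [Finset.sum_pair (Ne.symm hst), hcs χ hχ, ← smul_add]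
      refine Submodule.smul_mem _ _ ⟨resA χ, resA_mem_below_span hK hχK, ?_⟩
      exact indA_resA (irr_isCF hχ)
  · have hn' : sgnM χ ∉ K := fun h => hχK (by simpa [sgnM_sgnM] using hs _ h)
    refine (Submodule.sum_mem _ fun ψ hψ => ?_)
    rcases Finset.mem_insert.mp hψ with rfl | hψ
    · rw [hc0 _ hχ hχK, zero_smul]; exact zero_mem _
    · rw [Finset.mem_singleton.mp hψ, hc0 _ (sgnM_irr hχ) hn', zero_smul]; exact zero_mem _

/-- Up to truncation, symmetrisations come from characters below a basic set `K`. -/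
theorem exists_symm_eq [Nontrivial X]
    (hK : IsBasicSetOf (pRegular p (Perm X)) (IrrChar (Perm X)) K)
    (hs : ∀ χ ∈ K, sgnM χ ∈ K) {τ : Perm X} (hτ : τ ∉ alternatingGroup X)
    {ρ : alternatingGroup X → ℂ} (hρ : ρ ∈ IrrChar (alternatingGroup X)) :
    ∃ F ∈ Submodule.span ℤ (below K), ∀ a ∈ pRegular p (alternatingGroup X),
      (ρ - F) a + tw τ (ρ - F) a = 0 := by
  have h1 : truncL (pRegular p (Perm X)) (indA τ ρ) ∈
      (Submodule.span ℤ K).map (truncL (pRegular p (Perm X))) := by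
    have h2 : indA τ ρ ∈ Submodule.span ℤ (IrrChar (Perm X)) := indA_virt hτ (irr_mem_virt hρ)
    have h3 := Submodule.mem_map_of_mem (f := truncL (pRegular p (Perm X))) h2
    rw [Submodule.map_span] at h3 ⊢
    exact hK.2.2.symm ▸ h3
  obtain ⟨Φ, hΦ, hΦt⟩ := h1
  have hsK : ∀ Ψ ∈ Submodule.span ℤ K, sgnM Ψ ∈ Submodule.span ℤ K := by
    intro Ψ hΨ
    induction hΨ using Submodule.span_induction with
    | mem x hx => exact Submodule.subset_span (hs x hx)
    | zero =>
      have : sgnM (0 : Perm X → ℂ) = 0 := by funext g; simp [sgnM]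
      rw [this]; exact zero_mem _
    | add x y _ _ hx hy =>
      have : sgnM (x + y) = sgnM x + sgnM y := by funext g; simp [sgnM, mul_add]
      rw [this]; exact add_mem hx hy
    | smul z x _ hx =>
      have : sgnM (z • x) = z • sgnM x := by funext g; simp [sgnM]; ring
      rw [this]; exact Submodule.smul_mem _ _ hx
  have hfix : sgnM Φ = Φ := by
    refine sub_eq_zero.mp (eq_zero_of_trunc hK (sub_mem (hsK Φ hΦ) hΦ) ?_)
    rw [truncL_eq_zero_iff]
    intro g hg
    have h4 := truncL_eq_iff.mp hΦt g hg
    have h5 : sgnC X g * indA τ ρ g = indA τ ρ g := congrFun (sgnM_indA τ ρ) g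
    rw [Pi.sub_apply, sgnM, h4, h5, sub_self]
  obtain ⟨F, hF, hFΦ⟩ := exists_lift hK.1 hs hτ hΦ hfix
  refine ⟨F, hF, fun a ha => ?_⟩
  have h6 := trunc_indA (f := F) (τ := τ) (Φ := indA τ ρ) (by rw [hFΦ, hΦt]) a ha
  have h7 : indA τ ρ (a : Perm X) = ρ a + tw τ ρ a := congrFun (resA_indA τ ρ) a
  rw [h7] at h6
  rw [tw_sub, Pi.sub_apply, Pi.sub_apply]
  linear_combination -h6

end Descent

section Assembly

open Equiv

variable {X : Type} [Fintype X] [DecidableEq X] {p : ℕ} {K : Set (Perm X → ℂ)}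

/-- On the class where `ρ` is moved, an integral combination of the characters is moved only
through its coefficients at `ρ` and its conjugate. -/
theorem split_eval {τ : Perm X} (hτ : τ ∉ alternatingGroup X) {ρ : alternatingGroup X → ℂ}
    (hρ : ρ ∈ IrrChar (alternatingGroup X)) (hne : tw τ ρ ≠ ρ) {a : alternatingGroup X}
    (ha : ∀ ρ' ∈ IrrChar (alternatingGroup X), tw τ ρ' a ≠ ρ' a → ρ' = ρ ∨ ρ' = tw τ ρ)
    (c : (alternatingGroup X → ℂ) → ℤ) {G : alternatingGroup X → ℂ}
    (hG : G = ∑ ρ' ∈ irrF (alternatingGroup X), c ρ' • ρ') :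
    G a - tw τ G a = ((c ρ - c (tw τ ρ) : ℤ) : ℂ) * (ρ a - tw τ ρ a) := by
  have h1 : G a - tw τ G a =
      ∑ ρ' ∈ irrF (alternatingGroup X), (c ρ' : ℂ) * (ρ' a - tw τ ρ' a) := by
    rw [hG]
    simp only [tw, Function.comp_apply, Finset.sum_apply, Pi.smul_apply]
    simp only [zsmul_eq_mul]
    rw [← Finset.sum_sub_distrib]
    exact Finset.sum_congr rfl fun _ _ => by ring
  rw [h1, ← Finset.sum_subset (s₁ := {ρ, tw τ ρ}), Finset.sum_pair hne.symm,
    tw_tw (irr_isCF hρ) hτ]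
  · push_cast; ring
  · intro r hr
    rcases Finset.mem_insert.mp hr with rfl | hr
    · exact mem_irrF.mpr hρ
    · rw [Finset.mem_singleton.mp hr]; exact mem_irrF.mpr (tw_irr τ hρ)
  · intro r hr hn
    have : tw τ r a = r a := by
      by_contra h
      rcases ha r (mem_irrF.mp hr) h with rfl | rfl <;> simp at hn
    rw [this, sub_self, mul_zero]

/-- A virtual character that is anti-invariant on `p`-regular elements has coefficients of the
same parity at `ρ` and its conjugate when these differ on a `p`-regular class, because the square
of the difference is an odd integer. -/
theorem parity {τ : Perm X} (hτ : τ ∉ alternatingGroup X) {ρ : alternatingGroup X → ℂ}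
    (hρ : ρ ∈ IrrChar (alternatingGroup X)) (hne : tw τ ρ ≠ ρ) {a : alternatingGroup X} {m : ℤ}
    (hm : Odd m) (hsq : (ρ a - tw τ ρ a) ^ 2 = m)
    (ha : ∀ ρ' ∈ IrrChar (alternatingGroup X), tw τ ρ' a ≠ ρ' a → ρ' = ρ ∨ ρ' = tw τ ρ)
    (c : (alternatingGroup X → ℂ) → ℤ) {G : alternatingGroup X → ℂ}
    (hv : G ∈ virt (alternatingGroup X))
    (hG : G = ∑ ρ' ∈ irrF (alternatingGroup X), c ρ' • ρ') (h0 : G a + tw τ G a = 0) :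
    Even (c ρ - c (tw τ ρ)) := by
  have h1 := split_eval hτ hρ hne ha c hG
  have h2 : Even ((c ρ - c (tw τ ρ)) * m) := by
    refine even_of_eq_two_mul (x := G a * (ρ a - tw τ ρ a)) ?_ ?_
    · exact (virt_integral hv a).mul ((virt_integral (irr_mem_virt hρ) a).sub
        (virt_integral (irr_mem_virt (tw_irr τ hρ)) a))
    · rw [Int.cast_mul, ← hsq]
      linear_combination (-(ρ a - tw τ ρ a)) * h1 - (ρ a - tw τ ρ a) * h0
  rcases Int.even_mul.mp h2 with h | h
  · exact h
  · exact absurd h (Int.not_even_iff_odd.mpr hm)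

/-- A character that is moved on `p`-regular elements lies below every sign-stable basic set. -/
theorem mem_below_of_moved [Nontrivial X]
    (hK : IsBasicSetOf (pRegular p (Perm X)) (IrrChar (Perm X)) K)
    (hs : ∀ χ ∈ K, sgnM χ ∈ K) {τ : Perm X} (hτ : τ ∉ alternatingGroup X)
    {ρ : alternatingGroup X → ℂ} (hρ : ρ ∈ IrrChar (alternatingGroup X)) (hne : tw τ ρ ≠ ρ)
    {a : alternatingGroup X} {m : ℤ}
    (hm : Odd m) (hsq : (ρ a - tw τ ρ a) ^ 2 = m)
    (ha : ∀ ρ' ∈ IrrChar (alternatingGroup X), tw τ ρ' a ≠ ρ' a → ρ' = ρ ∨ ρ' = tw τ ρ)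
    (hreg : a ∈ pRegular p (alternatingGroup X)) : ρ ∈ below K := by
  by_contra hn
  have hn' : tw τ ρ ∉ below K := fun h => hn (by
    simpa [tw_tw (irr_isCF hρ) hτ] using tw_mem_below hK.1 τ h)
  obtain ⟨F, hF, hFa⟩ := exists_symm_eq hK hs hτ hρ
  have hv : ρ - F ∈ virt (alternatingGroup X) := sub_mem (irr_mem_virt hρ) (below_span_virt hF)
  obtain ⟨c, hc, he, -⟩ := virt_expand hv
  have h1 := parity hτ hρ hne hm hsq ha c hv he (hFa a hreg)
  have hb : below K ⊆ IrrChar (alternatingGroup X) := fun _ h => h.1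
  have h2 : (c ρ : ℂ) = 1 := by
    rw [← hc ρ hρ, pair_sub_left, pair_span_irr hb hF hρ hn, pair_irr hρ hρ, if_pos rfl, sub_zero]
  have h3 : (c (tw τ ρ) : ℂ) = 0 := by
    rw [← hc _ (tw_irr τ hρ), pair_sub_left, pair_span_irr hb hF (tw_irr τ hρ) hn',
      pair_irr hρ (tw_irr τ hρ), if_neg hne.symm, sub_zero]
  have h4 : c ρ = 1 := by exact_mod_cast h2
  have h5 : c (tw τ ρ) = 0 := by exact_mod_cast h3
  rw [h4, h5] at h1
  revert h1; decide

theorem sum_irrF_tw {M : Type} [AddCommMonoid M] {τ : Perm X} (hτ : τ ∉ alternatingGroup X)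
    (f : (alternatingGroup X → ℂ) → M) :
    ∑ ρ ∈ irrF (alternatingGroup X), f (tw τ ρ) = ∑ ρ ∈ irrF (alternatingGroup X), f ρ := by
  refine Finset.sum_nbij' (tw τ) (tw τ) ?_ ?_ ?_ ?_ ?_
  · exact fun r hr => mem_irrF.mpr (tw_irr τ (mem_irrF.mp hr))
  · exact fun r hr => mem_irrF.mpr (tw_irr τ (mem_irrF.mp hr))
  · exact fun r hr => tw_tw (irr_isCF (mem_irrF.mp hr)) hτ
  · exact fun r hr => tw_tw (irr_isCF (mem_irrF.mp hr)) hτ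
  · exact fun r _ => rfl

/-- On `p`-regular elements every character agrees with an integral combination of characters
below `K`: the symmetric part is `F`, and the anti-invariant remainder is corrected by half of its
coefficient differences, which are integers by `parity`. -/
theorem trunc_mem_span_below [Nontrivial X]
    (hK : IsBasicSetOf (pRegular p (Perm X)) (IrrChar (Perm X)) K)
    (hs : ∀ χ ∈ K, sgnM χ ∈ K) {ρ : alternatingGroup X → ℂ}
    (hρ : ρ ∈ IrrChar (alternatingGroup X)) :
    truncL (pRegular p (alternatingGroup X)) ρ ∈
      (Submodule.span ℤ (below K)).map (truncL (pRegular p (alternatingGroup X))) := by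
  obtain ⟨τ, hτ⟩ := exists_odd_perm (X := X)
  obtain ⟨F, hF, hFa⟩ := exists_symm_eq hK hs hτ hρ
  have hv : ρ - F ∈ virt (alternatingGroup X) := sub_mem (irr_mem_virt hρ) (below_span_virt hF)
  obtain ⟨c, hc, he, -⟩ := virt_expand hv
  set G := ρ - F with hGdef
  -- The coefficients of `G` modulo characters invisible on `p`-regular elements.
  have hex : ∀ r, ∃ e : ℤ, r ∈ IrrChar (alternatingGroup X) →
      ((∀ a ∈ pRegular p (alternatingGroup X), tw τ r a = r a) → e = 0) ∧
      (¬ (∀ a ∈ pRegular p (alternatingGroup X), tw τ r a = r a) →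
        r ∈ below K ∧ c r - c (tw τ r) = e + e) := by
    intro r
    by_cases hr : r ∈ IrrChar (alternatingGroup X)
    swap
    · exact ⟨0, fun h => absurd h hr⟩
    by_cases hmv : ∀ a ∈ pRegular p (alternatingGroup X), tw τ r a = r a
    · exact ⟨0, fun _ => ⟨fun _ => rfl, fun h => absurd hmv h⟩⟩
    have hmv' := hmv
    push Not at hmv
    obtain ⟨b, hb, hbne⟩ := hmv
    have hne : tw τ r ≠ r := fun h => hbne (congrFun h b)
    obtain ⟨a, ⟨m, hm, hsq⟩, ha, hcl⟩ := exists_split_class hτ hr hne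
    have hreg : a ∈ pRegular p (alternatingGroup X) :=
      coe_mem_pRegular.mp (pRegular_of_isConj (hcl b hbne) (coe_mem_pRegular.mpr hb))
    obtain ⟨e, he'⟩ := parity hτ hr hne hm hsq ha c hv he (hFa a hreg)
    exact ⟨e, fun _ => ⟨fun h => absurd h hmv',
      fun _ => ⟨mem_below_of_moved hK hs hτ hr hne hm hsq ha hreg, he'⟩⟩⟩
  choose e hee using hex
  have hanti : ∀ r ∈ IrrChar (alternatingGroup X), e (tw τ r) = -e r := by
    intro r hr
    have htt := tw_tw (irr_isCF hr) hτ
    have h1 := hee r hr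
    have h2 := hee _ (tw_irr τ hr)
    rw [htt] at h2
    by_cases hmv : ∀ a ∈ pRegular p (alternatingGroup X), tw τ r a = r a
    · rw [h1.1 hmv, h2.1 fun a ha => (hmv a ha).symm, neg_zero]
    · have h3 := (h1.2 hmv).2
      have h4 := (h2.2 fun h => hmv fun a ha => (h a ha).symm).2
      omega
  have hH : ∑ r ∈ irrF (alternatingGroup X), e r • r ∈ Submodule.span ℤ (below K) := by
    refine Submodule.sum_mem _ fun r hr => ?_
    have hr' := mem_irrF.mp hr
    by_cases hmv : ∀ a ∈ pRegular p (alternatingGroup X), tw τ r a = r a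
    · rw [(hee r hr').1 hmv, zero_smul]; exact zero_mem _
    · exact Submodule.smul_mem _ _ (Submodule.subset_span ((hee r hr').2 hmv).1)
  set H := ∑ r ∈ irrF (alternatingGroup X), e r • r with hHdef
  refine ⟨F + H, add_mem hF hH, truncL_eq_iff.mpr fun a ha => ?_⟩
  have hHa : H a = ∑ r ∈ irrF (alternatingGroup X), (e r : ℂ) * r a := by
    rw [hHdef]
    simp only [Finset.sum_apply, Pi.smul_apply]
    simp only [zsmul_eq_mul]
  have hGa : G a = ∑ r ∈ irrF (alternatingGroup X), (c r : ℂ) * r a := by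
    conv_lhs => rw [he]
    simp only [Finset.sum_apply, Pi.smul_apply]
    simp only [zsmul_eq_mul]
  have hGt : tw τ G a = ∑ r ∈ irrF (alternatingGroup X), (c r : ℂ) * tw τ r a := by
    conv_lhs => rw [he]
    simp only [tw, Function.comp_apply, Finset.sum_apply, Pi.smul_apply]
    simp only [zsmul_eq_mul]
  have hGt2 : tw τ G a = ∑ r ∈ irrF (alternatingGroup X), (c (tw τ r) : ℂ) * r a := by
    rw [hGt, ← sum_irrF_tw hτ fun r => (c r : ℂ) * tw τ r a]
    exact Finset.sum_congr rfl fun r hr => by rw [tw_tw (irr_isCF (mem_irrF.mp hr)) hτ]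
  have hGa2 : G a = ∑ r ∈ irrF (alternatingGroup X), (c (tw τ r) : ℂ) * tw τ r a := by
    rw [hGa, ← sum_irrF_tw hτ fun r => (c r : ℂ) * r a]
  have hHa2 : H a = ∑ r ∈ irrF (alternatingGroup X), -((e r : ℂ) * tw τ r a) := by
    rw [hHa, ← sum_irrF_tw hτ fun r => (e r : ℂ) * r a]
    refine Finset.sum_congr rfl fun r hr => ?_
    rw [hanti r (mem_irrF.mp hr)]; push_cast; ring
  -- Both sides expand along the differences of conjugate characters.
  have h4 : 2 * (H a + H a) = (G a - tw τ G a) + (G a - tw τ G a) := by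
    nth_rewrite 1 [hHa]
    nth_rewrite 1 [hHa2]
    nth_rewrite 1 [hGa]
    nth_rewrite 1 [hGt]
    nth_rewrite 1 [hGa2]
    nth_rewrite 1 [hGt2]
    simp only [← Finset.sum_add_distrib, ← Finset.sum_sub_distrib, Finset.mul_sum]
    refine Finset.sum_congr rfl fun r hr => ?_
    by_cases hmv : ∀ a ∈ pRegular p (alternatingGroup X), tw τ r a = r a
    · rw [((hee r (mem_irrF.mp hr)).1 hmv), hmv a ha]; push_cast; ring
    · have h5 : (c r : ℂ) - c (tw τ r) = e r + e r := by
        exact_mod_cast ((hee r (mem_irrF.mp hr)).2 hmv).2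
      linear_combination (-(r a - tw τ r a)) * h5
  have h6 := hFa a ha
  have h7 : G a = ρ a - F a := rfl
  rw [Pi.add_apply]
  linear_combination (1 / 4) * h4 - (1 / 2) * h6 + h7

/-- An alternating group inherits a basic set from a sign-stable basic set of the symmetric
group. -/
theorem exists_basic_of_sym [Nontrivial X]
    (hK : IsBasicSetOf (pRegular p (Perm X)) (IrrChar (Perm X)) K)
    (hs : ∀ χ ∈ K, sgnM χ ∈ K) :
    ∃ B, IsBasicSetOf (pRegular p (alternatingGroup X)) (IrrChar (alternatingGroup X)) B := by
  obtain ⟨τ, hτ⟩ := exists_odd_perm (X := X)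
  set C := pRegular p (alternatingGroup X) with hC
  -- Among characters below `K` with equal truncations, one is kept.
  obtain ⟨B, hBK, hBij⟩ := Set.exists_subset_bijOn (below K) (truncCF C)
  refine ⟨B, fun ρ h => (hBK h).1, ?_, ?_⟩
  · rw [linearIndependent_iff']
    intro s g hg i hi
    set c : (alternatingGroup X → ℂ) → ℤ := fun ρ =>
      if h : ρ ∈ B then (if (⟨ρ, h⟩ : B) ∈ s then g ⟨ρ, h⟩ else 0) else 0 with hc
    set F := ∑ ρ ∈ irrF (alternatingGroup X), c ρ • ρ with hF
    have hFs : F = ∑ ρ ∈ s, g ρ • (ρ : alternatingGroup X → ℂ) := by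
      rw [hF]
      symm
      refine Finset.sum_of_injOn (fun ρ : B => (ρ : alternatingGroup X → ℂ))
        Subtype.val_injective.injOn ?_ ?_ ?_
      · intro ρ _
        exact mem_irrF.mpr (hBK ρ.2).1
      · intro ρ _ hn
        have : c ρ = 0 := by
          simp only [hc]
          split_ifs with h1 h2
          · exact absurd ⟨_, h2, rfl⟩ hn
          · rfl
          · rfl
        rw [this, zero_smul]
      · intro ρ hρ
        have : c ρ = g ρ := by simp only [hc, ρ.2, dif_pos, Subtype.coe_eta, hρ, if_true]
        rw [this]
    have hF0 : ∀ a ∈ C, F a = 0 := by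
      rw [← truncL_eq_zero_iff, hFs, map_sum]
      simpa only [map_smul, truncL_apply] using hg
    have hFK : F ∈ Submodule.span ℤ (below K) := by
      rw [hFs]
      exact Submodule.sum_mem _ fun ρ _ =>
        Submodule.smul_mem _ _ (Submodule.subset_span (hBK ρ.2))
    have hInd : indA τ F = 0 := by
      have h1 : indA τ F ∈ Submodule.span ℤ K := by
        have h2 : (Submodule.span ℤ (below K)).map (indA τ) ≤ Submodule.span ℤ K := by
          rw [Submodule.map_span, Submodule.span_le]
          rintro _ ⟨ρ, hρ, rfl⟩
          exact indA_below_mem hK.1 hs hτ hρ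
        exact h2 (Submodule.mem_map_of_mem hFK)
      refine eq_zero_of_trunc hK h1 ?_
      rw [truncL_eq_zero_iff]
      intro x hx
      by_cases hxA : x ∈ alternatingGroup X
      · rw [indA_apply, extA_of_mem _ hxA, Pi.add_apply, tw_apply,
          hF0 ⟨x, hxA⟩ (coe_mem_pRegular.mp hx),
          extA_of_mem _ ((conj_mem_alt_iff _ _).mpr hxA), hF0, add_zero]
        exact coe_mem_pRegular.mp (pRegular_of_isConj
          (isConj_comm.mp (isConj_iff.mpr ⟨τ, rfl⟩)) hx)
      · rw [indA_apply, extA_of_not_mem _ hxA]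
    have hFt : ∀ a, F a + tw τ F a = 0 := by
      intro a
      have := congrFun (resA_indA τ F) a
      rw [hInd] at this
      exact this.symm
    have hpc : ∀ ρ ∈ IrrChar (alternatingGroup X), pair F ρ = c ρ := by
      intro ρ hρ
      rw [hF, pair_sum_left, Finset.sum_eq_single ρ]
      · rw [pair_zsmul_left, pair_irr hρ hρ, if_pos rfl, mul_one]
      · intro r hr hne
        rw [pair_zsmul_left, pair_irr (mem_irrF.mp hr) hρ, if_neg hne, mul_zero]
      · intro h; exact absurd (mem_irrF.mpr hρ) h
    have hcc : ∀ ρ ∈ IrrChar (alternatingGroup X), c (tw τ ρ) = -c ρ := by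
      intro ρ hρ
      have h1 : tw τ F = -F := by
        funext a; rw [Pi.neg_apply]; linear_combination hFt a
      have h2 := hpc _ (tw_irr τ hρ)
      have hFv := below_span_virt hFK
      rw [← pair_tw_left hτ (virt_isCF hFv), h1, pair_neg_left, hpc ρ hρ] at h2
      exact_mod_cast h2.symm
    obtain ⟨ρ, hρB⟩ := i
    have hρ := (hBK hρB).1
    have hci : c ρ = g ⟨ρ, hρB⟩ := by simp only [hc, hρB, dif_pos, hi, if_true]
    rw [← hci]
    by_contra hne0
    have htB : tw τ ρ ∈ B := by
      by_contra hn
      have : c (tw τ ρ) = 0 := by simp only [hc, hn, dif_neg, not_false_iff]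
      have := hcc ρ hρ
      omega
    have hne : tw τ ρ ≠ ρ := by
      intro h
      have := hcc ρ hρ
      rw [h] at this
      omega
    -- Distinct members of `B` have distinct truncations, so the class of `ρ` is `p`-regular.
    obtain ⟨b, hb, hbne⟩ : ∃ b ∈ C, tw τ ρ b ≠ ρ b := by
      by_contra hcon
      push Not at hcon
      exact hne (hBij.injOn htB hρB (truncL_eq_iff.mpr hcon))
    obtain ⟨a, ⟨m, hm, hsq⟩, ha, hcl⟩ := exists_split_class hτ hρ hne
    have hreg : a ∈ C :=
      coe_mem_pRegular.mp (pRegular_of_isConj (hcl b hbne) (coe_mem_pRegular.mpr hb))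
    have h1 := split_eval hτ hρ hne ha c hF
    have h2 : tw τ F a = 0 := by simpa [hF0 a hreg] using hFt a
    rw [hF0 a hreg, h2, sub_zero, zero_eq_mul] at h1
    rcases h1 with h | h
    · have h3 : c ρ - c (tw τ ρ) = 0 := by exact_mod_cast h
      have := hcc ρ hρ
      omega
    · rw [h] at hsq
      have : m = 0 := by exact_mod_cast (show (m : ℂ) = 0 by rw [← hsq]; norm_num)
      rw [this] at hm
      exact absurd hm (by decide)
  · rw [hBij.image_eq]
    apply le_antisymm
    · exact Submodule.span_mono (Set.image_mono fun _ h => h.1)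
    · rw [Submodule.span_le]
      rintro _ ⟨ρ, hρ, rfl⟩
      have := trunc_mem_span_below hK hs hρ
      rw [Submodule.map_span] at this
      exact this

end Assembly

/-- A group all of whose elements are regular has all its irreducible characters as a basic set. -/
theorem irr_basic_univ {G : Type} [Group G] [Fintype G] (C : Set G) (hC : ∀ g, g ∈ C) :
    IsBasicSetOf C (IrrChar G) (IrrChar G) := by
  refine ⟨subset_rfl, ?_, rfl⟩
  have hid : ∀ φ : G → ℂ, truncCF C φ = φ := fun φ => funext fun g => if_pos (hC g)
  simp only [hid]
  rw [linearIndependent_iff']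
  intro s g hg i hi
  have h1 : pair (∑ χ ∈ s, g χ • (χ : G → ℂ)) i = g i := by
    rw [pair_sum_left, Finset.sum_eq_single i]
    · rw [pair_zsmul_left, pair_irr i.2 i.2, if_pos rfl, mul_one]
    · intro j _ hne
      rw [pair_zsmul_left, pair_irr j.2 i.2, if_neg fun h => hne (Subtype.ext h), mul_zero]
    · exact fun h => absurd hi h
  rw [hg, pair_zero_left] at h1
  exact_mod_cast h1.symm

/-- For any odd prime `p` and any `n ≥ 1`, the alternating group `A_n` has a `p`-basic set. -/
theorem alternatingGroup_exists_pBasicSet (p n : ℕ) (hp : p.Prime) (hodd : Odd p)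
    (hn : 0 < n) :
    ∃ B : Set (↥(alternatingGroup (Fin n)) → ℂ),
      IsBasicSetOf (pRegular p ↥(alternatingGroup (Fin n)))
        (IrrChar ↥(alternatingGroup (Fin n))) B := by
  rcases subsingleton_or_nontrivial (Fin n) with h | h
  · refine ⟨_, irr_basic_univ _ fun g => ?_⟩
    have : g = 1 := Subsingleton.elim _ _
    simp [pRegular, this]
  · obtain ⟨K, hK, hs⟩ := sym_basic hp hodd hn
    exact exists_basic_of_sym hK hs
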